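/- There exists an absolute constant C > 0 such that the following holds. Let q be a prime power, n ≥ 1, and let f ∈ 𝔽_q[x_1,…,x_n] be a non-constant polynomial of total degree d that is indecomposable over 𝔽_q. Then the output distribution of f on a uniform input is C·d^2/√q-close to uniform on 𝔽_q: (1/2)·Σ_{a∈𝔽_q} | Pr_{x ← uniform on 𝔽_q^n}[f(x)=a] − 1/q | ≤ C·d^2/√q. -/

import Mathlib

open MvPolynomial

/-- A non-constant polynomial `f ∈ F[x₁,…,xₙ]` is *decomposable* over `F` if
`f = g(h)` for some univariate `g ∈ F[z]` with `deg g ≥ 2` and some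
`h ∈ F[x₁,…,xₙ]`. -/
def MvPolynomial.Decomposable {F : Type*} [CommSemiring F] {n : ℕ}
    (f : MvPolynomial (Fin n) F) : Prop :=
  ∃ (g : Polynomial F) (h : MvPolynomial (Fin n) F),
    2 ≤ g.natDegree ∧ f = Polynomial.aeval h g

open MvPolynomial
namespace IE

structure Filt (F : Type*) {B : Type*} [CommSemiring F] [CommSemiring B] [Algebra F B]
    (P : ℕ → B → Prop) : Prop where
  alg : ∀ c : F, P 0 (algebraMap F B c)
  add : ∀ {n a b}, P n a → P n b → P n (a + b)
  mul : ∀ {n m a b}, P n a → P m b → P (n + m) (a * b)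
  mono : ∀ {n m a}, n ≤ m → P n a → P m a

namespace Filt
variable {F B : Type*} [CommSemiring F] [CommSemiring B] [Algebra F B] {P : ℕ → B → Prop}

lemma zero (h : Filt F P) (n : ℕ) : P n 0 := by
  have := h.alg 0
  rw [map_zero] at this
  exact h.mono (Nat.zero_le _) this

lemma one (h : Filt F P) : P 0 1 := by
  have := h.alg 1
  rwa [map_one] at this

lemma sum (h : Filt F P) {α : Type*} (s : Finset α) (g : α → B) {n : ℕ}
    (hg : ∀ i ∈ s, P n (g i)) : P n (∑ i ∈ s, g i) := by
  classical
  induction s using Finset.induction_on with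
  | empty => simpa using h.zero n
  | insert a s ha ih =>
    rw [Finset.sum_insert ha]
    exact h.add (hg _ (by simp)) (ih fun i hi => hg i (by simp [hi]))

lemma prod (h : Filt F P) {α : Type*} (s : Finset α) (g : α → B) (n : α → ℕ)
    (hg : ∀ i ∈ s, P (n i) (g i)) : P (∑ i ∈ s, n i) (∏ i ∈ s, g i) := by
  classical
  induction s using Finset.induction_on with
  | empty => simpa using h.one
  | insert a s ha ih =>
    rw [Finset.prod_insert ha, Finset.sum_insert ha]
    exact h.mul (hg _ (by simp)) (ih fun i hi => hg i (by simp [hi]))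

lemma pow (h : Filt F P) {a : B} {n : ℕ} (ha : P n a) (k : ℕ) : P (k * n) (a ^ k) := by
  induction k with
  | zero => simpa using h.one
  | succ k ih => rw [pow_succ, Nat.succ_mul]; exact h.mul ih ha

lemma aeval (h : Filt F P) {τ : Type*} (g : τ → B) (hg : ∀ i, P 1 (g i))
    (f : MvPolynomial τ F) : P f.totalDegree (MvPolynomial.aeval g f) := by
  rw [MvPolynomial.aeval_def, MvPolynomial.eval₂_eq]
  refine h.sum _ _ fun m hm => ?_
  refine h.mono (m := f.totalDegree) (MvPolynomial.le_totalDegree hm) ?_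
  rw [← zero_add (m.sum _)]
  refine h.mul (h.alg _) ?_
  refine h.prod _ _ _ fun i _ => ?_
  have := h.pow (hg i) (m i)
  rwa [mul_one] at this

lemma smul (h : Filt F P) {n : ℕ} {a : B} (c : F) (ha : P n a) : P n (c • a) := by
  rw [Algebra.smul_def, ← zero_add n]
  exact h.mul (h.alg c) ha

lemma neg {F B : Type*} [CommRing F] [CommRing B] [Algebra F B] {P : ℕ → B → Prop}
    (h : Filt F P) {n : ℕ} {a : B} (ha : P n a) : P n (-a) := by
  have := h.smul (-1) ha
  simpa using this

lemma sub {F B : Type*} [CommRing F] [CommRing B] [Algebra F B] {P : ℕ → B → Prop}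
    (h : Filt F P) {n : ℕ} {a b : B} (ha : P n a) (hb : P n b) : P n (a - b) := by
  rw [sub_eq_add_neg]; exact h.add ha (h.neg hb)

end Filt

lemma filt_totalDegree (F ι : Type*) [CommSemiring F] :
    Filt F (fun n (a : MvPolynomial ι F) => a.totalDegree ≤ n) where
  alg c := by simp [MvPolynomial.algebraMap_eq]
  add ha hb := (totalDegree_add _ _).trans (max_le ha hb)
  mul ha hb := (totalDegree_mul _ _).trans (add_le_add ha hb)
  mono h ha := ha.trans h

lemma totalDegree_aeval_le {F ι τ : Type*} [CommSemiring F] (g : τ → MvPolynomial ι F) 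
    (hg : ∀ i, (g i).totalDegree ≤ 1) (f : MvPolynomial τ F) :
    (aeval g f).totalDegree ≤ f.totalDegree :=
  (filt_totalDegree F ι).aeval g hg f

lemma totalDegree_aeval_le_mul {F ι τ : Type*} [CommSemiring F] (g : τ → MvPolynomial ι F) (γ : ℕ)
    (hg : ∀ i, (g i).totalDegree ≤ γ) (f : MvPolynomial τ F) :
    (aeval g f).totalDegree ≤ γ * f.totalDegree :=
  Filt.aeval (P := fun n (a : MvPolynomial ι F) => a.totalDegree ≤ γ * n) (F := F)
    ⟨fun c => by simp [MvPolynomial.algebraMap_eq], fun ha hb => (totalDegree_add _ _).trans (max_le ha hb),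
     fun ha hb => by rw [mul_add]; exact (totalDegree_mul _ _).trans (add_le_add ha hb),
     fun h ha => ha.trans (Nat.mul_le_mul_left _ h)⟩ g (by simpa using hg) f

/-- fixed points of contractive maps on power series -/
lemma exists_fixpoint {A : Type*} [CommRing A] (e : PowerSeries A) (H : Polynomial (PowerSeries A)) :
    ∃ w : PowerSeries A, w = -(e + PowerSeries.X * H.eval w) ∧
      ∀ D : ℕ → A → Prop, (∀ k, D k 0) →
        (∀ u : PowerSeries A, (∀ k, D k (PowerSeries.coeff k u)) →
          ∀ k, D k (PowerSeries.coeff k (-(e + PowerSeries.X * H.eval u)))) →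
        ∀ k, D k (PowerSeries.coeff k w) := by
  set G : PowerSeries A → PowerSeries A := fun u => -(e + PowerSeries.X * H.eval u) with hG
  have hcontr : ∀ n a b, PowerSeries.X ^ n ∣ a - b → PowerSeries.X ^ (n+1) ∣ G a - G b := by
    intro n a b h
    have h1 : a - b ∣ H.eval a - H.eval b := Polynomial.sub_dvd_eval_sub _ _ _
    obtain ⟨c, hc⟩ := h.trans h1
    refine ⟨-c, ?_⟩
    simp only [hG]
    linear_combination (-PowerSeries.X) * hc
  set W : ℕ → PowerSeries A := fun n => G^[n] 0 with hW
  have hWs : ∀ n, W (n+1) = G (W n) := fun n => Function.iterate_succ_apply' G n 0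
  have h1 : ∀ n, PowerSeries.X ^ n ∣ W (n+1) - W n := by
    intro n
    induction n with
    | zero => simp
    | succ n ih => rw [hWs (n+1), hWs n]; rw [hWs n] at ih; exact hcontr _ _ _ ih
  have h2 : ∀ n j, PowerSeries.X ^ n ∣ W (n+j) - W n := by
    intro n j
    induction j with
    | zero => simp
    | succ j ih =>
      have := (pow_dvd_pow PowerSeries.X (Nat.le_add_right n j)).trans (h1 (n+j))
      have := dvd_add this ih
      simpa [add_assoc] using this
  set w : PowerSeries A := PowerSeries.mk fun k => PowerSeries.coeff k (W (k+1)) with hw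
  have h3 : ∀ n, PowerSeries.X ^ n ∣ w - W n := by
    intro n
    rw [PowerSeries.X_pow_dvd_iff]
    intro k hk
    obtain ⟨j, rfl⟩ := Nat.exists_eq_add_of_lt hk
    have := (PowerSeries.X_pow_dvd_iff.1 (h2 (k+1) j)) k (by omega)
    rw [map_sub, sub_eq_zero] at this ⊢
    rw [hw, PowerSeries.coeff_mk, show k + j + 1 = k + 1 + j by ring, this]
  refine ⟨w, ?_, ?_⟩
  · have h4 : ∀ n, PowerSeries.X ^ n ∣ w - G w := by
      intro n
      have ha := (pow_dvd_pow PowerSeries.X (Nat.le_succ n)).trans (h3 (n+1))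
      have hb := (pow_dvd_pow PowerSeries.X (Nat.le_succ n)).trans (hcontr _ _ _ (h3 n))
      rw [← hWs n] at hb
      have := dvd_sub ha hb
      simpa using this
    rw [← sub_eq_zero]
    ext k
    exact (PowerSeries.X_pow_dvd_iff.1 (h4 (k+1))) k (by omega)
  · intro D h0 hD
    have : ∀ n, ∀ k, D k (PowerSeries.coeff k (W n)) := by
      intro n
      induction n with
      | zero => intro k; simpa [hW] using h0 k
      | succ n ih => rw [hWs]; exact hD _ ih
    intro k
    rw [hw, PowerSeries.coeff_mk]
    exact this _ _

/-- degree control on power series -/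
def FD {F ι : Type*} [CommSemiring F] (c b : ℕ) (w : PowerSeries (MvPolynomial ι F)) : Prop :=
  ∀ k, (PowerSeries.coeff k w).totalDegree ≤ c * k + b

namespace FD
variable {F ι : Type*} [CommRing F] {c b b' : ℕ} {u v : PowerSeries (MvPolynomial ι F)}

lemma mul (hu : FD c b u) (hv : FD c b' v) : FD c (b + b') (u * v) := by
  intro k
  rw [PowerSeries.coeff_mul]
  refine totalDegree_finsetSum_le fun x hx => ?_
  rw [Finset.HasAntidiagonal.mem_antidiagonal] at hx
  refine (totalDegree_mul _ _).trans ((add_le_add (hu _) (hv _)).trans ?_)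
  rw [← hx]; apply le_of_eq; ring

lemma C {a : MvPolynomial ι F} (h : a.totalDegree ≤ b) : FD c b (PowerSeries.C a) := by
  intro k
  rw [PowerSeries.coeff_C]
  split_ifs
  · omega
  · simp

lemma mono (h : b ≤ b') (hu : FD c b u) : FD c b' u := fun k => (hu k).trans (by omega)

lemma add (hu : FD c b u) (hv : FD c b v) : FD c b (u + v) := fun k => by
  rw [map_add]; exact (totalDegree_add _ _).trans (max_le (hu k) (hv k))

lemma X_mul (hu : FD c (b + c) u) : FD c b (PowerSeries.X * u) := by
  intro k
  cases k with
  | zero => simp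
  | succ k => rw [PowerSeries.coeff_succ_X_mul]; exact (hu k).trans (by rw [mul_add]; omega)

end FD

lemma filt_FD {F ι : Type*} [CommRing F] (c s : ℕ) :
    Filt F (fun n (u : PowerSeries (MvPolynomial ι F)) => FD c (s * n) u) where
  alg r := by
    rw [PowerSeries.algebraMap_apply]
    exact FD.C (by simp [MvPolynomial.algebraMap_eq])
  add := FD.add
  mul h1 h2 := by rw [mul_add]; exact h1.mul h2
  mono h h1 := FD.mono (Nat.mul_le_mul_left _ h) h1

lemma FD.neg {F ι : Type*} [CommRing F] {c b : ℕ} {u : PowerSeries (MvPolynomial ι F)}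
    (h : FD c b u) : FD c b (-u) := fun k => by
  rw [map_neg, totalDegree_neg]; exact h k

lemma coeff_eval₂_C_mul_X {A : Type*} [CommRing A] (a : A) (p : Polynomial A) (k : ℕ) :
    PowerSeries.coeff k (p.eval₂ (PowerSeries.C) (PowerSeries.C a * PowerSeries.X)) =
      p.coeff k * a ^ k := by
  rw [Polynomial.eval₂_eq_sum_range, map_sum]
  simp_rw [mul_pow, ← map_pow, ← mul_assoc, ← map_mul, PowerSeries.coeff_C_mul,
    PowerSeries.coeff_X_pow]
  simp only [mul_ite, mul_one, mul_zero]
  rw [Finset.sum_ite_eq]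
  split_ifs with h
  · rfl
  · rw [Polynomial.coeff_eq_zero_of_natDegree_lt, zero_mul]
    simpa using h

noncomputable def bsub {σ A : Type*} [CommRing A] (x0 : Option σ → A) (lam : σ → A) (δ : A) (v : PowerSeries A) :
    Option σ → PowerSeries A
  | none => PowerSeries.C (x0 none) + v
  | some i => PowerSeries.C (x0 (some i)) + PowerSeries.C (lam i * δ ^ 2) * PowerSeries.X

end IE

open MvPolynomial
namespace IE

/-- weighted filtration on `A[s][y]` -/
lemma filt_W {F ι : Type*} [CommRing F] (α γ : ℕ) :
    Filt F (fun n (p : Polynomial (Polynomial (MvPolynomial ι F))) =>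
      ∀ i j, ((p.coeff j).coeff i).totalDegree ≤ α * i + γ * n) where
  alg r i j := by
    rw [Polynomial.algebraMap_apply, Polynomial.algebraMap_apply, MvPolynomial.algebraMap_eq,
      Polynomial.coeff_C]
    split_ifs
    · rw [Polynomial.coeff_C]; split_ifs <;> simp
    · simp
  add h1 h2 i j := by
    rw [Polynomial.coeff_add, Polynomial.coeff_add]
    exact (totalDegree_add _ _).trans (max_le (h1 i j) (h2 i j))
  mul h1 h2 i j := by
    rw [Polynomial.coeff_mul, Polynomial.finsetSum_coeff]
    refine totalDegree_finsetSum_le fun x _ => ?_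
    rw [Polynomial.coeff_mul]
    refine totalDegree_finsetSum_le fun y hy => ?_
    rw [Finset.HasAntidiagonal.mem_antidiagonal] at hy
    refine (totalDegree_mul _ _).trans ((add_le_add (h1 _ _) (h2 _ _)).trans ?_)
    rw [← hy]; apply le_of_eq; ring
  mono h h1 i j := (h1 i j).trans (Nat.add_le_add_left (Nat.mul_le_mul_left _ h) _)

lemma totalDegree_pderiv_le {F τ : Type*} [CommRing F] (i : τ) (f : MvPolynomial τ F) :
    (pderiv i f).totalDegree ≤ f.totalDegree - 1 := by
  classical
  conv_lhs => rw [f.as_sum, map_sum]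
  refine totalDegree_finsetSum_le fun m hm => ?_
  rw [pderiv_monomial]
  by_cases h : m i = 0
  · simp [h]
  refine (totalDegree_monomial_le _ _).trans ?_
  have h1 := MvPolynomial.le_totalDegree hm
  have h2 : m = (m - Finsupp.single i 1) + Finsupp.single i 1 := by
    rw [tsub_add_cancel_of_le]
    simpa using Nat.one_le_iff_ne_zero.2 h
  rw [h2, Finsupp.sum_add_index' (by simp) (by simp)] at h1
  simp at h1
  change ((m - Finsupp.single i 1).sum fun x e => e) ≤ _
  omega

/-- restriction to a line direction (plane), shifted in `y`. -/
noncomputable def Lam0 {F ι σ : Type*} [CommRing F] (x0 : Option σ → MvPolynomial ι F)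
    (lam : σ → MvPolynomial ι F) :
    MvPolynomial (Option σ) F →ₐ[F] Polynomial (Polynomial (MvPolynomial ι F)) :=
  aeval fun o => match o with
    | none => Polynomial.C (Polynomial.C (x0 none)) + Polynomial.X
    | some i => Polynomial.C (Polynomial.C (x0 (some i)) + Polynomial.C (lam i) * Polynomial.X)

lemma pderiv_Lam0 {F ι σ : Type*} [CommRing F] (x0 : Option σ → MvPolynomial ι F)
    (lam : σ → MvPolynomial ι F) (f : MvPolynomial (Option σ) F) :
    Polynomial.derivative (Lam0 x0 lam f) = Lam0 x0 lam (pderiv none f) := by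
  induction f using MvPolynomial.induction_on with
  | C a =>
    rw [pderiv_C, map_zero, ← MvPolynomial.algebraMap_eq, AlgHom.commutes,
      Polynomial.algebraMap_apply, Polynomial.derivative_C]
  | add p q hp hq => simp only [map_add, hp, hq]
  | mul_X p i hp =>
    rw [map_mul, Polynomial.derivative_mul, hp, (pderiv none).leibniz, map_add,
      smul_eq_mul, smul_eq_mul, map_mul, map_mul]
    cases i with
    | none => simp [Lam0]; ring
    | some i => 
      rw [pderiv_X_of_ne (by simp)]
      simp [Lam0]; ring

lemma Lam0_coeff_zero {F ι σ : Type*} [CommRing F] (x0 : Option σ → MvPolynomial ι F)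
    (lam : σ → MvPolynomial ι F) (f : MvPolynomial (Option σ) F) :
    ((Lam0 x0 lam f).coeff 0).coeff 0 = aeval x0 f := by
  have : ((Polynomial.aeval (R := MvPolynomial ι F) (0 : MvPolynomial ι F)).restrictScalars F).comp
      (((Polynomial.aeval (R := Polynomial (MvPolynomial ι F))
        (0 : Polynomial (MvPolynomial ι F))).restrictScalars F).comp (Lam0 x0 lam)) = aeval x0 := by
    apply MvPolynomial.algHom_ext
    intro o
    cases o <;> simp [Lam0]
  have h := DFunLike.congr_fun this f
  simp only [AlgHom.comp_apply, AlgHom.restrictScalars_apply] at h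
  rw [Polynomial.coeff_zero_eq_eval_zero, Polynomial.coeff_zero_eq_eval_zero]
  exact h

theorem branch {F ι σ : Type*} [Field F] (f : MvPolynomial (Option σ) F)
    (x0 : Option σ → MvPolynomial ι F) (lam : σ → MvPolynomial ι F) (α γ d : ℕ)
    (hx : ∀ o, (x0 o).totalDegree ≤ γ) (hl : ∀ i, (lam i).totalDegree ≤ α + γ)
    (hf : f.totalDegree ≤ d) :
    ∃ v : PowerSeries (MvPolynomial ι F), PowerSeries.constantCoeff v = 0 ∧
      (∀ k, (PowerSeries.coeff k v).totalDegree ≤ (α + 2 * (γ * d)) * k) ∧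
      aeval (bsub x0 lam (aeval x0 (pderiv none f)) v) f = PowerSeries.C (aeval x0 f) := by
  set δ : MvPolynomial ι F := aeval x0 (pderiv none f) with hδ
  set β := γ * d with hβ
  set P : Polynomial (Polynomial (MvPolynomial ι F)) := Lam0 x0 lam f with hP
  have hW : ∀ i j, ((P.coeff j).coeff i).totalDegree ≤ α * i + β := by
    have h := (filt_W (F := F) (ι := ι) α γ).aeval (fun o : Option σ => match o with
      | none => Polynomial.C (Polynomial.C (x0 none)) + Polynomial.X
      | some i => Polynomial.C (Polynomial.C (x0 (some i)) + Polynomial.C (lam i) * Polynomial.X))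
      ?_ f
    · intro i j
      exact (h i j).trans (Nat.add_le_add_left (Nat.mul_le_mul_left _ hf) _)
    · rintro (_ | o) i j
      · simp only [Polynomial.coeff_add, Polynomial.coeff_C, Polynomial.coeff_X]
        have := hx none
        match j with
        | 0 =>
          simp only [if_true, Polynomial.coeff_C, Nat.one_ne_zero, if_false, Polynomial.coeff_zero,
            add_zero]
          split_ifs
          · omega
          · simp
        | 1 =>
          simp only [Nat.one_ne_zero, if_false, if_true, Polynomial.coeff_zero, zero_add,
            Polynomial.coeff_one]
          split_ifs <;> simp
        | (j+2) => simp
      · simp only [Polynomial.coeff_C]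
        split_ifs
        · match i with
          | 0 => simpa using hx _
          | 1 => simpa using hl _
          | (i+2) => simp [Polynomial.coeff_C]
        · simp
  have hδdeg : δ.totalDegree ≤ β := by
    refine (totalDegree_aeval_le_mul x0 γ hx _).trans (Nat.mul_le_mul_left _ ?_)
    exact (totalDegree_pderiv_le _ _).trans (by omega)
  have hP00 : (P.coeff 0).coeff 0 = aeval x0 f := Lam0_coeff_zero _ _ _
  have hP10 : (P.coeff 1).coeff 0 = δ := by
    have := Lam0_coeff_zero x0 lam (pderiv none f)
    rw [← pderiv_Lam0, Polynomial.coeff_derivative] at this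
    simpa only [zero_add, Nat.cast_zero, mul_one, ← hδ, ← hP] using this
  let ev : Polynomial (MvPolynomial ι F) →+* PowerSeries (MvPolynomial ι F) :=
    Polynomial.eval₂RingHom PowerSeries.C (PowerSeries.C (δ ^ 2) * PowerSeries.X)
  have hevX : ev Polynomial.X = PowerSeries.C (δ ^ 2) * PowerSeries.X := by simp [ev]
  have hevC : ∀ a, ev (Polynomial.C a) = PowerSeries.C a := by intro a; simp [ev]
  have hevc : ∀ p k, PowerSeries.coeff k (ev p) = p.coeff k * (δ ^ 2) ^ k :=
    fun p k => coeff_eval₂_C_mul_X _ _ _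
  set c := α + 2 * β with hc
  set b := α + β with hb
  have hd2 : ∀ k, ((δ ^ 2) ^ k).totalDegree ≤ 2 * β * k := by
    intro k
    rw [← pow_mul]
    refine (totalDegree_pow _ _).trans ?_
    calc 2 * k * δ.totalDegree ≤ 2 * k * β := Nat.mul_le_mul_left _ hδdeg
      _ = _ := by ring
  have hev1 : ∀ j, FD c β (ev (P.coeff j)) := by
    intro j k
    rw [hevc]
    refine (totalDegree_mul _ _).trans ((add_le_add (hW _ _) (hd2 k)).trans ?_)
    rw [hc]; apply le_of_eq; ring
  have hev2 : ∀ j, FD c b (ev (P.coeff j).divX) := by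
    intro j k
    rw [hevc, Polynomial.coeff_divX]
    refine (totalDegree_mul _ _).trans ((add_le_add (hW _ _) (hd2 k)).trans ?_)
    rw [hc, hb]; apply le_of_eq; ring
  set P2 := P.divX.divX with hP2
  have hPeq : P = Polynomial.C (P.coeff 0) + Polynomial.C (P.coeff 1) * Polynomial.X
      + P2 * Polynomial.X ^ 2 := by
    have h1 := Polynomial.divX_mul_X_add P
    have h2 := Polynomial.divX_mul_X_add P.divX
    rw [Polynomial.coeff_divX] at h2
    rw [← h2] at h1
    conv_lhs => rw [← h1]
    ring
  let H : Polynomial (PowerSeries (MvPolynomial ι F)) :=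
    Polynomial.C (PowerSeries.C δ * ev (P.coeff 1).divX) * Polynomial.X +
    Polynomial.X ^ 2 * ((P2.map ev).comp (Polynomial.C (PowerSeries.C δ * PowerSeries.X) * Polynomial.X))
  have hHe : ∀ w, H.eval w = PowerSeries.C δ * ev (P.coeff 1).divX * w +
      w ^ 2 * P2.eval₂ ev (PowerSeries.X * (PowerSeries.C δ * w)) := by
    intro w
    simp only [H, Polynomial.eval_add, Polynomial.eval_mul, Polynomial.eval_C, Polynomial.eval_X,
      Polynomial.eval_pow, Polynomial.eval_comp, Polynomial.eval_map]
    rw [show PowerSeries.C δ * PowerSeries.X * w = PowerSeries.X * (PowerSeries.C δ * w) by ring]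
  obtain ⟨w, hw, hwD⟩ := exists_fixpoint (ev (P.coeff 0).divX) H
  have hcd : ∀ u, FD c b u → FD c 0 (PowerSeries.X * (PowerSeries.C δ * u)) := by
    intro u hu
    apply FD.X_mul
    have := (FD.C (c := c) hδdeg).mul hu
    refine this.mono ?_
    omega
  have hwFD : FD c b w := by
    refine hwD (fun k a => a.totalDegree ≤ c * k + b) (by simp) ?_
    intro u hu
    change FD c b u at hu
    change FD c b _
    apply FD.neg
    apply FD.add (hev2 0)
    rw [hHe, mul_add]
    apply FD.add
    · rw [show PowerSeries.X * (PowerSeries.C δ * ev (P.coeff 1).divX * u) =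
        ev (P.coeff 1).divX * (PowerSeries.X * (PowerSeries.C δ * u)) by ring]
      exact (hev2 1).mul (hcd u hu)
    · apply FD.X_mul
      have h2 : FD c β (P2.eval₂ ev (PowerSeries.X * (PowerSeries.C δ * u))) := by
        rw [Polynomial.eval₂_eq_sum_range]
        have hs : ∀ k, FD c β (ev (P2.coeff k) * (PowerSeries.X * (PowerSeries.C δ * u)) ^ k) := by
          intro k
          rw [hP2, Polynomial.coeff_divX, Polynomial.coeff_divX]
          have := (filt_FD (F := F) (ι := ι) c 0).pow (n := 0) (by simpa using hcd u hu) k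
          simp only [zero_mul] at this
          exact (hev1 _).mul this
        intro j
        rw [map_sum]
        refine totalDegree_finsetSum_le fun k _ => hs k j
      have h3 := (hu.mul hu).mul h2
      rw [← pow_two] at h3
      refine h3.mono ?_
      omega
  refine ⟨PowerSeries.X * (PowerSeries.C δ * w), by simp, fun k => by simpa using hcd w hwFD k, ?_⟩
  set v := PowerSeries.X * (PowerSeries.C δ * w) with hv
  have hcomp : (aeval (bsub x0 lam δ v) f : PowerSeries (MvPolynomial ι F)) = P.eval₂ ev v := by
    have : ((aeval (bsub x0 lam δ v) : MvPolynomial (Option σ) F →ₐ[F] PowerSeries (MvPolynomial ι F)) :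
        MvPolynomial (Option σ) F →+* PowerSeries (MvPolynomial ι F)) =
        (Polynomial.eval₂RingHom ev v).comp (Lam0 x0 lam : MvPolynomial (Option σ) F →+* _) := by
      apply MvPolynomial.ringHom_ext
      · intro r
        simp only [RingHom.comp_apply, RingHom.coe_coe]
        rw [← MvPolynomial.algebraMap_eq, AlgHom.commutes, AlgHom.commutes]
        rw [Polynomial.algebraMap_apply, Polynomial.algebraMap_apply, Polynomial.coe_eval₂RingHom,
          Polynomial.eval₂_C, hevC, PowerSeries.algebraMap_apply]
      · rintro (_ | i)
        · simp [Lam0, bsub, hevC]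
        · simp [Lam0, bsub, hevC, hevX]
          ring
    exact DFunLike.congr_fun this f
  rw [hcomp, hPeq]
  simp only [Polynomial.eval₂_add, Polynomial.eval₂_mul, Polynomial.eval₂_C, Polynomial.eval₂_X,
    Polynomial.eval₂_pow]
  have e0 : ev (P.coeff 0) = PowerSeries.C (aeval x0 f) +
      PowerSeries.C (δ ^ 2) * PowerSeries.X * ev (P.coeff 0).divX := by
    conv_lhs => rw [← Polynomial.divX_mul_X_add (P.coeff 0), map_add, map_mul, hevX, hevC, hP00]
    ring
  have e1 : ev (P.coeff 1) = PowerSeries.C δ +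
      PowerSeries.C (δ ^ 2) * PowerSeries.X * ev (P.coeff 1).divX := by
    conv_lhs => rw [← Polynomial.divX_mul_X_add (P.coeff 1), map_add, map_mul, hevX, hevC, hP10]
    ring
  rw [hHe, ← hv] at hw
  simp only [map_pow] at e0 e1
  rw [e0, e1]
  generalize P2.eval₂ ev v = T at *
  rw [hv]
  linear_combination (PowerSeries.C δ ^ 2 * PowerSeries.X) * hw
end IE

open MvPolynomial
namespace IE

lemma elim {D : Type*} [CommRing D] [IsDomain D] [IsIntegrallyClosed D] {u g : Polynomial D}
    (hu : u.Monic) (hi : Irreducible u) (hg : ¬ u ∣ g) :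
    ∃ (A' B' : Polynomial D) (r : D), r ≠ 0 ∧ A' * u + B' * g = Polynomial.C r := by
  let K := FractionRing D
  let φ := algebraMap D K
  have hinj : Function.Injective φ := IsFractionRing.injective D K
  have huK : Irreducible (u.map φ) :=
    (Polynomial.Monic.irreducible_iff_irreducible_map_fraction_map hu).1 hi
  have hgK : ¬ u.map φ ∣ g.map φ := by
    intro h
    apply hg
    rw [← Polynomial.modByMonic_eq_zero_iff_dvd hu]
    rw [← Polynomial.modByMonic_eq_zero_iff_dvd (hu.map φ), ← Polynomial.map_modByMonic _ hu] at h
    exact (Polynomial.map_eq_zero_iff hinj).1 h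
  obtain ⟨a, b, hab⟩ : IsCoprime (u.map φ) (g.map φ) := (huK.coprime_iff_not_dvd).2 hgK
  obtain ⟨r1, hr1, h1⟩ := IsLocalization.integerNormalization_spec (nonZeroDivisors D) a
  obtain ⟨r2, hr2, h2⟩ := IsLocalization.integerNormalization_spec (nonZeroDivisors D) b
  set a' := IsLocalization.integerNormalization (nonZeroDivisors D) a
  set b' := IsLocalization.integerNormalization (nonZeroDivisors D) b
  refine ⟨Polynomial.C r2 * a', Polynomial.C r1 * b', r1 * r2,
    mul_ne_zero (nonZeroDivisors.ne_zero hr1) (nonZeroDivisors.ne_zero hr2), ?_⟩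
  apply Polynomial.map_injective φ hinj
  have h1' : a'.map φ = Polynomial.C (φ r1) * a := by
    rw [h1]; rw [← Polynomial.smul_eq_C_mul]; ext; simp [Algebra.smul_def, φ]
  have h2' : b'.map φ = Polynomial.C (φ r2) * b := by
    rw [h2]; rw [← Polynomial.smul_eq_C_mul]; ext; simp [Algebra.smul_def, φ]
  simp only [Polynomial.map_add, Polynomial.map_mul, Polynomial.map_C, h1', h2', map_mul]
  linear_combination (Polynomial.C (φ r1) * Polynomial.C (φ r2)) * hab

lemma dvd_of_map_eq_zero {D T : Type*} [CommRing D] [IsDomain D] [IsIntegrallyClosed D] [CommRing T]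
    {u g : Polynomial D}
    (hu : u.Monic) (hi : Irreducible u) (Φ : Polynomial D →+* T)
    (hinj : ∀ r, Φ (Polynomial.C r) = 0 → r = 0) (h0 : Φ u = 0) (hg : Φ g = 0) : u ∣ g := by
  by_contra hn
  obtain ⟨A', B', r, hr, h⟩ := elim hu hi hn
  apply hr
  apply hinj
  rw [← h, map_add, map_mul, map_mul, h0, hg]
  simp

/-- total degree in the plane -/
def PD {k : Type*} [Semiring k] (n : ℕ) (p : Polynomial (Polynomial k)) : Prop :=
  ∀ i j, (p.coeff j).coeff i ≠ 0 → i + j ≤ n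

lemma filt_PD (k : Type*) [CommRing k] : Filt k (PD (k := k)) where
  alg c i j h := by
    rw [Polynomial.algebraMap_apply, Polynomial.algebraMap_apply, Polynomial.coeff_C] at h
    split_ifs at h with hj
    · rw [Polynomial.coeff_C] at h
      split_ifs at h with hi
      · omega
      · simp at h
    · simp at h
  add h1 h2 i j h := by
    rw [Polynomial.coeff_add, Polynomial.coeff_add] at h
    by_contra hn
    apply h
    rw [not_imp_comm.1 (h1 i j) hn, not_imp_comm.1 (h2 i j) hn, add_zero]
  mul {n m a b} h1 h2 i j h := by
    rw [Polynomial.coeff_mul, Polynomial.finsetSum_coeff] at h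
    obtain ⟨x, hx, h⟩ := Finset.exists_ne_zero_of_sum_ne_zero h
    rw [Polynomial.coeff_mul] at h
    obtain ⟨y, hy, h⟩ := Finset.exists_ne_zero_of_sum_ne_zero h
    rw [Finset.HasAntidiagonal.mem_antidiagonal] at hx hy
    have := h1 _ _ (left_ne_zero_of_mul h)
    have := h2 _ _ (right_ne_zero_of_mul h)
    omega
  mono hnm h i j hh := (h i j hh).trans hnm

lemma PD_X {k : Type*} [CommRing k] : PD (k := k) 1 Polynomial.X := by
  intro i j h
  rw [Polynomial.coeff_X] at h
  split_ifs at h with hj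
  · rw [Polynomial.coeff_one] at h; split_ifs at h with hi
    · omega
    · simp at h
  · simp at h

lemma PD_C {k : Type*} [CommRing k] (p : Polynomial k) (n : ℕ) (hp : p.natDegree ≤ n) :
    PD (k := k) n (Polynomial.C p) := by
  intro i j h
  rw [Polynomial.coeff_C] at h
  split_ifs at h with hj
  · have := Polynomial.le_natDegree_of_ne_zero h; omega
  · simp at h

lemma PD_CC {k : Type*} [CommRing k] (a : k) :
    PD (k := k) 0 (Polynomial.C (Polynomial.C a)) := PD_C _ _ (by simp)

lemma PD_CX {k : Type*} [CommRing k] :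
    PD (k := k) 1 (Polynomial.C Polynomial.X) := PD_C _ _ Polynomial.natDegree_X_le

lemma exists_PD {k : Type*} [CommRing k] (p : Polynomial (Polynomial k)) : ∃ n, PD n p := by
  refine ⟨(p.support.sup fun j => (p.coeff j).natDegree) + p.natDegree, fun i j h => ?_⟩
  have hj : p.coeff j ≠ 0 := by rintro h0; simp [h0] at h
  have h1 := Polynomial.le_natDegree_of_ne_zero h
  have h2 := Polynomial.le_natDegree_of_ne_zero hj
  have h3 : (p.coeff j).natDegree ≤ p.support.sup fun j => (p.coeff j).natDegree :=
    Finset.le_sup (f := fun j => (p.coeff j).natDegree) (by simpa using hj)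
  omega

/-- homogenisation -/
noncomputable def theta (k : Type*) [CommRing k] :
    Polynomial (Polynomial k) →+* Polynomial (Polynomial k) :=
  Polynomial.eval₂RingHom
    (Polynomial.mapRingHom Polynomial.C)
    (Polynomial.C Polynomial.X * Polynomial.X)

lemma coeff_theta {k : Type*} [CommRing k] (p : Polynomial (Polynomial k)) (n j : ℕ) :
    ((theta k p).coeff n).coeff j = if j ≤ n then (p.coeff j).coeff (n - j) else 0 := by
  rw [theta, Polynomial.coe_eval₂RingHom, Polynomial.eval₂_eq_sum_range, Polynomial.finsetSum_coeff,
    Polynomial.finsetSum_coeff]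
  simp_rw [mul_pow, ← mul_assoc, Polynomial.coeff_mul_X_pow', ← map_pow]
  simp_rw [apply_ite (fun q => Polynomial.coeff q j), Polynomial.coeff_mul_C,
    Polynomial.coe_mapRingHom, Polynomial.coeff_map, Polynomial.coeff_C_mul, Polynomial.coeff_X_pow,
    Polynomial.coeff_zero]
  rw [Finset.sum_eq_single j]
  · simp
  · intro b _ hb
    simp [hb.symm]
  · intro hj
    have : p.coeff j = 0 := Polynomial.coeff_eq_zero_of_natDegree_lt (by simpa using hj)
    simp [this]

lemma PD_iff_theta {k : Type*} [CommRing k] (n : ℕ) (p : Polynomial (Polynomial k)) :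
    PD n p ↔ (theta k p).natDegree ≤ n := by
  rw [Polynomial.natDegree_le_iff_coeff_eq_zero]
  constructor
  · intro h N hN
    ext j
    rw [coeff_theta]
    split_ifs with hj
    · by_contra hne
      have := h _ _ hne
      omega
    · rfl
  · intro h i j hne
    by_contra hlt
    have := congrArg (fun q => Polynomial.coeff q j) (h (i + j) (by omega))
    simp only [coeff_theta] at this
    simp at this
    exact hne this

lemma natDegree_le_theta {k : Type*} [CommRing k] [Nontrivial k] {u : Polynomial (Polynomial k)} (hu : u.Monic) :
    u.natDegree ≤ (theta k u).natDegree := by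
  apply Polynomial.le_natDegree_of_ne_zero
  intro h
  have := congrArg (fun q => Polynomial.coeff q u.natDegree) h
  simp [coeff_theta, hu] at this

lemma PD_factor {k : Type*} [CommRing k] [IsDomain k] {u v : Polynomial (Polynomial k)}
    (hu : u.Monic) (hv : v.Monic) (h : PD (u * v).natDegree (u * v)) : PD u.natDegree u := by
  rw [PD_iff_theta] at h ⊢
  have h1 := natDegree_le_theta hu
  have h2 := natDegree_le_theta hv
  rw [hu.natDegree_mul hv, map_mul, Polynomial.natDegree_mul] at h
  · omega
  · intro h0
    have := congrArg (fun q => (Polynomial.coeff q u.natDegree).coeff u.natDegree) h0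
    simp [coeff_theta, hu] at this
  · intro h0
    have := congrArg (fun q => (Polynomial.coeff q v.natDegree).coeff v.natDegree) h0
    simp [coeff_theta, hv] at this

lemma PD_modByMonic {k : Type*} [CommRing k] [Nontrivial k] {u : Polynomial (Polynomial k)} (hu : u.Monic)
    (hPu : PD u.natDegree u) {n : ℕ} {p : Polynomial (Polynomial k)} (hp : PD n p) :
    PD n (p %ₘ u) := by
  induction hN : p.natDegree using Nat.strong_induction_on generalizing p with
  | _ N ih =>
  by_cases hlt : p.degree < u.degree
  · rwa [(Polynomial.modByMonic_eq_self_iff hu).2 hlt]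
  · have hp0 : p ≠ 0 := by
      rintro rfl
      rw [Polynomial.degree_zero] at hlt
      exact hlt (bot_lt_iff_ne_bot.2 (by simpa using hu.ne_zero))
    have hle : u.natDegree ≤ p.natDegree := by
      rw [not_lt] at hlt
      exact Polynomial.natDegree_le_natDegree hlt
    set c : Polynomial (Polynomial k) :=
      Polynomial.C p.leadingCoeff * Polynomial.X ^ (p.natDegree - u.natDegree) with hc
    have hlc0 : p.leadingCoeff ≠ 0 := by simpa using hp0
    have hlc : p.leadingCoeff.natDegree + p.natDegree ≤ n :=
      hp _ _ (by simpa using hlc0)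
    have hPc : PD (n - u.natDegree) c := by
      have h1 := (filt_PD k).pow PD_X (p.natDegree - u.natDegree)
      have h2 := (filt_PD k).mul (PD_C p.leadingCoeff _ le_rfl) h1
      exact (filt_PD k).mono (by omega) h2
    have hPcu : PD n (c * u) := (filt_PD k).mono (by omega) ((filt_PD k).mul hPc hPu)
    have hmod : p %ₘ u = (p - c * u) %ₘ u := by
      rw [Polynomial.sub_modByMonic]
      rw [(Polynomial.modByMonic_eq_zero_iff_dvd hu).2 (Dvd.intro_left _ rfl), sub_zero]
    rw [hmod]
    have hPD : PD n (p - c * u) := (filt_PD k).sub hp hPcu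
    by_cases h0 : p - c * u = 0
    · rw [h0, Polynomial.zero_modByMonic]; exact (filt_PD k).zero n
    have hdeg : (p - c * u).degree < p.degree := by
      apply Polynomial.degree_sub_lt_left _ hp0
      · rw [Polynomial.leadingCoeff_mul_monic hu, hc, Polynomial.leadingCoeff_C_mul_X_pow]
      · rw [hu.degree_mul, hc, Polynomial.degree_C_mul_X_pow _ hlc0,
          Polynomial.degree_eq_natDegree hp0, Polynomial.degree_eq_natDegree hu.ne_zero]
        norm_cast
        omega
    exact ih _ (by rw [← hN]; exact Polynomial.natDegree_lt_natDegree h0 hdeg) hPD rfl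

/-- substitution `s ↦ a + c t`, `y ↦ b`. -/
noncomputable def pl {A : Type*} [CommRing A] (a c : A) (b : PowerSeries A) :
    Polynomial (Polynomial A) →+* PowerSeries A :=
  Polynomial.eval₂RingHom (Polynomial.eval₂RingHom PowerSeries.C
    (PowerSeries.C a + PowerSeries.C c * PowerSeries.X)) b

@[simp] lemma pl_X {A : Type*} [CommRing A] (a c : A) (b : PowerSeries A) :
    pl a c b Polynomial.X = b := by simp [pl]
@[simp] lemma pl_CX {A : Type*} [CommRing A] (a c : A) (b : PowerSeries A) :
    pl a c b (Polynomial.C Polynomial.X) = PowerSeries.C a + PowerSeries.C c * PowerSeries.X := by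
  simp [pl]
@[simp] lemma pl_CC {A : Type*} [CommRing A] (a c : A) (b : PowerSeries A) (r : A) :
    pl a c b (Polynomial.C (Polynomial.C r)) = PowerSeries.C r := by
  simp [pl]

end IE

open MvPolynomial
namespace IE

/-- polynomials of `y`-degree `< e` and total degree `≤ N` -/
def VN (k : Type*) [CommRing k] (e N : ℕ) : Submodule k (Polynomial (Polynomial k)) where
  carrier := {p | p.degree < e ∧ PD N p}
  add_mem' h1 h2 := ⟨(Polynomial.degree_add_le _ _).trans_lt (max_lt h1.1 h2.1),
    (filt_PD k).add h1.2 h2.2⟩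
  zero_mem' := ⟨by simp, (filt_PD k).zero N⟩
  smul_mem' c p h := ⟨(Polynomial.degree_smul_le _ _).trans_lt h.1, (filt_PD k).smul c h.2⟩

abbrev idx (e N : ℕ) := (j : Fin e) × Fin (N + 1 - j)

lemma card_idx (e D r : ℕ) (h : e ≤ D) :
    Fintype.card (idx e (D + r)) = Fintype.card (idx e D) + e * r := by
  simp only [idx, Fintype.card_sigma, Fintype.card_fin]
  have : ∀ j : Fin e, D + r + 1 - (j:ℕ) = (D + 1 - j) + r := by intro j; omega
  simp [this, Finset.sum_add_distrib]

/-- coefficients -/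
noncomputable def coefs (k : Type*) [CommRing k] (e N : ℕ) : VN k e N →ₗ[k] (idx e N → k) where
  toFun p := fun x => ((p.1).coeff x.1).coeff x.2
  map_add' p q := by ext x; simp
  map_smul' c p := by ext x; simp

lemma coefs_inj (k : Type*) [CommRing k] (e N : ℕ) : Function.Injective (coefs k e N) := by
  rw [injective_iff_map_eq_zero]
  rintro ⟨p, hp1, hp2⟩ h
  ext j i
  by_contra hne
  simp only [ZeroMemClass.coe_zero, Polynomial.coeff_zero] at hne
  have h1 := hp2 _ _ hne
  have h2 : j < e := by
    by_contra hj
    rw [not_lt] at hj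
    rw [Polynomial.coeff_eq_zero_of_degree_lt (hp1.trans_le (by exact_mod_cast hj))] at hne
    simp at hne
  exact hne (congrFun h ⟨⟨j, h2⟩, ⟨i, by simp; omega⟩⟩)

noncomputable def bld (k : Type*) [CommRing k] (e N : ℕ) :
    (idx e N → k) →ₗ[k] Polynomial (Polynomial k) :=
  Fintype.linearCombination k
    (fun x : idx e N => Polynomial.monomial (x.1 : ℕ) (Polynomial.monomial (x.2 : ℕ) (1:k)))

lemma bld_coeff {k : Type*} [CommRing k] {e N : ℕ} (a : idx e N → k) (x : idx e N) :
    ((bld k e N a).coeff x.1).coeff x.2 = a x := by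
  classical
  rw [bld, Fintype.linearCombination_apply, Polynomial.finsetSum_coeff, Polynomial.finsetSum_coeff,
    Finset.sum_eq_single x]
  · simp
  · rintro ⟨b1, b2⟩ - hb
    simp only [Polynomial.coeff_smul, Polynomial.coeff_monomial]
    split_ifs with h
    · rw [Polynomial.coeff_monomial, if_neg, smul_zero]
      intro h2
      apply hb
      have h := Fin.ext h
      subst h
      have h2 := Fin.ext h2
      subst h2
      rfl
    · simp
  · simp

lemma bld_mem {k : Type*} [CommRing k] {e N : ℕ} (a : idx e N → k) : bld k e N a ∈ VN k e N := by
  rw [bld, Fintype.linearCombination_apply]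
  refine Submodule.sum_mem _ fun x _ => Submodule.smul_mem _ _ ⟨?_, ?_⟩
  · refine (Polynomial.degree_monomial_le _ _).trans_lt ?_
    exact_mod_cast x.1.2
  · intro i j h
    rw [Polynomial.coeff_monomial] at h
    split_ifs at h with hj
    · rw [Polynomial.coeff_monomial] at h
      split_ifs at h with hi
      · have := x.2.2; omega
      · simp at h
    · simp at h

theorem bezout {k ι : Type*} [Field k] [Fintype ι] {u R A' B' : Polynomial (Polynomial k)}
    {r0 : Polynomial k} {r M : ℕ} (hu : u.Monic) (hPu : PD u.natDegree u) (hPR : PD r R)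
    (hr0 : r0 ≠ 0) (hAB : A' * u + B' * R = Polynomial.C r0)
    (s y c : ι → k) (v : ι → PowerSeries k)
    (hinj : Function.Injective fun P => (s P, y P)) (hc : ∀ P, c P ≠ 0)
    (hv : ∀ P, PowerSeries.constantCoeff (v P) = 0)
    (hφu : ∀ P, pl (s P) (c P) (PowerSeries.C (y P) + v P) u = 0)
    (hφR : ∀ P, PowerSeries.X ^ M ∣ pl (s P) (c P) (PowerSeries.C (y P) + v P) R) :
    Fintype.card ι * M ≤ u.natDegree * r := by
  classical
  set e := u.natDegree with he
  let φ := fun P => pl (s P) (c P) (PowerSeries.C (y P) + v P)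
  -- interpolation
  let I : ι → Ideal (Polynomial (Polynomial k)) :=
    fun P => (Ideal.span {(PowerSeries.X : PowerSeries k) ^ M}).comap (φ P)
  have hIs : ∀ P, Polynomial.C (Polynomial.X - Polynomial.C (s P)) ^ M ∈ I P := by
    intro P
    rw [Ideal.mem_comap, Ideal.mem_span_singleton, map_pow]
    apply pow_dvd_pow_of_dvd
    simp [φ]
  have hIy : ∀ P, (Polynomial.X - Polynomial.C (Polynomial.C (y P))) ^ M ∈ I P := by
    intro P
    rw [Ideal.mem_comap, Ideal.mem_span_singleton, map_pow]
    apply pow_dvd_pow_of_dvd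
    simpa [φ] using PowerSeries.X_dvd_iff.2 (hv P)
  have hcop : ∀ P Q, P ≠ Q → IsCoprime (I P) (I Q) := by
    intro P Q hPQ
    rw [Ideal.isCoprime_iff_exists]
    by_cases hs : s P = s Q
    · have hy : y P ≠ y Q := fun h => hPQ (hinj (by simp [hs, h]))
      have h1 : IsCoprime (Polynomial.X - Polynomial.C (Polynomial.C (y P)))
          (Polynomial.X - Polynomial.C (Polynomial.C (y Q)) : Polynomial (Polynomial k)) := by
        refine ⟨Polynomial.C (Polynomial.C ((y Q - y P)⁻¹)), -Polynomial.C (Polynomial.C ((y Q - y P)⁻¹)), ?_⟩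
        have : (y Q - y P)⁻¹ * (y Q - y P) = 1 := inv_mul_cancel₀ (sub_ne_zero.2 hy.symm)
        have := congrArg (fun a => (Polynomial.C (Polynomial.C a) : Polynomial (Polynomial k))) this
        simp only [map_mul, map_sub, map_one] at this
        linear_combination this
      obtain ⟨a, b, hab⟩ := h1.pow (m := M) (n := M)
      exact ⟨_, Ideal.mul_mem_left _ a (hIy P), _, Ideal.mul_mem_left _ b (hIy Q), hab⟩
    · have h1 : IsCoprime (Polynomial.C (Polynomial.X - (Polynomial.C (s P))))
          (Polynomial.C (Polynomial.X - (Polynomial.C (s Q))) : Polynomial (Polynomial k)) := by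
        refine ⟨Polynomial.C (Polynomial.C ((s Q - s P)⁻¹)), -Polynomial.C (Polynomial.C ((s Q - s P)⁻¹)), ?_⟩
        have : (s Q - s P)⁻¹ * (s Q - s P) = 1 := inv_mul_cancel₀ (sub_ne_zero.2 (Ne.symm hs))
        have := congrArg (fun a => (Polynomial.C (Polynomial.C a) : Polynomial (Polynomial k))) this
        simp only [map_mul, map_sub, map_one] at this ⊢
        linear_combination this
      obtain ⟨a, b, hab⟩ := h1.pow (m := M) (n := M)
      exact ⟨_, Ideal.mul_mem_left _ a (hIs P), _, Ideal.mul_mem_left _ b (hIs Q), hab⟩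
  have hinterp : ∀ x : ι × Fin M, ∃ G : Polynomial (Polynomial k), ∀ P, ∀ j : Fin M,
      PowerSeries.coeff (j : ℕ) (φ P G) = if x = (P, j) then 1 else 0 := by
    rintro ⟨Q, i⟩
    obtain ⟨G, hG⟩ := Ideal.exists_forall_sub_mem_ideal (I := I)
      (fun P P' h => hcop P P' h)
      (fun P => if P = Q then Polynomial.C (Polynomial.C ((c P)⁻¹) *
        (Polynomial.X - Polynomial.C (s P))) ^ (i : ℕ) else 0)
    refine ⟨G, fun P j => ?_⟩
    have h := hG P
    rw [Ideal.mem_comap, Ideal.mem_span_singleton, PowerSeries.X_pow_dvd_iff] at h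
    have h := h j j.2
    rw [map_sub, map_sub, sub_eq_zero] at h
    rw [h]
    by_cases hP : P = Q
    · subst hP
      have : φ P (Polynomial.C (Polynomial.C ((c P)⁻¹) *
        (Polynomial.X - Polynomial.C (s P)))) = PowerSeries.X := by
        simp only [map_mul, map_sub, φ, pl_CC, pl_CX]
        rw [add_sub_cancel_left, ← mul_assoc, ← map_mul, inv_mul_cancel₀ (hc P)]
        simp
      rw [if_pos rfl, map_pow, this, PowerSeries.coeff_X_pow]
      simp [Fin.ext_iff, eq_comm]
    · rw [if_neg hP, map_zero, map_zero, if_neg]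
      rintro h
      exact hP (congrArg Prod.fst h).symm
  choose G hG using hinterp
  choose b hb using fun x => exists_PD (G x)
  set D := e + ∑ x, b x with hD
  have hbD : ∀ x, b x ≤ D + r := by
    intro x
    have := Finset.single_le_sum (f := b) (fun _ _ => Nat.zero_le _) (Finset.mem_univ x)
    omega
  -- jets
  let J : VN k e (D + r) →ₗ[k] (ι × Fin M → k) :=
    { toFun := fun p x => PowerSeries.coeff (x.2 : ℕ) (φ x.1 p.1)
      map_add' := fun p q => by ext x; simp
      map_smul' := fun a p => by
        ext x
        simp only [SetLike.val_smul, RingHom.id_apply, Pi.smul_apply]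
        have : a • p.1 = Polynomial.C (Polynomial.C a) * p.1 := by
          ext; simp
        rw [this, map_mul]
        simp [φ] }
  have hdeg : ∀ p, (p %ₘ u).degree < (e : WithBot ℕ) := by
    intro p
    rw [he, ← Polynomial.degree_eq_natDegree hu.ne_zero]
    exact Polynomial.degree_modByMonic_lt p hu
  have hφmod : ∀ P p, φ P (p %ₘ u) = φ P p := by
    intro P p
    conv_rhs => rw [← Polynomial.modByMonic_add_div p u]
    rw [map_add, map_mul]
    simp only [φ]
    rw [hφu]
    simp
  have hJ : Function.Surjective J := by
    intro τ
    refine ⟨∑ x, τ x • ⟨G x %ₘ u, hdeg _, (filt_PD k).mono (hbD x) (PD_modByMonic hu hPu (hb x))⟩, ?_⟩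
    rw [map_sum]
    ext x
    rw [Finset.sum_apply, Finset.sum_eq_single x]
    · rw [map_smul]
      simp only [Pi.smul_apply, J, LinearMap.coe_mk, AddHom.coe_mk]
      rw [hφmod, hG]
      simp
    · intro z _ hz
      rw [map_smul]
      simp only [Pi.smul_apply, J, LinearMap.coe_mk, AddHom.coe_mk]
      rw [hφmod, hG, if_neg hz, smul_zero]
    · simp
  -- multiplication
  let T : (idx e D → k) →ₗ[k] VN k e (D + r) :=
    LinearMap.codRestrict _ (((Polynomial.modByMonicHom u).restrictScalars k).comp
      ((LinearMap.mulRight k R).comp (bld k e D))) (by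
      intro a
      refine ⟨hdeg _, PD_modByMonic hu hPu ?_⟩
      exact (filt_PD k).mul (bld_mem a).2 hPR)
  have hT : ∀ a, (T a).1 = (bld k e D a * R) %ₘ u := fun a => rfl
  have hTinj : Function.Injective T := by
    rw [injective_iff_map_eq_zero]
    intro a ha
    have h1 : u ∣ bld k e D a * R := by
      rw [← Polynomial.modByMonic_eq_zero_iff_dvd hu, ← hT, ha]; rfl
    set g := bld k e D a with hg
    have h2 : u ∣ Polynomial.C r0 * g := by
      rw [← hAB]
      have : (A' * u + B' * R) * g = u * (A' * g) + B' * (g * R) := by ring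
      rw [this]
      exact dvd_add (dvd_mul_right _ _) (h1.mul_left _)
    have h3 : Polynomial.C r0 * g = 0 := by
      by_contra hne
      have h4 := Polynomial.degree_le_of_dvd h2 hne
      rw [Polynomial.degree_mul, Polynomial.degree_C hr0, zero_add,
        Polynomial.degree_eq_natDegree hu.ne_zero] at h4
      exact absurd (bld_mem a).1 (not_lt.2 h4)
    have h4 : g = 0 := by
      rcases mul_eq_zero.1 h3 with h | h
      · exact absurd (Polynomial.C_eq_zero.1 h) hr0
      · exact h
    ext x
    have := bld_coeff a x
    rw [← hg, h4] at this
    simpa using this.symm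
  have hJT : LinearMap.range T ≤ LinearMap.ker J := by
    rintro _ ⟨a, rfl⟩
    rw [LinearMap.mem_ker]
    ext x
    simp only [J, LinearMap.coe_mk, AddHom.coe_mk, hT, hφmod, map_mul, Pi.zero_apply]
    exact PowerSeries.X_pow_dvd_iff.1 ((hφR x.1).mul_left _) _ x.2.2
  have : FiniteDimensional k (VN k e (D + r)) :=
    FiniteDimensional.of_injective _ (coefs_inj k e (D + r))
  have f1 := LinearMap.finrank_le_finrank_of_injective (coefs_inj k e (D + r))
  have f2 := LinearMap.finrank_range_add_finrank_ker (K := k) (V := VN k e (D + r)) (V₂ := ι × Fin M → k) J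
  have : Module.Finite k (LinearMap.ker J) :=
    FiniteDimensional.finiteDimensional_submodule (K := k) (V := VN k e (D + r)) _
  have f3 := Submodule.finrank_mono hJT
  rw [LinearMap.finrank_range_of_inj hTinj] at f3
  rw [LinearMap.range_eq_top.2 hJ, finrank_top] at f2
  simp only [Module.finrank_fintype_fun_eq_card, Fintype.card_prod, Fintype.card_fin] at f1 f2 f3
  rw [card_idx e D r (by omega)] at f1
  omega

end IE

open MvPolynomial
namespace IE

lemma C_X_pow_dvd_iff {A : Type*} [CommRing A] (E : Polynomial (PowerSeries A)) (k : ℕ) :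
    Polynomial.C (PowerSeries.X ^ k) ∣ E ↔ ∀ n, (PowerSeries.X ^ k : PowerSeries A) ∣ E.coeff n :=
  Polynomial.C_dvd_iff_dvd_coeff _ _

lemma C_X_dvd_iff_map {A : Type*} [CommRing A] (E : Polynomial (PowerSeries A)) :
    Polynomial.C (PowerSeries.X) ∣ E ↔ E.map (PowerSeries.constantCoeff (R := A)) = 0 := by
  rw [Polynomial.C_dvd_iff_dvd_coeff]
  simp_rw [PowerSeries.X_dvd_iff]
  constructor
  · intro h; ext n; simp [h]
  · intro h n
    have := congrArg (fun q => Polynomial.coeff q n) h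
    simpa using this

lemma eq_zero_of_monic_dvd {R : Type*} [CommRing R] [IsDomain R] {Q E : Polynomial R} (hQ : Q.Monic)
    (hE : E.degree < Q.degree) {r : R} (hr : r ≠ 0) (h : Q ∣ Polynomial.C r * E) : E = 0 := by
  by_contra hE0
  have hne : Polynomial.C r * E ≠ 0 := mul_ne_zero (Polynomial.C_ne_zero.2 hr) hE0
  have h1 := Polynomial.degree_le_of_dvd h hne
  rw [Polynomial.degree_mul, Polynomial.degree_C hr, zero_add] at h1
  exact absurd hE (not_lt.2 h1)

lemma rigidity {B A : Type*} [CommRing B] [CommRing A] [IsDomain A]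
    (κ : B →+* PowerSeries A) (ι : B →+* A) (hκ : ∀ x, PowerSeries.constantCoeff (κ x) = ι x)
    {Q S a b : Polynomial B} {r : B} (hQ : Q.Monic) (hS : S.Monic)
    (hab : a * Q + b * S = Polynomial.C r) (hr : ι r ≠ 0)
    (hQS : (Q * S).map κ = (Q * S).map (PowerSeries.C.comp ι)) :
    Q.map κ = Q.map (PowerSeries.C.comp ι) := by
  set β : B →+* PowerSeries A := PowerSeries.C.comp ι with hβ
  have hcc : (PowerSeries.constantCoeff (R := A)).comp κ = ι := by ext x; simp [hκ]
  have hcc' : (PowerSeries.constantCoeff (R := A)).comp β = ι := by ext x; simp [hβ]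
  have key : ∀ k, 1 ≤ k → Polynomial.C (PowerSeries.X ^ k) ∣ Q.map κ - Q.map β ∧
      Polynomial.C (PowerSeries.X ^ k) ∣ S.map κ - S.map β := by
    intro k hk
    induction k, hk using Nat.le_induction with
    | base =>
      simp only [pow_one, C_X_dvd_iff_map, Polynomial.map_sub, Polynomial.map_map, hcc, hcc', sub_self,
        and_self]
    | succ k hk ih =>
      obtain ⟨⟨E, hE⟩, ⟨E', hE'⟩⟩ := ih
      have hXk : (Polynomial.C (PowerSeries.X ^ k) : Polynomial (PowerSeries A)) ≠ 0 := by
        rw [Ne, Polynomial.C_eq_zero]; exact pow_ne_zero _ PowerSeries.X_ne_zero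
      have hdegE : E.degree < (Q.map ι).degree := by
        have h1 : (Q.map κ - Q.map β).degree < (Q.map κ).degree := by
          apply Polynomial.degree_sub_lt_left
          · rw [(hQ).degree_map, hQ.degree_map]
          · exact (hQ.map κ).ne_zero
          · rw [(hQ.map κ).leadingCoeff, (hQ.map β).leadingCoeff]
        rw [hE, Polynomial.degree_mul, Polynomial.degree_C (pow_ne_zero _ PowerSeries.X_ne_zero),
          zero_add, hQ.degree_map] at h1
        rwa [hQ.degree_map]
      have h1 : E * S.map β + Q.map β * E' = - Polynomial.C (PowerSeries.X ^ k) * (E * E') := by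
        apply mul_left_cancel₀ hXk
        rw [Polynomial.map_mul, Polynomial.map_mul] at hQS
        have e1 : Q.map κ = Q.map β + Polynomial.C (PowerSeries.X ^ k) * E := by rw [← hE]; ring
        have e2 : S.map κ = S.map β + Polynomial.C (PowerSeries.X ^ k) * E' := by rw [← hE']; ring
        rw [e1, e2] at hQS
        linear_combination hQS
      have h2 := congrArg (Polynomial.map (PowerSeries.constantCoeff (R := A))) h1
      have hz : PowerSeries.constantCoeff ((PowerSeries.X : PowerSeries A) ^ k) = 0 := by
        rw [map_pow, PowerSeries.constantCoeff_X, zero_pow (by omega)]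
      simp only [Polynomial.map_add, Polynomial.map_mul, Polynomial.map_neg, Polynomial.map_C,
        Polynomial.map_map, hcc', hz, map_zero, neg_zero, zero_mul] at h2
      have h3 := congrArg (Polynomial.map ι) hab
      simp only [Polynomial.map_add, Polynomial.map_mul, Polynomial.map_C] at h3
      set E0 := E.map (PowerSeries.constantCoeff (R := A))
      set E0' := E'.map (PowerSeries.constantCoeff (R := A))
      have hE0 : E0 = 0 := by
        apply eq_zero_of_monic_dvd (hQ.map ι) (Polynomial.degree_map_le.trans_lt hdegE) hr
        refine ⟨a.map ι * E0 - b.map ι * E0', ?_⟩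
        rw [← h3]
        linear_combination (b.map ι) * h2
      have hE0' : E0' = 0 := by
        rw [hE0, zero_mul, zero_add] at h2
        exact (mul_eq_zero.1 h2).resolve_left (hQ.map ι).ne_zero
      rw [pow_succ, map_mul, hE, hE']
      exact ⟨mul_dvd_mul_left _ ((C_X_dvd_iff_map _).2 hE0),
        mul_dvd_mul_left _ ((C_X_dvd_iff_map _).2 hE0')⟩
  rw [← sub_eq_zero]
  ext n j
  exact PowerSeries.X_pow_dvd_iff.1 ((C_X_pow_dvd_iff _ _).1 (key (j+1) (by omega)).1 n) j (by omega)

lemma exists_monic_irreducible_ker {D T : Type*} [CommRing D] [IsDomain D]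
    [UniqueFactorizationMonoid D] [CommRing T] [IsDomain T] (Φ : Polynomial D →+* T)
    {g : Polynomial D} (hg : g.Monic) (h0 : Φ g = 0) :
    ∃ Q S : Polynomial D, Q.Monic ∧ S.Monic ∧ Irreducible Q ∧ Φ Q = 0 ∧ g = Q * S := by
  obtain ⟨m, hm, u, hu⟩ := UniqueFactorizationMonoid.exists_prime_factors g hg.ne_zero
  have h1 : Φ m.prod = 0 := by
    have : Φ m.prod * Φ u = 0 := by rw [← map_mul, hu, h0]
    exact (mul_eq_zero.1 this).resolve_right ((u.isUnit.map Φ).ne_zero)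
  rw [map_multiset_prod, Multiset.prod_eq_zero_iff, Multiset.mem_map] at h1
  obtain ⟨p, hp, hp0⟩ := h1
  obtain ⟨s, hs⟩ : p ∣ g := (Multiset.dvd_prod hp).trans ⟨u, hu.symm⟩
  have hlc : p.leadingCoeff * s.leadingCoeff = 1 := by
    rw [← Polynomial.leadingCoeff_mul, ← hs, hg.leadingCoeff]
  refine ⟨p * Polynomial.C s.leadingCoeff, s * Polynomial.C p.leadingCoeff, ?_, ?_, ?_, ?_, ?_⟩
  · rw [Polynomial.Monic, Polynomial.leadingCoeff_mul, Polynomial.leadingCoeff_C, hlc]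
  · rw [Polynomial.Monic, Polynomial.leadingCoeff_mul, Polynomial.leadingCoeff_C, mul_comm, hlc]
  · have hun : IsUnit (Polynomial.C s.leadingCoeff) :=
      Polynomial.isUnit_C.2 (IsUnit.of_mul_eq_one _ ((mul_comm _ _).trans hlc))
    exact (irreducible_mul_isUnit hun).2 (hm p hp).irreducible
  · rw [map_mul, hp0, zero_mul]
  · have := congrArg (Polynomial.C) hlc
    rw [map_mul, map_one] at this
    rw [hs]
    linear_combination (-p * s) * this

/-- bivariate separability: `g(w) - f` against the derivative of `g` -/
lemma separable_aux {F B : Type*} [Field F] [CommRing B] [Algebra F B] (g p : Polynomial F) (hp : p ≠ 0)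
    (f : B) (hf : ∀ μ : Polynomial F, μ.Monic → Polynomial.aeval f μ ≠ 0) :
    ∃ (a b : Polynomial B) (r : B), r ≠ 0 ∧
      a * (g.map (algebraMap F B) - Polynomial.C f) + b * p.map (algebraMap F B) = Polynomial.C r := by
  have : Module.Finite F (AdjoinRoot p) := (AdjoinRoot.powerBasis hp).finite
  obtain ⟨μ, hμ, h0⟩ := IsIntegral.of_finite F (AdjoinRoot.mk p g)
  have h1 : p ∣ Polynomial.aeval g μ := by
    rw [← AdjoinRoot.mk_eq_zero, ← h0]
    rw [Polynomial.aeval_def, Polynomial.hom_eval₂]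
    rfl
  obtain ⟨b, hb⟩ := h1
  obtain ⟨a, ha⟩ := Polynomial.sub_dvd_eval_sub (g.map (algebraMap F B)) (Polynomial.C f)
    (μ.map (algebraMap F (Polynomial B)))
  have e1 : (μ.map (algebraMap F (Polynomial B))).eval (g.map (algebraMap F B)) =
      (Polynomial.aeval g μ).map (algebraMap F B) := by
    rw [Polynomial.aeval_def, Polynomial.eval_map]
    change _ = (Polynomial.mapRingHom (algebraMap F B)) _
    rw [Polynomial.hom_eval₂]
    congr 1
    ext x
    simp
  have e2 : (μ.map (algebraMap F (Polynomial B))).eval (Polynomial.C f) =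
      Polynomial.C (Polynomial.aeval f μ) := by
    rw [Polynomial.aeval_def, Polynomial.eval_map, Polynomial.hom_eval₂]
    rfl
  rw [e1, e2, hb, Polynomial.map_mul] at ha
  exact ⟨-a, b.map (algebraMap F B), _, hf μ hμ, by linear_combination ha⟩

end IE

open MvPolynomial
namespace IE

noncomputable abbrev oe (F τ : Type*) [Field F] :
    MvPolynomial (Option τ) F ≃ₐ[F] Polynomial (MvPolynomial τ F) := optionEquivLeft F τ

section oe
variable {F τ : Type*} [Field F]

@[simp] lemma oe_X_none : oe F τ (X none) = Polynomial.X := optionEquivLeft_X_none _ _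
@[simp] lemma oe_X_some (i : τ) : oe F τ (X (some i)) = Polynomial.C (X i) := optionEquivLeft_X_some _ _ _

lemma natDegree_oe_le (p : MvPolynomial (Option τ) F) : (oe F τ p).natDegree ≤ p.totalDegree := by
  rw [natDegree_optionEquivLeft]; exact degreeOf_le_totalDegree _ _

lemma totalDegree_coeff_oe (p : MvPolynomial (Option τ) F) (j : ℕ) (h : (oe F τ p).coeff j ≠ 0) :
    ((oe F τ p).coeff j).totalDegree + j ≤ p.totalDegree := by
  apply totalDegree_coeff_optionEquivLeft_add_le
  exact (Polynomial.le_natDegree_of_ne_zero h).trans (natDegree_oe_le p)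

lemma good_factor {Q S : MvPolynomial (Option τ) F} (hQ : (oe F τ Q).Monic) (hS : (oe F τ S).Monic)
    (h : (Q * S).totalDegree ≤ (oe F τ (Q * S)).natDegree) :
    Q.totalDegree = (oe F τ Q).natDegree := by
  have hQ0 : Q ≠ 0 := by rintro rfl; simp at hQ
  have hS0 : S ≠ 0 := by rintro rfl; simp at hS
  rw [totalDegree_mul_of_isDomain hQ0 hS0, map_mul, hQ.natDegree_mul hS] at h
  have h1 := natDegree_oe_le Q
  have h2 := natDegree_oe_le S
  omega

lemma oe_rename_some (p : MvPolynomial τ F) : oe F τ (rename some p) = Polynomial.C p := by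
  have : (oe F τ : MvPolynomial (Option τ) F →ₐ[F] _).comp (rename some) =
      (Algebra.ofId (MvPolynomial τ F) (Polynomial (MvPolynomial τ F))).restrictScalars F := by
    apply MvPolynomial.algHom_ext
    intro i
    simp [Algebra.ofId_apply]
  exact DFunLike.congr_fun this p

lemma oe_rename_map {τ' : Type*} (φ : τ → τ') (p : MvPolynomial (Option τ) F) :
    oe F τ' (rename (Option.map φ) p) = (oe F τ p).map (rename φ : MvPolynomial τ F →ₐ[F] _).toRingHom := by
  have : (oe F τ' : MvPolynomial (Option τ') F →ₐ[F] _).comp (rename (Option.map φ)) =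
      (Polynomial.mapAlgHom (rename φ)).comp (oe F τ : MvPolynomial (Option τ) F →ₐ[F] _) := by
    apply MvPolynomial.algHom_ext
    rintro (_ | i) <;> simp
  exact DFunLike.congr_fun this p

end oe

structure Nrm {F σ : Type*} [Field F] (f : MvPolynomial (Option σ) F) (d : ℕ) : Prop where
  monic : (oe F σ f).Monic
  nd : (oe F σ f).natDegree = d
  td : f.totalDegree ≤ d
  pos : 1 ≤ d

lemma Nrm.aeval_ne {F σ : Type*} [Field F] {f : MvPolynomial (Option σ) F} {d : ℕ} (hf : Nrm f d)
    (μ : Polynomial F) (hμ : μ ≠ 0) : Polynomial.aeval f μ ≠ 0 := by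
  intro h
  have h1 := congrArg (oe F σ) h
  rw [← Polynomial.aeval_algHom_apply, map_zero, Polynomial.aeval_def] at h1
  have h2 : (μ.map (algebraMap F (MvPolynomial σ F))).comp (oe F σ f) = 0 := by
    rw [Polynomial.comp, Polynomial.eval₂_map]
    exact h1
  rw [Polynomial.comp_eq_zero_iff] at h2
  rcases h2 with h2 | h2
  · rw [Polynomial.map_eq_zero_iff (algebraMap F (MvPolynomial σ F)).injective] at h2
    exact hμ h2
  · have := congrArg Polynomial.natDegree h2.2
    rw [Polynomial.natDegree_C, hf.nd] at this
    have := hf.pos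
    omega

section generic
variable (F σ : Type*) [Field F]

abbrev GA := MvPolynomial (σ ⊕ Option σ) F

noncomputable def gx : Option σ → GA F σ := fun o => X (Sum.inr o)
noncomputable def gl : σ → GA F σ := fun o => X (Sum.inl o)

noncomputable def jx : MvPolynomial (Option σ) F →ₐ[F] MvPolynomial (Option (σ ⊕ Option σ)) F :=
  rename (Option.map Sum.inl)
noncomputable def jX : MvPolynomial (Option σ) F →ₐ[F] MvPolynomial (Option (σ ⊕ Option σ)) F :=
  rename (some ∘ Sum.inr)

variable {F σ}

lemma aeval_gx (p : MvPolynomial (Option σ) F) : aeval (gx F σ) p = rename Sum.inr p := by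
  have : (aeval (gx F σ) : MvPolynomial (Option σ) F →ₐ[F] GA F σ) = rename Sum.inr := by
    apply MvPolynomial.algHom_ext; intro o; simp [gx]
  rw [this]

lemma aeval_gx_inj : Function.Injective (aeval (gx F σ) : MvPolynomial (Option σ) F →ₐ[F] GA F σ) := by
  intro p q h
  rw [aeval_gx, aeval_gx] at h
  exact rename_injective _ Sum.inr_injective h

lemma oe_jx (p : MvPolynomial (Option σ) F) : oe F _ (jx F σ p) =
    (oe F σ p).map (rename Sum.inl : MvPolynomial σ F →ₐ[F] _).toRingHom := oe_rename_map _ _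

lemma oe_jX (p : MvPolynomial (Option σ) F) : oe F _ (jX F σ p) =
    Polynomial.C (aeval (gx F σ) p) := by
  rw [aeval_gx, ← oe_rename_some, rename_rename]; rfl

noncomputable def khat (δ : GA F σ) (v : PowerSeries (GA F σ)) :
    MvPolynomial (Option (σ ⊕ Option σ)) F →ₐ[F] PowerSeries (GA F σ) :=
  aeval fun o => match o with
    | none => bsub (gx F σ) (gl F σ) δ v none
    | some (Sum.inl i) => bsub (gx F σ) (gl F σ) δ v (some i)
    | some (Sum.inr o) => PowerSeries.C (gx F σ o)

lemma khat_jx (δ : GA F σ) (v : PowerSeries (GA F σ)) (p : MvPolynomial (Option σ) F) :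
    khat δ v (jx F σ p) = aeval (bsub (gx F σ) (gl F σ) δ v) p := by
  rw [khat, jx, aeval_rename]
  congr 2
  ext1 o
  cases o <;> rfl

lemma C_aeval {τ A : Type*} [CommRing A] [Algebra F A] (g : τ → A) (p : MvPolynomial τ F) :
    PowerSeries.C (aeval g p) = aeval (fun o => PowerSeries.C (g o)) p := by
  have : (PowerSeries.C (R := A)).comp ((aeval g : MvPolynomial τ F →ₐ[F] A) : MvPolynomial τ F →+* A) =
      ((aeval (fun o => PowerSeries.C (g o)) : MvPolynomial τ F →ₐ[F] PowerSeries A) : MvPolynomial τ F →+* PowerSeries A) := by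
    apply MvPolynomial.ringHom_ext
    · intro r; simp [PowerSeries.algebraMap_apply]
    · intro i; simp
  exact DFunLike.congr_fun this p

lemma khat_jX (δ : GA F σ) (v : PowerSeries (GA F σ)) (p : MvPolynomial (Option σ) F) :
    khat δ v (jX F σ p) = PowerSeries.C (aeval (gx F σ) p) := by
  rw [khat, jX, aeval_rename, C_aeval]
  rfl

lemma khat_inj (δ : MvPolynomial (Option σ) F) (hδ : δ ≠ 0) (v : PowerSeries (GA F σ))
    (r : GA F σ) (h : khat (aeval (gx F σ) δ) v (rename some r) = 0) : r = 0 := by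
  set δ' := aeval (gx F σ) δ with hδ'
  let ω : GA F σ →ₐ[F] Polynomial (GA F σ) := aeval fun o => match o with
    | Sum.inl i => Polynomial.C (gx F σ (some i)) + Polynomial.C (gl F σ i * δ' ^ 2) * Polynomial.X
    | Sum.inr o => Polynomial.C (gx F σ o)
  have h1 : ∀ r, khat δ' v (rename some r) = ((ω r : Polynomial (GA F σ)) : PowerSeries (GA F σ)) := by
    intro r
    have : (((khat δ' v).comp (rename some)) : GA F σ →+* _) =
        (Polynomial.coeToPowerSeries.ringHom (R := GA F σ)).comp (ω : GA F σ →+* _) := by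
      apply MvPolynomial.ringHom_ext
      · intro r
        have : ω (C r) = algebraMap F _ r := ω.commutes r
        simp [PowerSeries.algebraMap_apply, Polynomial.algebraMap_apply]
      rintro (i | o)
      · simp [khat, ω, bsub, -map_mul, -map_pow]
      · simp [khat, ω]
    exact DFunLike.congr_fun this r
  rw [h1, Polynomial.coe_eq_zero_iff] at h
  let K := FractionRing (GA F σ)
  let am : GA F σ →ₐ[F] K := IsScalarTower.toAlgHom F (GA F σ) K
  have hδ0 : am δ' ≠ 0 := by
    intro h0
    have : δ' = 0 := (IsFractionRing.injective (GA F σ) K) (by rw [map_zero]; exact h0)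
    exact hδ (aeval_gx_inj (by rw [map_zero]; exact this))
  let η : GA F σ →ₐ[F] K := aeval fun o => match o with
    | Sum.inl i => (am (X (Sum.inl i)) - am (gx F σ (some i))) / am δ' ^ 2
    | Sum.inr o => am (gx F σ o)
  have hηδ : η δ' = am δ' := by
    have : η.comp (aeval (gx F σ)) = am.comp (aeval (gx F σ)) := by
      apply MvPolynomial.algHom_ext
      intro o
      simp [η, gx]
    exact DFunLike.congr_fun this δ
  have h2 : (η.comp ((Polynomial.aeval (R := GA F σ) (1 : GA F σ)).restrictScalars F)).comp ω = am := by
    apply MvPolynomial.algHom_ext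
    rintro (i | o)
    · simp only [AlgHom.comp_apply, ω, aeval_X, AlgHom.restrictScalars_apply, map_add, map_mul,
        Polynomial.aeval_C, Polynomial.aeval_X, Algebra.algebraMap_self_apply, map_one, mul_one, map_pow]
      rw [hηδ]
      simp only [η, gx, gl, aeval_X]
      rw [div_mul_cancel₀ _ (pow_ne_zero 2 hδ0)]
      ring
    · simp [ω, η, gx]
  have h3 := DFunLike.congr_fun h2 r
  simp only [AlgHom.comp_apply, h, map_zero] at h3
  exact (IsFractionRing.injective (GA F σ) K) (by rw [map_zero]; exact h3.symm)

end generic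
end IE

open MvPolynomial
namespace IE

lemma oe_pderiv {F τ : Type*} [Field F] (p : MvPolynomial (Option τ) F) :
    oe F τ (pderiv none p) = Polynomial.derivative (oe F τ p) := by
  induction p using MvPolynomial.induction_on with
  | C a =>
    rw [pderiv_C, map_zero, ← MvPolynomial.algebraMap_eq, AlgEquiv.commutes,
      Polynomial.algebraMap_apply, Polynomial.derivative_C]
  | add p q hp hq => simp only [map_add, hp, hq]
  | mul_X p i hp =>
    rw [(pderiv none).leibniz, smul_eq_mul, smul_eq_mul, map_add, map_mul, map_mul,
      map_mul (oe F τ) p, Polynomial.derivative_mul, ← hp]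
    cases i with
    | none => simp ; ring
    | some i => 
      rw [pderiv_X_of_ne (by simp)]
      simp ; ring

lemma eval_oe {F τ : Type*} [Field F] (P : Option τ → F) (p : MvPolynomial (Option τ) F) :
    ((oe F τ p).map (eval (P ∘ some))).eval (P none) = eval P p := by
  have : ((Polynomial.evalRingHom (P none)).comp ((Polynomial.mapRingHom (eval (P ∘ some))).comp
      (oe F τ : MvPolynomial (Option τ) F →+* _))) = eval P := by
    apply MvPolynomial.ringHom_ext
    · intro r
      have : oe F τ (C r) = algebraMap F _ r := (oe F τ).commutes r
      simp [this, Polynomial.algebraMap_apply, MvPolynomial.algebraMap_eq]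
    · rintro (_ | i) <;> simp 
  exact DFunLike.congr_fun this p

lemma totalDegree_coeff_oe_le {F τ : Type*} [Field F] (p : MvPolynomial (Option τ) F) (j : ℕ) :
    ((oe F τ p).coeff j).totalDegree ≤ p.totalDegree := by
  by_cases h : (oe F τ p).coeff j = 0
  · rw [h]; simp
  · have := totalDegree_coeff_oe p j h; omega

theorem kfix {F σ : Type*} [Field F] {f : MvPolynomial (Option σ) F}
    (v : PowerSeries (GA F σ)) (hv0 : PowerSeries.constantCoeff v = 0) (δ : GA F σ) 
    (p : MvPolynomial (Option σ) F) :
    PowerSeries.constantCoeff (aeval (bsub (gx F σ) (gl F σ) δ v) p) = aeval (gx F σ) p := by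
  have : (PowerSeries.constantCoeff (R := GA F σ)).comp
      ((aeval (bsub (gx F σ) (gl F σ) δ v) : MvPolynomial (Option σ) F →ₐ[F] _) :
        MvPolynomial (Option σ) F →+* _) = 
        ((aeval (gx F σ) : MvPolynomial (Option σ) F →ₐ[F] _) : MvPolynomial (Option σ) F →+* _) := by
    apply MvPolynomial.ringHom_ext
    · intro r; simp [PowerSeries.algebraMap_apply]
    · rintro (_ | i) <;> simp [bsub, hv0]
  exact DFunLike.congr_fun this p

theorem luroth {F σ : Type*} [Field F] {f : MvPolynomial (Option σ) F} {d : ℕ} (hf : Nrm f d)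
    (P0 : Option σ → F) (hP0 : eval P0 (pderiv none f) ≠ 0)
    (hind : ∀ (g : Polynomial F) (h : MvPolynomial (Option σ) F), f = Polynomial.aeval h g →
      g.natDegree ≤ 1) :
    Irreducible (oe F _ (jx F σ f - jX F σ f)) := by
  have hfy : pderiv none f ≠ 0 := by intro h; rw [h] at hP0; simp at hP0
  obtain ⟨v, hv0, -, hv⟩ := branch f (gx F σ) (gl F σ) 0 1 d (by simp [gx]) (by simp [gl]) hf.td
  set δ := aeval (gx F σ) (pderiv none f) with hδ
  let κ : MvPolynomial (Option σ) F →ₐ[F] PowerSeries (GA F σ) := aeval (bsub (gx F σ) (gl F σ) δ v)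
  let ι : MvPolynomial (Option σ) F →ₐ[F] GA F σ := aeval (gx F σ)
  have hκf : κ f = PowerSeries.C (ι f) := hv
  have hκι : ∀ x, PowerSeries.constantCoeff (κ x) = ι x := kfix (f := f) v hv0 δ
  have hιinj : Function.Injective ι := aeval_gx_inj
  set G := jx F σ f - jX F σ f with hG
  -- subtraction of constants from a map
  have hdeg : ∀ p : MvPolynomial (Option σ) F, (oe F _ (jx F σ p - jX F σ p)) =
      (oe F σ p).map (rename Sum.inl : MvPolynomial σ F →ₐ[F] _).toRingHom -
        Polynomial.C (ι p) := by
    intro p; rw [map_sub, oe_jx, oe_jX]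
  have hGm : (oe F _ G).Monic := by
    rw [hG, hdeg]
    apply Polynomial.Monic.sub_of_left (hf.monic.map _)
    refine Polynomial.degree_C_le.trans_lt ?_
    rw [hf.monic.degree_map, Polynomial.degree_eq_natDegree hf.monic.ne_zero, hf.nd]
    exact_mod_cast hf.pos
  have hGd : (oe F _ G).natDegree = d := by
    rw [hG, hdeg, Polynomial.natDegree_sub_C, hf.monic.natDegree_map, hf.nd]
  have hGt : G.totalDegree ≤ d := by
    refine (totalDegree_sub _ _).trans (max_le ?_ ?_)
    · exact (totalDegree_rename_le _ _).trans hf.td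
    · exact (totalDegree_rename_le _ _).trans hf.td
  let Φ : Polynomial (GA F σ) →+* PowerSeries (GA F σ) :=
    ((khat δ v).comp ((oe F (σ ⊕ Option σ)).symm : _ →ₐ[F] _)).toRingHom
  have hΦ : ∀ p, Φ (oe F _ p) = khat δ v p := by intro p; simp [Φ]
  have hΦC : ∀ r, Φ (Polynomial.C r) = 0 → r = 0 := by
    intro r h
    rw [← oe_rename_some, hΦ] at h
    exact khat_inj _ hfy v r h
  have hkj : ∀ p, κ p = PowerSeries.C (ι p) → khat δ v (jx F σ p - jX F σ p) = 0 := by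
    intro p hp
    rw [map_sub, khat_jx, khat_jX, sub_eq_zero]
    exact hp
  obtain ⟨Q', S', hQ'm, hS'm, hQ'i, hQ'0, hGQS⟩ :=
    exists_monic_irreducible_ker Φ hGm (by rw [hΦ]; exact hkj f hκf)
  set e := Q'.natDegree with he
  have hed : e + S'.natDegree = d := by rw [← hGd, hGQS, hQ'm.natDegree_mul hS'm]
  have he1 : 1 ≤ e := by
    by_contra h0
    have := hQ'm.natDegree_eq_zero.1 (by omega)
    rw [this] at hQ'i
    exact not_irreducible_one hQ'i
  obtain ⟨Q, hQ⟩ : ∃ Q, oe F _ Q = Q' := ⟨(oe F _).symm Q', by simp⟩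
  obtain ⟨S, hS⟩ : ∃ S, oe F _ S = S' := ⟨(oe F _).symm S', by simp⟩
  have hGQS' : G = Q * S := by
    apply (oe F _).injective
    rw [hGQS, map_mul, hQ, hS]
  have hQt : Q.totalDegree = e := by
    rw [he, ← hQ]
    apply good_factor (S := S) (by rwa [hQ]) (by rwa [hS])
    rw [← hGQS', hGd]; exact hGt
  have hSt : S.totalDegree = S'.natDegree := by
    rw [← hS]
    apply good_factor (S := Q) (by rwa [hS]) (by rwa [hQ])
    rw [mul_comm, ← hGQS', hGd]; exact hGt
  have hker : ∀ p, κ p = PowerSeries.C (ι p) → Q' ∣ oe F _ (jx F σ p - jX F σ p) := by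
    intro p hp
    apply dvd_of_map_eq_zero hQ'm hQ'i Φ hΦC hQ'0
    rw [hΦ]; exact hkj p hp
  -- specialisation
  let ev0 : GA F σ →ₐ[F] MvPolynomial (Option σ) F := aeval fun o => match o with
    | Sum.inl i => C (P0 (some i))
    | Sum.inr o => X o
  have hev0t : ∀ p, (ev0 p).totalDegree ≤ p.totalDegree := by
    intro p
    apply totalDegree_aeval_le
    rintro (i | o) <;> simp
  set Q1 := Q'.map ev0.toRingHom with hQ1
  set S1 := S'.map ev0.toRingHom with hS1
  set g : Polynomial F := (oe F σ f).map (eval (P0 ∘ some)) with hg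
  have hg' : g.derivative ≠ 0 := by
    intro h
    apply hP0
    rw [← eval_oe, oe_pderiv, ← Polynomial.derivative_map, ← hg, h]
    simp
  have hQS1 : Q1 * S1 = g.map (algebraMap F _) - Polynomial.C f := by
    rw [hQ1, hS1, ← Polynomial.map_mul, ← hGQS, hG, hdeg, Polynomial.map_sub, Polynomial.map_map,
      Polynomial.map_C, hg, Polynomial.map_map]
    congr 2
    · apply MvPolynomial.ringHom_ext
      · intro r; simp [MvPolynomial.algebraMap_eq]
      · intro i; simp [ev0, MvPolynomial.algebraMap_eq]
    · have : ev0.comp ι = AlgHom.id F _ := by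
        apply MvPolynomial.algHom_ext
        intro o; simp [ev0, ι, gx]
      exact DFunLike.congr_fun this f
  obtain ⟨a, b, r, hr, hab⟩ := separable_aux g g.derivative hg' f (fun μ hμ => hf.aeval_ne μ hμ.ne_zero)
  have hder : g.derivative.map (algebraMap F (MvPolynomial (Option σ) F)) =
      Q1.derivative * S1 + Q1 * S1.derivative := by
    rw [← Polynomial.derivative_mul, hQS1, Polynomial.derivative_sub, Polynomial.derivative_C, sub_zero]
    exact (Polynomial.derivative_map _ _).symm
  rw [hder, ← hQS1] at hab
  have hrig : Q1.map κ.toRingHom = Q1.map (PowerSeries.C.comp ι.toRingHom) := by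
    apply rigidity κ.toRingHom ι.toRingHom hκι (hQ'm.map _) (hS'm.map _)
      (a := b * S1.derivative) (b := a * Q1 + b * Q1.derivative) (r := r)
    · rw [← hab]; ring
    · intro h0
      exact hr (hιinj (by rw [map_zero]; exact h0))
    · have hcomp : κ.toRingHom.comp (algebraMap F _) =
          (PowerSeries.C.comp ι.toRingHom).comp (algebraMap F _) := by
        apply RingHom.ext
        intro x
        simp [PowerSeries.algebraMap_apply]
      have hκf' : κ.toRingHom f = (PowerSeries.C.comp ι.toRingHom) f := hκf
      rw [hQS1, Polynomial.map_sub, Polynomial.map_sub, Polynomial.map_C, Polynomial.map_C, hκf']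
      congr 1
      rw [Polynomial.map_map (algebraMap F _) κ.toRingHom, hcomp, ← Polynomial.map_map]
  set h := Q1.coeff 0 with hh
  have hκh : κ h = PowerSeries.C (ι h) := by
    have := congrArg (fun q => Polynomial.coeff q 0) hrig
    simpa [Polynomial.coeff_map] using this
  have hht : h.totalDegree ≤ e := by
    rw [hh, hQ1, Polynomial.coeff_map]
    refine (hev0t _).trans ?_
    rw [← hQ, ← hQt]
    exact totalDegree_coeff_oe_le _ _
  have hst : (S1.coeff 0).totalDegree ≤ S'.natDegree := by
    rw [hS1, Polynomial.coeff_map]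
    refine (hev0t _).trans ?_
    rw [← hSt, ← hS]
    exact totalDegree_coeff_oe_le _ _
  have hhs : h * S1.coeff 0 = C (g.coeff 0) - f := by
    rw [hh, ← Polynomial.mul_coeff_zero, hQS1]
    simp [MvPolynomial.algebraMap_eq]
  have hhe : (oe F σ h).natDegree = e := by
    have h1 := congrArg (fun q => (oe F σ q).natDegree) hhs
    have hC : oe F σ (C (g.coeff 0)) = Polynomial.C (C (g.coeff 0)) := by
      rw [← oe_rename_some, rename_C]
    simp only [map_mul, map_sub] at h1
    rw [hC, Polynomial.natDegree_sub, Polynomial.natDegree_sub_C, hf.nd] at h1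
    have h2 := (natDegree_oe_le h).trans hht
    have h3 := (natDegree_oe_le (S1.coeff 0)).trans hst
    have h4 := Polynomial.natDegree_mul_le (p := oe F σ h) (q := oe F σ (S1.coeff 0))
    omega
  have hoh0 : oe F σ h ≠ 0 := by
    intro h0; rw [h0] at hhe; simp at hhe; omega
  obtain ⟨c, hc⟩ : ∃ c : F, (oe F σ h).coeff e = C c := by
    refine ⟨_, totalDegree_eq_zero_iff_eq_C.1 ?_⟩
    have := totalDegree_coeff_oe h e (by rw [← hhe]; exact Polynomial.leadingCoeff_ne_zero.2 hoh0)
    omega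
  have hc0 : c ≠ 0 := by
    rintro rfl
    rw [← hhe, map_zero] at hc
    exact hoh0 (Polynomial.leadingCoeff_eq_zero.1 hc)
  set W := oe F _ (jx F σ h - jX F σ h) with hW
  have hrinj : Function.Injective (rename Sum.inl : MvPolynomial σ F →ₐ[F] GA F σ).toRingHom :=
    rename_injective _ Sum.inl_injective
  have hWd : W.natDegree = e := by
    rw [hW, hdeg, Polynomial.natDegree_sub_C, Polynomial.natDegree_map_eq_of_injective hrinj, hhe]
  have hWl : W.coeff e = C c := by
    rw [hW, hdeg, Polynomial.coeff_sub, Polynomial.coeff_map, hc, Polynomial.coeff_C,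
      if_neg (by omega), sub_zero]
    simp
  have hWQ : W = Q' * Polynomial.C (C c) := by
    obtain ⟨T, hT⟩ := hker h hκh
    rw [← hW] at hT
    have hT0 : T ≠ 0 := by
      rintro rfl
      rw [hT] at hWl
      simp at hWl
      exact hc0 (C_injective _ _ (by rw [← hWl, map_zero]))
    have hTd : T.natDegree = 0 := by
      have := hWd
      rw [hT, hQ'm.natDegree_mul' hT0] at this
      omega
    rw [Polynomial.eq_C_of_natDegree_eq_zero hTd] at hT
    have : W.coeff e = T.coeff 0 := by
      rw [hT, Polynomial.coeff_mul_C]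
      rw [he, hQ'm.coeff_natDegree, one_mul]
    rw [hT, ← hWl, this]
  rcases (show e = d ∨ e < d by omega) with hcase | hcase
  · have : S' = 1 := hS'm.natDegree_eq_zero.1 (by omega)
    rw [hGQS, this, mul_one]
    exact hQ'i
  · exfalso
    let ev1 : MvPolynomial (Option (σ ⊕ Option σ)) F →ₐ[F] MvPolynomial (Option σ) F :=
      aeval fun o => match o with
      | none => X none
      | some (Sum.inl i) => X (some i)
      | some (Sum.inr _) => 0
    have hev1x : ∀ p, ev1 (jx F σ p) = p := by
      intro p
      have : ev1.comp (jx F σ) = AlgHom.id F _ := by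
        apply MvPolynomial.algHom_ext
        rintro (_ | i) <;> simp [ev1, jx]
      exact DFunLike.congr_fun this p
    have hev1X : ∀ p, ev1 (jX F σ p) = C (constantCoeff p) := by
      intro p
      have : (ev1.comp (jX F σ)).toRingHom = (C : F →+* MvPolynomial (Option σ) F).comp constantCoeff := by
        apply MvPolynomial.ringHom_ext
        · intro r
          have := (ev1.comp (jX F σ)).commutes r
          simpa [MvPolynomial.algebraMap_eq] using this
        · rintro o; simp [ev1, jX]
      exact DFunLike.congr_fun this p
    have hκC : ∀ x : F, κ (C x) = PowerSeries.C (ι (C x)) := by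
      intro x
      rw [← MvPolynomial.algebraMap_eq, AlgHom.commutes, AlgHom.commutes, PowerSeries.algebraMap_apply]
    set h1 := h - C (constantCoeff h) with hh1
    have hκh1 : κ h1 = PowerSeries.C (ι h1) := by
      rw [hh1, map_sub, map_sub, map_sub, hκh, hκC]
    have hoh1 : (oe F σ h1).natDegree = e := by
      rw [hh1, map_sub, show oe F σ (C (constantCoeff h)) = Polynomial.C (C (constantCoeff h)) by
        rw [← oe_rename_some, rename_C], Polynomial.natDegree_sub_C, hhe]
    have hh10 : h1 ≠ 0 := by
      intro h0; rw [h0] at hoh1; simp at hoh1; omega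
    have claim : ∀ N, ∀ ψ : MvPolynomial (Option σ) F, ψ.totalDegree ≤ N →
        κ ψ = PowerSeries.C (ι ψ) → ∃ μ : Polynomial F, ψ = Polynomial.aeval h μ := by
      intro N
      induction N using Nat.strong_induction_on with
      | _ N ih =>
      intro ψ hψN hψ
      obtain ⟨T, hT⟩ := hker ψ hψ
      obtain ⟨T', rfl⟩ := (oe F _).surjective T
      have e1 : C c * (jx F σ ψ - jX F σ ψ) = (jx F σ h - jX F σ h) * T' := by
        apply (oe F _).injective
        rw [map_mul, map_mul, hT, ← hW, hWQ, show oe F _ (C c) = Polynomial.C (C c) by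
          rw [← oe_rename_some, rename_C]]
        ring
      have e2 := congrArg ev1 e1
      simp only [map_mul, map_sub, hev1x, hev1X] at e2
      rw [← hh1, show ev1 (C c) = C c from ev1.commutes c] at e2
      set T0 := ev1 T' with hT0
      by_cases hz : ψ - C (constantCoeff ψ) = 0
      · refine ⟨Polynomial.C (constantCoeff ψ), ?_⟩
        rw [Polynomial.aeval_C, MvPolynomial.algebraMap_eq]
        exact sub_eq_zero.1 hz
      have hCc : (C c : MvPolynomial (Option σ) F) ≠ 0 := by simpa using hc0
      have hT00 : T0 ≠ 0 := by
        intro h0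
        rw [h0, mul_zero] at e2
        exact (mul_ne_zero hCc hz) e2
      have hκT0 : κ T0 = PowerSeries.C (ι T0) := by
        have e3 := congrArg κ e2
        have e4 := congrArg (fun q => PowerSeries.C (ι q)) e2
        simp only [map_mul, map_sub, hκC, hκh1, hψ] at e3 e4
        rw [e3] at e4
        have hne : PowerSeries.C (ι h1) ≠ 0 := by
          intro h0
          replace h0 := PowerSeries.C_injective (h0.trans (map_zero _).symm)
          exact hh10 (hιinj (by rw [h0, map_zero]))
        exact mul_left_cancel₀ hne e4
      have hdT : T0.totalDegree < ψ.totalDegree := by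
        have e5 := congrArg totalDegree e2
        rw [totalDegree_mul_of_isDomain hCc hz, totalDegree_mul_of_isDomain hh10 hT00, totalDegree_C] at e5
        have e6 := natDegree_oe_le h1
        have e7 := totalDegree_sub_C_le ψ (constantCoeff ψ)
        omega
      obtain ⟨μ, hμ⟩ := ih _ (hdT.trans_le hψN) T0 le_rfl hκT0
      refine ⟨Polynomial.C (constantCoeff ψ) + Polynomial.C c⁻¹ * (Polynomial.X - Polynomial.C (constantCoeff h)) * μ, ?_⟩
      simp only [map_add, map_mul, map_sub, Polynomial.aeval_C, Polynomial.aeval_X, ← hμ,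
        MvPolynomial.algebraMap_eq]
      rw [mul_assoc, ← hh1, ← e2, ← mul_assoc, ← map_mul, inv_mul_cancel₀ hc0]
      simp
    obtain ⟨μ, hμ⟩ := claim _ f le_rfl hκf
    obtain ⟨x, y, hxy⟩ := Polynomial.exists_eq_X_add_C_of_natDegree_le_one (hind μ h hμ)
    rw [hxy] at hμ
    simp only [map_add, map_mul, Polynomial.aeval_C, Polynomial.aeval_X, MvPolynomial.algebraMap_eq] at hμ
    have h1 : f.totalDegree ≤ e := by
      rw [hμ]
      refine (totalDegree_add _ _).trans (max_le ((totalDegree_mul _ _).trans ?_) (by simp))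
      simpa using hht
    have h2 := natDegree_oe_le f
    rw [hf.nd] at h2
    omega

end IE

open MvPolynomial
namespace IE

lemma exists_rows {K m n : Type*} [Field K] [Fintype m] [Fintype n] [DecidableEq n] (M : Matrix m n K)
    (h : LinearIndependent K M.col) : ∃ ρ : n → m, (M.submatrix ρ id).det ≠ 0 := by
  obtain ⟨κ, a, ha, hs, hl⟩ := exists_linearIndependent' K M.row
  have hr : M.rank = Fintype.card n := by
    rw [← Matrix.rank_transpose]
    exact LinearIndependent.rank_matrix (M := M.transpose) h
  rw [Matrix.rank_eq_finrank_span_row] at hr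
  have : Finite κ := Finite.of_injective a ha
  have := Fintype.ofFinite κ
  have hc : Fintype.card κ = Fintype.card n := by
    rw [← hr, ← hs, finrank_span_eq_card hl]
  let E : n ≃ κ := (Fintype.equivOfCardEq hc).symm
  refine ⟨a ∘ E, ?_⟩
  have h2 : LinearIndependent K (M.submatrix (a ∘ E) id).row := hl.comp E E.injective
  have h3 := (Matrix.linearIndependent_rows_iff_isUnit.1 h2)
  exact ((Matrix.isUnit_iff_isUnit_det _).1 h3).ne_zero

lemma pl_map {A B : Type*} [CommRing A] [CommRing B] (φ : A →+* B) (a c : A) (b : PowerSeries A)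
    (p : Polynomial (Polynomial A)) :
    pl (φ a) (φ c) (PowerSeries.map φ b) (p.map (Polynomial.mapRingHom φ)) =
      PowerSeries.map φ (pl a c b p) := by
  have : (pl (φ a) (φ c) (PowerSeries.map φ b)).comp (Polynomial.mapRingHom (Polynomial.mapRingHom φ)) =
      (PowerSeries.map φ).comp (pl a c b) := by
    apply Polynomial.ringHom_ext'
    · apply Polynomial.ringHom_ext
      · intro r; simp
      · simp
    · simp
  exact DFunLike.congr_fun this p

lemma PD_map {A B : Type*} [CommRing A] [CommRing B] (φ : A →+* B) {n : ℕ}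
    {p : Polynomial (Polynomial A)} (h : PD n p) : PD n (p.map (Polynomial.mapRingHom φ)) := by
  intro i j hne
  apply h
  intro h0
  apply hne
  rw [Polynomial.coeff_map, Polynomial.coe_mapRingHom, Polynomial.coeff_map, h0, map_zero]

noncomputable def mono (A : Type*) [CommRing A] (e : ℕ) (x : Fin e × Fin e) : Polynomial (Polynomial A) :=
  Polynomial.monomial (x.2 : ℕ) (Polynomial.monomial (x.1 : ℕ) (1 : A))

lemma sum_mono_coeff {A : Type*} [CommRing A] {e : ℕ} (a : Fin e × Fin e → A) (x : Fin e × Fin e) :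
    ((∑ z, Polynomial.C (Polynomial.C (a z)) * mono A e z).coeff x.2).coeff x.1 = a x := by
  classical
  rw [Polynomial.finsetSum_coeff, Polynomial.finsetSum_coeff, Finset.sum_eq_single x]
  · simp [mono]
  · rintro ⟨b1, b2⟩ - hb
    simp only [mono, Polynomial.coeff_C_mul, Polynomial.coeff_monomial]
    split_ifs with h
    · rw [Polynomial.coeff_monomial, if_neg, mul_zero]
      intro h2
      apply hb
      ext <;> simp [h, h2]
    · simp
  · simp

lemma sum_mono_degree {A : Type*} [CommRing A] {e : ℕ} (a : Fin e × Fin e → A) :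
    (∑ z, Polynomial.C (Polynomial.C (a z)) * mono A e z).degree < e := by
  rw [← Polynomial.mem_degreeLT]
  refine Submodule.sum_mem _ fun x _ => ?_
  rw [Polynomial.mem_degreeLT]
  rw [mono, Polynomial.C_mul_monomial]
  refine (Polynomial.degree_monomial_le _ _).trans_lt ?_
  exact_mod_cast x.2.2

lemma sum_mono_PD {A : Type*} [CommRing A] {e : ℕ} (a : Fin e × Fin e → A) :
    PD (2 * e - 2) (∑ z, Polynomial.C (Polynomial.C (a z)) * mono A e z) := by
  apply (filt_PD A).sum
  intro x _
  have : PD (0 + (2 * e - 2)) (Polynomial.C (Polynomial.C (a x)) * mono A e x) := by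
    apply (filt_PD A).mul (PD_CC _)
    intro i j h
    rw [mono, Polynomial.coeff_monomial] at h
    split_ifs at h with h1
    · rw [Polynomial.coeff_monomial] at h
      split_ifs at h with h2
      · have := x.1.2; have := x.2.2; omega
      · simp at h
    · simp at h
  simpa using this

/-- the matrix of Taylor coefficients -/
noncomputable def tm {A : Type*} [CommRing A] (e : ℕ) (c : A) (b : PowerSeries A) (ρ : Fin e × Fin e → ℕ) :
    Matrix (Fin e × Fin e) (Fin e × Fin e) A :=
  Matrix.of fun x z => PowerSeries.coeff (ρ x) (pl 0 c b (mono A e z))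

lemma tm_mulVec {A : Type*} [CommRing A] (e : ℕ) (c : A) (b : PowerSeries A) (ρ : Fin e × Fin e → ℕ)
    (a : Fin e × Fin e → A) (x) : (tm e c b ρ).mulVec a x =
      PowerSeries.coeff (ρ x) (pl 0 c b (∑ z, Polynomial.C (Polynomial.C (a z)) * mono A e z)) := by
  simp only [Matrix.mulVec, dotProduct, tm, Matrix.of_apply, map_sum, map_mul, pl_CC, PowerSeries.coeff_C_mul]
  exact Finset.sum_congr rfl fun _ _ => mul_comm _ _

theorem frame {A : Type*} [CommRing A] [IsDomain A] [UniqueFactorizationMonoid A]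
    {u : Polynomial (Polynomial A)} (hu : u.Monic) (hi : Irreducible u) (hPu : PD u.natDegree u)
    {c y0 : A} {v : PowerSeries A} (hc : c ≠ 0) (hv : PowerSeries.constantCoeff v = 0)
    (h0 : pl 0 c (PowerSeries.C y0 + v) u = 0) :
    ∃ ρ : Fin u.natDegree × Fin u.natDegree → ℕ, (∀ x, ρ x ≤ 2 * u.natDegree ^ 2) ∧
      (tm u.natDegree c (PowerSeries.C y0 + v) ρ).det ≠ 0 := by
  classical
  set e := u.natDegree with he
  have he1 : 1 ≤ e := by
    by_contra h
    have := hu.natDegree_eq_zero.1 (by omega)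
    rw [this] at hi
    exact not_irreducible_one hi
  set b := PowerSeries.C y0 + v with hb
  let K := FractionRing A
  let N := 2 * e ^ 2 + 1
  let M0 : Matrix (Fin N) (Fin e × Fin e) A :=
    Matrix.of fun k z => PowerSeries.coeff (k : ℕ) (pl 0 c b (mono A e z))
  let φ := algebraMap A K
  have hφ : Function.Injective φ := IsFractionRing.injective A K
  have hlA : ∀ a : Fin e × Fin e → A, M0.mulVec a = 0 → a = 0 := by
    intro a ha
    set g := ∑ z, Polynomial.C (Polynomial.C (a z)) * mono A e z with hg
    have hX : PowerSeries.X ^ N ∣ pl 0 c b g := by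
      rw [PowerSeries.X_pow_dvd_iff]
      intro m hm
      have := congrFun ha ⟨m, hm⟩
      rw [Pi.zero_apply] at this
      refine Eq.trans ?_ this
      rw [hg]
      simp only [Matrix.mulVec, dotProduct, M0, Matrix.of_apply, map_sum, map_mul, pl_CC, PowerSeries.coeff_C_mul]
      exact Finset.sum_congr rfl fun _ _ => mul_comm _ _
    by_contra hne
    have hg0 : g ≠ 0 := by
      intro h0
      apply hne
      ext x
      rw [← sum_mono_coeff a x, ← hg, h0]
      simp
    have hnd : ¬ u ∣ g := by
      intro hd
      have h1 := Polynomial.degree_le_of_dvd hd hg0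
      have h2 := sum_mono_degree a
      rw [Polynomial.degree_eq_natDegree hu.ne_zero, ← he] at h1
      exact absurd h2 (not_lt.2 h1)
    obtain ⟨A', B', r, hr, hAB⟩ := elim hu hi hnd
    let μ := Polynomial.mapRingHom φ
    have hAB' := congrArg (Polynomial.map μ) hAB
    rw [Polynomial.map_add, Polynomial.map_mul, Polynomial.map_mul, Polynomial.map_C] at hAB'
    have huK : (u.map μ).natDegree = e := hu.natDegree_map _
    have key := bezout (ι := Unit) (k := K) (u := u.map μ) (R := g.map μ) (r := 2 * e - 2) (M := N)
      (hu.map μ) (by rw [huK]; exact PD_map φ hPu) (PD_map φ (sum_mono_PD a))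
      (by
        intro h
        apply hr
        exact Polynomial.map_injective φ hφ (by rw [Polynomial.map_zero]; exact h)) hAB'
      (fun _ => φ 0) (fun _ => φ y0) (fun _ => φ c) (fun _ => PowerSeries.map φ v)
      (fun _ _ _ => rfl) (fun _ h => hc (hφ (by rw [h, map_zero])))
      (fun _ => by 
        rw [← PowerSeries.coeff_zero_eq_constantCoeff_apply, PowerSeries.coeff_map,
          PowerSeries.coeff_zero_eq_constantCoeff_apply, hv, map_zero])
      (fun _ => by
        have := pl_map φ 0 c b u
        rw [h0, map_zero (PowerSeries.map φ), hb, map_add, PowerSeries.map_C] at this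
        exact this)
      (fun _ => by
        have := pl_map φ 0 c b g
        rw [hb, map_add, PowerSeries.map_C, ← hb] at this
        have h4 : PowerSeries.map φ (PowerSeries.X ^ N) ∣ PowerSeries.map φ (pl 0 c b g) :=
          map_dvd _ hX
        rw [map_pow, PowerSeries.map_X] at h4
        rw [← this] at h4
        exact h4)
    rw [huK] at key
    simp only [Fintype.card_unit, one_mul, N] at key
    have : e * (2 * e - 2) ≤ 2 * e ^ 2 := by
      calc e * (2 * e - 2) ≤ e * (2 * e) := Nat.mul_le_mul_left _ (by omega)
        _ = 2 * e ^ 2 := by ring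
    omega
  have hlK : LinearIndependent K (M0.map φ).col := by
    rw [← Matrix.mulVec_injective_iff, ← Matrix.coe_mulVecLin, injective_iff_map_eq_zero]
    intro a ha
    rw [Matrix.mulVecLin_apply] at ha
    obtain ⟨β, hβ⟩ := IsLocalization.exist_integer_multiples_of_finite (nonZeroDivisors A) a
    choose a' ha' using hβ
    have hβ0 : φ β ≠ 0 := fun h => nonZeroDivisors.coe_ne_zero β (hφ (by rw [h, map_zero]))
    have h1 : M0.mulVec a' = 0 := by
      ext k
      apply hφ
      have h2 := congrFun ha k
      rw [Pi.zero_apply, map_zero]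
      have h3 : φ β * ((M0.map φ).mulVec a k) = 0 := by rw [h2]; simp
      rw [← h3]
      simp only [Matrix.mulVec, dotProduct, map_sum, map_mul, Finset.mul_sum, Matrix.map_apply]
      refine Finset.sum_congr rfl fun z _ => ?_
      have h4 : φ (a' z) = φ β * a z := by
        rw [ha' z, Algebra.smul_def]
      rw [h4]; ring
    have h2 := hlA a' h1
    ext z
    have h4 : φ (a' z) = φ β * a z := by
      rw [ha' z, Algebra.smul_def]
    rw [h2, Pi.zero_apply, map_zero] at h4
    simpa [hβ0] using h4.symm
  obtain ⟨ρ, hρ⟩ := exists_rows (M0.map φ) hlK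
  refine ⟨fun x => ρ x, fun x => by have := (ρ x).2; simp only [N] at this ⊢; omega, ?_⟩
  intro hd
  apply hρ
  have : (M0.map φ).submatrix ρ id = (tm e c b fun x => ρ x).map φ := by
    ext x z; simp [tm, M0]
  rw [this, ← RingHom.mapMatrix_apply, ← RingHom.map_det, hd, map_zero]

end IE

open MvPolynomial
namespace IE

section Lm
variable {F σ A : Type*} [Field F] [CommRing A] [Algebra F A]

noncomputable def Lth (x0 : Option σ → A) (lam : σ → A) : MvPolynomial σ F →ₐ[F] Polynomial A :=
  aeval fun i => Polynomial.C (x0 (some i)) + Polynomial.C (lam i) * Polynomial.X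

noncomputable def Lm (x0 : Option σ → A) (lam : σ → A) :
    MvPolynomial (Option σ) F →ₐ[F] Polynomial (Polynomial A) :=
  aeval fun o => match o with
    | none => Polynomial.X
    | some i => Polynomial.C (Polynomial.C (x0 (some i)) + Polynomial.C (lam i) * Polynomial.X)

lemma Lm_eq (x0 : Option σ → A) (lam : σ → A) (p : MvPolynomial (Option σ) F) :
    Lm x0 lam p = (oe F σ p).map (Lth (F := F) x0 lam).toRingHom := by
  have : Lm x0 lam = (Polynomial.mapAlgHom (Lth (F := F) x0 lam)).comp
      (oe F σ : MvPolynomial (Option σ) F →ₐ[F] _) := by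
    apply MvPolynomial.algHom_ext
    rintro (_ | i) <;> simp [Lm, Lth]
  rw [this]; rfl

lemma pl_Lm (x0 : Option σ → A) (lam : σ → A) (δ : A) (v : PowerSeries A)
    (p : MvPolynomial (Option σ) F) :
    pl 0 (δ ^ 2) (PowerSeries.C (x0 none) + v) (Lm x0 lam p) = aeval (bsub x0 lam δ v) p := by
  have : (pl 0 (δ ^ 2) (PowerSeries.C (x0 none) + v)).comp (Lm (F := F) x0 lam).toRingHom =
      (aeval (R := F) (bsub x0 lam δ v)).toRingHom := by
    apply MvPolynomial.ringHom_ext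
    · intro r
      have : Lm x0 lam (C r) = algebraMap F _ r := (Lm (F := F) x0 lam).commutes r
      simp [this, Polynomial.algebraMap_apply, PowerSeries.algebraMap_apply]
    · rintro (_ | i)
      · simp [Lm, bsub]
      · simp [Lm, bsub]; ring
  exact DFunLike.congr_fun this p

lemma filt_PD_F : Filt F (PD (k := A)) where
  alg c := by
    have := (filt_PD A).alg (algebraMap F A c)
    rwa [← IsScalarTower.algebraMap_apply F A] at this
  add := (filt_PD A).add
  mul := (filt_PD A).mul
  mono := (filt_PD A).mono

lemma Lm_PD (x0 : Option σ → A) (lam : σ → A) {p : MvPolynomial (Option σ) F} {n : ℕ}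
    (h : p.totalDegree ≤ n) : PD n (Lm x0 lam p) := by
  refine (filt_PD A).mono h ?_
  apply (filt_PD_F (F := F) (A := A)).aeval
  rintro (_ | i)
  · exact PD_X
  · apply PD_C
    refine (Polynomial.natDegree_add_le _ _).trans (max_le (by simp) ?_)
    exact (Polynomial.natDegree_C_mul_le _ _).trans Polynomial.natDegree_X_le

lemma Lm_map {B : Type*} [CommRing B] [Algebra F B] (φ : A →ₐ[F] B) (x0 : Option σ → A) (lam : σ → A)
    (p : MvPolynomial (Option σ) F) :
    (Lm x0 lam p).map (Polynomial.mapRingHom φ.toRingHom) =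
      Lm (fun o => φ (x0 o)) (fun i => φ (lam i)) p := by
  have : (Polynomial.mapRingHom (Polynomial.mapRingHom φ.toRingHom)).comp (Lm (F := F) x0 lam).toRingHom =
      (Lm (F := F) (fun o => φ (x0 o)) (fun i => φ (lam i))).toRingHom := by
    apply MvPolynomial.ringHom_ext
    · intro r
      have h1 : Lm x0 lam (C r) = algebraMap F _ r := (Lm (F := F) x0 lam).commutes r
      have h2 : Lm (fun o => φ (x0 o)) (fun i => φ (lam i)) (C r) = algebraMap F _ r :=
        (Lm (F := F) (fun o => φ (x0 o)) (fun i => φ (lam i))).commutes r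
      simp [h1, h2, Polynomial.algebraMap_apply]
    · rintro (_ | i) <;> simp [Lm]
  exact DFunLike.congr_fun this p

end Lm

/-- divisibility of the Taylor determinant -/
theorem tm_det_dvd {A : Type*} [CommRing A] [Nontrivial A] {d e : ℕ} {c : A} {b : PowerSeries A}
    (ρ : Fin d × Fin d → ℕ) {U : Polynomial (Polynomial A)} (hU : U.Monic) (he : U.natDegree = e)
    (hed : e ≤ d) (hPU : PD e U) {π : A} (hπ : ∀ k, π ∣ PowerSeries.coeff k (pl 0 c b U)) :
    π ^ ((d - e) ^ 2) ∣ (tm d c b ρ).det := by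
  classical
  let sp : Fin d × Fin d → Prop := fun z => (z.1 : ℕ) < d - e ∧ e ≤ (z.2 : ℕ)
  let col : Fin d × Fin d → Polynomial (Polynomial A) := fun z =>
    if sp z then U * (Polynomial.C (Polynomial.X ^ (z.1 : ℕ)) * Polynomial.X ^ (z.2 - e : ℕ)) else mono A d z
  have hcoef : ∀ z : Fin d × Fin d, sp z → ∀ i j : ℕ, ((col z).coeff j).coeff i =
      if z.2 - e ≤ j ∧ (z.1 : ℕ) ≤ i then (U.coeff (j - (z.2 - e))).coeff (i - z.1) else 0 := by
    intro z hz i j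
    simp only [col, if_pos hz]
    rw [← mul_assoc, Polynomial.coeff_mul_X_pow']
    by_cases h1 : (z.2 : ℕ) - e ≤ j
    · rw [if_pos h1, Polynomial.coeff_mul_C, Polynomial.coeff_mul_X_pow']
      by_cases h2 : (z.1 : ℕ) ≤ i
      · rw [if_pos h2, if_pos ⟨h1, h2⟩]
      · rw [if_neg h2, if_neg (by tauto)]
    · rw [if_neg h1, if_neg (by tauto), Polynomial.coeff_zero]
  let T : Matrix (Fin d × Fin d) (Fin d × Fin d) A :=
    Matrix.of fun x z => ((col z).coeff x.2).coeff x.1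
  have hcol : ∀ z, ∑ x, Polynomial.C (Polynomial.C (T x z)) * mono A d x = col z := by
    intro z
    ext j i
    by_cases hij : i < d ∧ j < d
    · have := sum_mono_coeff (fun x => T x z) (⟨i, hij.1⟩, ⟨j, hij.2⟩)
      exact this
    · have h1 : ((∑ x, Polynomial.C (Polynomial.C (T x z)) * mono A d x).coeff j).coeff i = 0 := by
        rw [Polynomial.finsetSum_coeff, Polynomial.finsetSum_coeff]
        refine Finset.sum_eq_zero fun x _ => ?_
        simp only [mono, Polynomial.coeff_C_mul, Polynomial.coeff_monomial]
        split_ifs with h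
        · rw [Polynomial.coeff_monomial, if_neg, mul_zero]
          intro h2
          apply hij
          have := x.1.2; have := x.2.2; omega
        · simp
      rw [h1]
      by_cases hz : sp z
      · rw [hcoef z hz]
        split_ifs with h
        · by_contra hne
          have h2 := hPU _ _ (Ne.symm hne)
          have h3 := z.1.2; have h4 := z.2.2
          have h5 := hz.1; have h6 := hz.2
          by_cases hj : j < d
          · omega
          · have : U.coeff (j - (z.2 - e)) = 0 := Polynomial.coeff_eq_zero_of_natDegree_lt (by omega)
            rw [this] at hne; simp at hne
        · rfl
      · simp only [col, if_neg hz, mono, Polynomial.coeff_monomial]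
        split_ifs with h
        · rw [Polynomial.coeff_monomial, if_neg]
          intro h2
          apply hij
          have := z.1.2; have := z.2.2; omega
        · simp
  have hT : T.BlockTriangular (fun z => z.2) := by
    intro x z hxz
    replace hxz : (z.2 : ℕ) < x.2 := hxz
    simp only [T, Matrix.of_apply]
    by_cases hz : sp z
    · rw [hcoef z hz]
      have h6 := hz.2
      have : U.coeff (x.2 - (z.2 - e)) = 0 := Polynomial.coeff_eq_zero_of_natDegree_lt (by omega)
      rw [this]; simp
    · simp only [col, if_neg hz, mono, Polynomial.coeff_monomial]
      rw [if_neg (by omega)]; simp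
  have hTd : T.det = 1 := by
    rw [hT.det]
    refine Finset.prod_eq_one fun j _ => ?_
    have : T.toSquareBlock (fun z => z.2) j = 1 := by
      ext ⟨x, hx⟩ ⟨z, hz⟩
      have hxz : x.2 = z.2 := hx.trans hz.symm
      simp only [Matrix.toSquareBlock_def, Matrix.of_apply, T, Matrix.one_apply, Subtype.mk.injEq]
      by_cases hsz : sp z
      · rw [hcoef z hsz]
        have h6 := hsz.2
        have h7 : (x.2 : ℕ) - (z.2 - e) = U.natDegree := by rw [hxz]; omega
        rw [h7, hU.coeff_natDegree, Polynomial.coeff_one, hxz]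
        by_cases hxz' : x = z
        · simp [hxz']
        · rw [if_neg hxz']
          split_ifs with h1 h2
          · exfalso; apply hxz'
            ext
            · omega
            · rw [hxz]
          · rfl
          · rfl
      · simp only [col, if_neg hsz, mono, hxz, Polynomial.coeff_monomial, if_true]
        by_cases hxz' : x = z
        · simp [hxz']
        · rw [if_neg hxz', if_neg]
          intro h1
          apply hxz'
          ext
          · omega
          · rw [hxz]
    rw [this, Matrix.det_one]
  have hprod : ∀ x z, (tm d c b ρ * T) x z = PowerSeries.coeff (ρ x) (pl 0 c b (col z)) := by
    intro x z
    rw [← hcol z, ← tm_mulVec]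
    rfl
  have hdiv : ∀ x z, ∃ w, (tm d c b ρ * T) x z = (if sp z then π else 1) * w := by
    intro x z
    rw [hprod]
    by_cases hz : sp z
    · rw [if_pos hz]
      have : π ∣ PowerSeries.coeff (ρ x) (pl 0 c b (col z)) := by
        simp only [col, if_pos hz, map_mul (pl 0 c b)]
        rw [PowerSeries.coeff_mul]
        exact Finset.dvd_sum fun y _ => (hπ _).mul_right _
      exact this
    · rw [if_neg hz]; exact ⟨_, (one_mul _).symm⟩
  choose w hw using hdiv
  have h1 : (tm d c b ρ).det = (∏ z, if sp z then π else 1) * (Matrix.of w).det := by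
    rw [← Matrix.det_mul_row]
    have h0 : (tm d c b ρ).det = (tm d c b ρ * T).det := by rw [Matrix.det_mul, hTd, mul_one]
    rw [h0]
    congr 1
    ext x z
    rw [hw]; rfl
  rw [h1, Finset.prod_ite, Finset.prod_const, Finset.prod_const_one, mul_one]
  refine Dvd.dvd.mul_right (pow_dvd_pow _ ?_) _
  have h2 : Fintype.card (Fin (d - e) × Fin (d - e)) ≤ (Finset.univ.filter sp).card := by
    rw [← Finset.card_univ]
    refine Finset.card_le_card_of_injOn (fun x => (⟨x.1, by omega⟩, ⟨x.2 + e, by omega⟩)) ?_ ?_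
    · intro x _
      simp [sp]
    · rintro ⟨a, b⟩ - ⟨a', b'⟩ - h
      simp only [Prod.mk.injEq, Fin.mk.injEq] at h
      have h3 : a = a' := Fin.ext h.1
      have h4 : b = b' := Fin.ext (by omega)
      rw [h3, h4]
  simpa [sq] using h2

lemma det_totalDegree_le {F ι n : Type*} [Field F] [Fintype n] [DecidableEq n] (M : Matrix n n (MvPolynomial ι F))
    (D : ℕ) (h : ∀ x z, (M x z).totalDegree ≤ D) : M.det.totalDegree ≤ Fintype.card n * D := by
  rw [Matrix.det_apply]
  refine totalDegree_finsetSum_le fun s _ => ?_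
  refine (totalDegree_smul_le _ _).trans ?_
  refine (totalDegree_finset_prod _ _).trans ?_
  refine (Finset.sum_le_sum fun x _ => h _ _).trans ?_
  simp

lemma tm_totalDegree {F ι : Type*} [Field F] {d B γ K : ℕ} {c y0 : MvPolynomial ι F}
    {v : PowerSeries (MvPolynomial ι F)} {ρ : Fin d × Fin d → ℕ} (hρ : ∀ x, ρ x ≤ K)
    (hc : c.totalDegree ≤ B) (hy : y0.totalDegree ≤ γ)
    (hv : ∀ k, (PowerSeries.coeff k v).totalDegree ≤ B * k) :
    (tm d c (PowerSeries.C y0 + v) ρ).det.totalDegree ≤ d ^ 2 * (B * K + γ * d) := by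
  have := det_totalDegree_le (tm d c (PowerSeries.C y0 + v) ρ) (B * K + γ * d) (fun x z => by
    have hF := filt_FD (F := F) (ι := ι) B γ
    have h1 : FD B (γ * (z.1 * 0 + z.2 * 1)) (pl 0 c (PowerSeries.C y0 + v) (mono (MvPolynomial ι F) d z)) := by
      have : pl 0 c (PowerSeries.C y0 + v) (mono (MvPolynomial ι F) d z) =
          (PowerSeries.X * PowerSeries.C c) ^ (z.1 : ℕ) * (PowerSeries.C y0 + v) ^ (z.2 : ℕ) := by
        rw [mono, ← Polynomial.C_mul_X_pow_eq_monomial, ← Polynomial.C_mul_X_pow_eq_monomial]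
        simp [mul_comm]
      rw [this]
      apply hF.mul
      · apply hF.pow
        rw [mul_zero]
        exact FD.X_mul (FD.C (by omega))
      · apply hF.pow
        rw [mul_one]
        refine FD.add (FD.C hy) (fun k => (hv k).trans (by omega))
    refine (h1 _).trans (add_le_add (Nat.mul_le_mul_left _ (hρ x)) (Nat.mul_le_mul_left _ ?_))
    have := z.2.2; omega)
  simpa [sq] using this

end IE

open MvPolynomial
namespace IE

/-- retraction -/
noncomputable def ret (F σ : Type*) [Field F] : GA F σ →ₐ[F] MvPolynomial (Option σ) F :=
  aeval fun o => match o with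
    | Sum.inl _ => 0
    | Sum.inr o => X o

lemma ret_gx {F σ : Type*} [Field F] (p : MvPolynomial (Option σ) F) :
    ret F σ (aeval (gx F σ) p) = p := by
  have : (ret F σ).comp (aeval (gx F σ)) = AlgHom.id F _ := by
    apply MvPolynomial.algHom_ext
    intro o; simp [ret, gx]
  exact DFunLike.congr_fun this p

lemma prime_gx {F σ : Type*} [Field F] {u : MvPolynomial (Option σ) F} (hu : Irreducible u) :
    Prime (aeval (gx F σ) u) := by
  have h1 : Prime (C u : MvPolynomial σ (MvPolynomial (Option σ) F)) := by
    rw [MvPolynomial.prime_C_iff]; exact hu.prime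
  have h2 : sumAlgEquiv F σ (Option σ) (aeval (gx F σ) u) = C u := by
    have : (sumAlgEquiv F σ (Option σ) : _ →ₐ[F] _).comp (aeval (gx F σ)) =
        (Algebra.ofId (MvPolynomial (Option σ) F) (MvPolynomial σ (MvPolynomial (Option σ) F))).restrictScalars F := by
      apply MvPolynomial.algHom_ext
      intro o
      simp [gx, Algebra.ofId_apply, MvPolynomial.algebraMap_eq]
    exact DFunLike.congr_fun this u
  rw [← h2] at h1
  exact (MulEquiv.prime_iff (sumAlgEquiv F σ (Option σ))).1 h1

lemma totalDegree_gx {F σ : Type*} [Field F] (u : MvPolynomial (Option σ) F) :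
    u.totalDegree ≤ (aeval (gx F σ) u).totalDegree := by
  conv_lhs => rw [← ret_gx u]
  apply totalDegree_aeval_le
  rintro (i | o) <;> simp

/-- coefficients of the expansion of a factor are divisible by it -/
lemma gx_dvd_coeff {F σ : Type*} [Field F] {f u : MvPolynomial (Option σ) F} {a : F}
    (hu : Irreducible u) (hdvd : u ∣ f - C a) (hne : f - C a ≠ 0)
    {v : PowerSeries (GA F σ)} (hv0 : PowerSeries.constantCoeff v = 0) {δ : GA F σ}
    (hκ : aeval (bsub (gx F σ) (gl F σ) δ v) f = PowerSeries.C (aeval (gx F σ) f)) (k : ℕ) :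
    aeval (gx F σ) u ∣ PowerSeries.coeff k (aeval (bsub (gx F σ) (gl F σ) δ v) u) := by
  let κ : MvPolynomial (Option σ) F →ₐ[F] PowerSeries (GA F σ) := aeval (bsub (gx F σ) (gl F σ) δ v)
  let ι : MvPolynomial (Option σ) F →ₐ[F] GA F σ := aeval (gx F σ)
  have hp : Prime (ι u) := prime_gx hu
  have hfin : FiniteMultiplicity u (f - C a) := FiniteMultiplicity.of_not_isUnit hu.not_isUnit hne
  obtain ⟨w, hw, hnw⟩ := hfin.exists_eq_pow_mul_and_not_dvd
  have hm : multiplicity u (f - C a) ≠ 0 := by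
    intro h0
    rw [h0, pow_zero, one_mul] at hw
    exact hnw (hw ▸ hdvd)
  set m := multiplicity u (f - C a) with hmdef
  have hκfa : κ (f - C a) = PowerSeries.C (ι (f - C a)) := by
    rw [map_sub, map_sub, map_sub]
    congr 1
    rw [← MvPolynomial.algebraMap_eq, AlgHom.commutes, AlgHom.commutes, PowerSeries.algebraMap_apply]
  have : (Ideal.span {ι u}).IsPrime := (Ideal.span_singleton_prime hp.ne_zero).2 hp
  let D := GA F σ ⧸ Ideal.span {ι u}
  let ψ : GA F σ →+* D := Ideal.Quotient.mk _
  have hψ : ∀ x, ψ x = 0 ↔ ι u ∣ x := by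
    intro x; rw [Ideal.Quotient.eq_zero_iff_mem, Ideal.mem_span_singleton]
  have h1 : PowerSeries.map ψ (κ u) ^ m * PowerSeries.map ψ (κ w) = 0 := by
    rw [← map_pow, ← map_mul, ← map_pow, ← map_mul, ← hw, hκfa, PowerSeries.map_C]
    rw [(hψ _).2 (map_dvd ι hdvd), map_zero]
  have h2 : PowerSeries.map ψ (κ w) ≠ 0 := by
    intro h
    apply hnw
    have h3 := congrArg (PowerSeries.coeff 0) h
    rw [PowerSeries.coeff_map, map_zero, PowerSeries.coeff_zero_eq_constantCoeff_apply, 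
      kfix (f := f) v hv0 δ w, hψ] at h3
    have := map_dvd (ret F σ) h3
    rwa [ret_gx, ret_gx] at this
  have h3 : PowerSeries.map ψ (κ u) = 0 := by
    rcases mul_eq_zero.1 h1 with h | h
    · exact eq_zero_of_pow_eq_zero h
    · exact absurd h h2
  have h4 := congrArg (PowerSeries.coeff k) h3
  rw [PowerSeries.coeff_map, map_zero, hψ] at h4
  exact h4

lemma generic_irreducible {F σ : Type*} [Field F] {f : MvPolynomial (Option σ) F} {d : ℕ} (hf : Nrm f d)
    (hirr : Irreducible (oe F _ (jx F σ f - jX F σ f))) :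
    Irreducible (Lm (gx F σ) (gl F σ) f - Polynomial.C (Polynomial.C (aeval (gx F σ) f))) ∧
    (Lm (gx F σ) (gl F σ) f - Polynomial.C (Polynomial.C (aeval (gx F σ) f))).Monic ∧
    (Lm (gx F σ) (gl F σ) f - Polynomial.C (Polynomial.C (aeval (gx F σ) f))).natDegree = d := by
  have hm : (Lm (gx F σ) (gl F σ) f).Monic := by rw [Lm_eq]; exact hf.monic.map _
  have hd : (Lm (gx F σ) (gl F σ) f).natDegree = d := by rw [Lm_eq, hf.monic.natDegree_map, hf.nd]
  have hM : (Lm (gx F σ) (gl F σ) f - Polynomial.C (Polynomial.C (aeval (gx F σ) f))).Monic := by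
    apply Polynomial.Monic.sub_of_left hm
    refine Polynomial.degree_C_le.trans_lt ?_
    rw [Polynomial.degree_eq_natDegree hm.ne_zero, hd]
    exact_mod_cast hf.pos
  refine ⟨?_, hM, by rw [Polynomial.natDegree_sub_C, hd]⟩
  let χ : GA F σ →ₐ[F] GA F σ := aeval fun o => match o with
    | Sum.inl i => X (Sum.inl i) - X (Sum.inr (some i))
    | Sum.inr o => X (Sum.inr o)
  let ψ : Polynomial (GA F σ) →+* GA F σ := Polynomial.eval₂RingHom χ.toRingHom 1
  apply hM.irreducible_of_irreducible_map ψ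
  convert hirr using 1
  rw [map_sub, oe_jx, oe_jX, Polynomial.map_sub, Lm_eq, Polynomial.map_map, Polynomial.map_C]
  congr 2
  · have hc : ψ.comp (Lth (gx F σ) (gl F σ)).toRingHom =
        (rename Sum.inl : MvPolynomial σ F →ₐ[F] _).toRingHom := by
      apply MvPolynomial.ringHom_ext
      · intro r
        have : (Lth (gx F σ) (gl F σ)) (C r) = algebraMap F _ r := (Lth (F := F) (gx F σ) (gl F σ)).commutes r
        simp [this, ψ, Polynomial.algebraMap_apply, MvPolynomial.algebraMap_eq]
      · intro i
        simp [Lth, ψ, χ, gx, gl]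
    rw [hc]
  · have : χ.comp (aeval (gx F σ)) = aeval (gx F σ) := by
      apply MvPolynomial.algHom_ext
      intro o; simp [χ, gx]
    have := DFunLike.congr_fun this f
    simpa [ψ] using this

lemma not_assoc_of_monic {F σ : Type*} [Field F] {u w : MvPolynomial (Option σ) F}
    (hu : (oe F σ u).Monic) (hw : (oe F σ w).Monic) (h : Associated u w) : u = w := by
  apply (oe F σ).injective
  exact Polynomial.eq_of_monic_of_associated hu hw (h.map (oe F σ))

lemma Nrm.sub_C_monic {F σ : Type*} [Field F] {f : MvPolynomial (Option σ) F} {d : ℕ} (hf : Nrm f d) (a : F) :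
    (oe F σ (f - C a)).Monic ∧ (oe F σ (f - C a)).natDegree = d ∧ (f - C a).totalDegree ≤ d := by
  rw [map_sub, show oe F σ (C a) = Polynomial.C (C a) by rw [← oe_rename_some, rename_C]]
  refine ⟨?_, by rw [Polynomial.natDegree_sub_C, hf.nd], (totalDegree_sub_C_le _ _).trans hf.td⟩
  apply Polynomial.Monic.sub_of_left hf.monic
  refine Polynomial.degree_C_le.trans_lt ?_
  rw [Polynomial.degree_eq_natDegree hf.monic.ne_zero, hf.nd]
  exact_mod_cast hf.pos

lemma Nrm.sub_C {F σ : Type*} [Field F] {f : MvPolynomial (Option σ) F} {d : ℕ} (hf : Nrm f d) (a : F) :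
    Nrm (f - C a) d := ⟨(hf.sub_C_monic a).1, (hf.sub_C_monic a).2.1, (hf.sub_C_monic a).2.2, hf.pos⟩

/-- factors of normalised polynomials are normalised -/
lemma Nrm.factor {F σ : Type*} [Field F] {f u : MvPolynomial (Option σ) F} {d : ℕ} (hf : Nrm f d)
    (hu : (oe F σ u).Monic) (hi : Irreducible u) (h : u ∣ f) : Nrm u (oe F σ u).natDegree ∧ (oe F σ u).natDegree ≤ d := by
  obtain ⟨w, rfl⟩ := h
  have hw : (oe F σ w).Monic := by
    have := hf.monic
    rw [map_mul] at this
    exact hu.of_mul_monic_left this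
  have h1 := good_factor hu hw (by rw [hf.nd]; exact hf.td)
  have h2 := hf.nd
  rw [map_mul, hu.natDegree_mul hw] at h2
  refine ⟨⟨hu, rfl, h1.le, ?_⟩, by omega⟩
  by_contra h0
  have := hu.natDegree_eq_zero.1 (by omega)
  have h3 : u = 1 := (oe F σ).injective (by rw [this, map_one])
  rw [h3] at hi
  exact not_irreducible_one hi

lemma totalDegree_pow_eq {F τ : Type*} [Field F] (p : MvPolynomial τ F) (n : ℕ) :
    (p ^ n).totalDegree = n * p.totalDegree := by
  by_cases hp : p = 0
  · subst hp
    cases n <;> simp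
  induction n with
  | zero => simp
  | succ n ih => rw [pow_succ, totalDegree_mul_of_isDomain (pow_ne_zero _ hp) hp, ih]; ring

theorem small_sum {F σ : Type*} [Field F] {f : MvPolynomial (Option σ) F} {d : ℕ} (hf : Nrm f d)
    (P0 : Option σ → F) (hP0 : eval P0 (pderiv none f) ≠ 0)
    (hind : ∀ (g : Polynomial F) (h : MvPolynomial (Option σ) F), f = Polynomial.aeval h g →
      g.natDegree ≤ 1)
    (U : Finset (MvPolynomial (Option σ) F))
    (hU : ∀ u ∈ U, (oe F σ u).Monic ∧ Irreducible u ∧ 2 * (oe F σ u).natDegree ≤ d ∧ ∃ a, u ∣ f - C a) :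
    ∑ u ∈ U, (oe F σ u).natDegree ≤ 20 * d ^ 3 := by
  classical
  have hd1 := hf.pos
  have hfy : pderiv none f ≠ 0 := by intro h; rw [h] at hP0; simp at hP0
  obtain ⟨v, hv0, hvd, hv⟩ := branch f (gx F σ) (gl F σ) 0 1 d (by simp [gx]) (by simp [gl]) hf.td
  set δ := aeval (gx F σ) (pderiv none f) with hδ
  have hδ0 : δ ≠ 0 := by
    intro h; exact hfy (aeval_gx_inj (by rw [map_zero]; exact h))
  have hδd : δ.totalDegree ≤ d - 1 := by
    refine (totalDegree_aeval_le _ (by simp [gx]) _).trans ?_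
    refine (totalDegree_pderiv_le _ _).trans ?_
    have := hf.td; omega
  obtain ⟨hu'i, hu'm, hu'd⟩ := generic_irreducible hf (luroth hf P0 hP0 hind)
  set u' := Lm (gx F σ) (gl F σ) f - Polynomial.C (Polynomial.C (aeval (gx F σ) f)) with hu'
  have hPu' : PD d u' := (filt_PD _).sub (Lm_PD _ _ hf.td) ((filt_PD _).mono (Nat.zero_le _) (PD_CC _))
  have hfr := frame hu'm hu'i (by rw [hu'd]; exact hPu') (c := δ ^ 2) (y0 := gx F σ none) (v := v) (pow_ne_zero _ hδ0) hv0
    (by rw [hu', map_sub, pl_Lm, pl_CC, hv, sub_self])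
  rw [hu'd] at hfr
  obtain ⟨ρ, hρ, hdet⟩ := hfr
  set Δ := (tm d (δ ^ 2) (PowerSeries.C (gx F σ none) + v) ρ).det with hΔ
  have hΔd : Δ.totalDegree ≤ d ^ 2 * (2 * d * (2 * d ^ 2) + 1 * d) := by
    apply tm_totalDegree hρ
    · refine (totalDegree_pow _ _).trans ?_
      exact Nat.mul_le_mul_left _ (by omega)
    · simp [gx]
    · intro k; refine (hvd k).trans (le_of_eq (by ring))
  let ι : MvPolynomial (Option σ) F →ₐ[F] GA F σ := aeval (gx F σ)
  have hdvd : ∀ u ∈ U, ι u ^ ((d - (oe F σ u).natDegree) ^ 2) ∣ Δ := by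
    intro u hu
    obtain ⟨hm, hi, hs, a, ha⟩ := hU u hu
    obtain ⟨hn, hle⟩ := (hf.sub_C a).factor hm hi ha
    have hne : f - C a ≠ 0 := by
      intro h0
      have := (hf.sub_C a).monic
      rw [h0, map_zero] at this
      simp at this
    apply tm_det_dvd ρ (U := Lm (gx F σ) (gl F σ) u)
    · rw [Lm_eq]; exact hm.map _
    · rw [Lm_eq, hm.natDegree_map]
    · exact hle
    · exact Lm_PD _ _ hn.td
    · intro k
      rw [pl_Lm]
      exact gx_dvd_coeff hi ha hne hv0 hv k
  have hprod : (∏ u ∈ U, ι u ^ ((d - (oe F σ u).natDegree) ^ 2)) ∣ Δ := by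
    apply Finset.prod_dvd_of_isRelPrime
    · intro u hu w hw huw
      apply IsRelPrime.pow
      rw [(prime_gx (hU u hu).2.1).irreducible.isRelPrime_iff_not_dvd]
      intro h
      apply huw
      have h2 := map_dvd (ret F σ) h
      rw [ret_gx, ret_gx] at h2
      exact not_assoc_of_monic (hU u hu).1 (hU w hw).1
        (((hU u hu).2.1.dvd_irreducible_iff_associated (hU w hw).2.1).1 h2)
    · exact hdvd
  have hι0 : ∀ u ∈ U, ι u ≠ 0 := fun u hu => (prime_gx (hU u hu).2.1).ne_zero
  have hdeg : ∀ S ⊆ U, ∑ u ∈ S, (d - (oe F σ u).natDegree) ^ 2 * (oe F σ u).natDegree ≤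
      (∏ u ∈ S, ι u ^ ((d - (oe F σ u).natDegree) ^ 2)).totalDegree := by
    intro S
    induction S using Finset.induction_on with
    | empty => simp
    | insert u S hus ih =>
      intro hS
      rw [Finset.sum_insert hus, Finset.prod_insert hus, totalDegree_mul_of_isDomain]
      · refine add_le_add ?_ (ih fun x hx => hS (Finset.mem_insert_of_mem hx))
        rw [totalDegree_pow_eq]
        exact Nat.mul_le_mul_left _ ((natDegree_oe_le u).trans (totalDegree_gx u))
      · exact pow_ne_zero _ (hι0 u (hS (Finset.mem_insert_self _ _)))
      · rw [Finset.prod_ne_zero_iff]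
        exact fun x hx => pow_ne_zero _ (hι0 x (hS (Finset.mem_insert_of_mem hx)))
  obtain ⟨w, hw⟩ := hprod
  have hw0 : w ≠ 0 := by rintro rfl; exact hdet (by rw [hw, mul_zero])
  have hp0 : (∏ u ∈ U, ι u ^ ((d - (oe F σ u).natDegree) ^ 2)) ≠ 0 := by
    intro h; exact hdet (by rw [hw, h, zero_mul])
  have h1 := hdeg U subset_rfl
  have h2 := hΔd
  rw [hw, totalDegree_mul_of_isDomain hp0 hw0] at h2
  have h3 : d ^ 2 * ∑ u ∈ U, (oe F σ u).natDegree ≤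
      4 * ∑ u ∈ U, (d - (oe F σ u).natDegree) ^ 2 * (oe F σ u).natDegree := by
    rw [Finset.mul_sum, Finset.mul_sum]
    refine Finset.sum_le_sum fun u hu => ?_
    rw [← mul_assoc]
    refine Nat.mul_le_mul_right _ ?_
    have : d ≤ 2 * (d - (oe F σ u).natDegree) := by have := (hU u hu).2.2.1; omega
    calc d ^ 2 ≤ (2 * (d - (oe F σ u).natDegree)) ^ 2 := Nat.pow_le_pow_left this 2
      _ = _ := by ring
  have h4 : d ^ 2 * ∑ u ∈ U, (oe F σ u).natDegree ≤ d ^ 2 * (20 * d ^ 3) := by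
    have h5 : d ^ 2 * (2 * d * (2 * d ^ 2) + 1 * d) ≤ d ^ 2 * (5 * d ^ 3) := by
      refine Nat.mul_le_mul_left _ ?_
      have : d ≤ d ^ 3 := Nat.le_self_pow (by norm_num) d
      nlinarith
    have : d ^ 2 * (20 * d ^ 3) = 4 * (d ^ 2 * (5 * d ^ 3)) := by ring
    omega
  exact Nat.le_of_mul_le_mul_left h4 (by positivity)

end IE

open MvPolynomial
namespace IE

lemma constantCoeff_bsub {F σ A : Type*} [Field F] [CommRing A] [Algebra F A] (x0 : Option σ → A) (lam : σ → A)
    (δ : A) (v : PowerSeries A) (hv0 : PowerSeries.constantCoeff v = 0) (p : MvPolynomial (Option σ) F) :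
    PowerSeries.constantCoeff (aeval (bsub x0 lam δ v) p) = aeval x0 p := by
  have : (PowerSeries.constantCoeff (R := A)).comp
      (aeval (R := F) (bsub x0 lam δ v)).toRingHom = (aeval (R := F) x0).toRingHom := by
    apply MvPolynomial.ringHom_ext
    · intro r; simp [PowerSeries.algebraMap_apply]
    · rintro (_ | i) <;> simp [bsub, hv0]
  exact DFunLike.congr_fun this p

/-- cofactors do not vanish at smooth points -/
lemma cofactor_ne {F σ : Type*} [Field F] {f u w : MvPolynomial (Option σ) F} {a : F}
    (h : f - C a = u * w) {P : Option σ → F} (hP : eval P u = 0) (hPy : eval P (pderiv none f) ≠ 0) :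
    eval P w ≠ 0 := by
  intro hw
  apply hPy
  have : pderiv none f = pderiv none (u * w) := by rw [← h, map_sub, pderiv_C, sub_zero]
  rw [this, (pderiv none).leibniz]
  simp [hP, hw]

lemma tm_map {A B : Type*} [CommRing A] [CommRing B] (φ : A →+* B) (e : ℕ) (c : A) (b : PowerSeries A)
    (ρ : Fin e × Fin e → ℕ) :
    tm e (φ c) (PowerSeries.map φ b) ρ = (tm e c b ρ).map φ := by
  ext x z
  have h := pl_map φ 0 c b (mono A e z)
  have h2 : (mono A e z).map (Polynomial.mapRingHom φ) = mono B e z := by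
    simp [mono]
  rw [h2, map_zero] at h
  simp [tm, h]

theorem bertini {F σ : Type*} [Field F] {f u : MvPolynomial (Option σ) F} {d e : ℕ} {a : F} (hf : f.totalDegree ≤ d)
    (hu : Nrm u e) (hi : Irreducible u) (hdvd : u ∣ f - C a) {P : Option σ → F} (hP : eval P u = 0)
    (hPy : eval P (pderiv none f) ≠ 0) :
    ∃ Δ : MvPolynomial σ F, Δ ≠ 0 ∧ Δ.totalDegree ≤ 2 * e ^ 4 ∧
      ∀ l : σ → F, eval l Δ ≠ 0 → Irreducible (Lm P l u) := by
  let x0 : Option σ → MvPolynomial σ F := fun o => C (P o)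
  have hx0 : ∀ p : MvPolynomial (Option σ) F, aeval x0 p = C (eval P p) := by
    intro p
    have : (aeval (R := F) x0).toRingHom = (C : F →+* MvPolynomial σ F).comp (eval P) := by
      apply MvPolynomial.ringHom_ext
      · intro r; simp [MvPolynomial.algebraMap_eq]
      · intro i; simp [x0]
    exact DFunLike.congr_fun this p
  obtain ⟨v, hv0, hvd, hv⟩ := branch f x0 (fun i => X i) 1 0 d (by simp [x0]) (by simp) hf
  set δ := aeval x0 (pderiv none f) with hδ
  have hδ' : δ = C (eval P (pderiv none f)) := hx0 _
  have hδ0 : δ ≠ 0 := by rw [hδ']; simpa using hPy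
  obtain ⟨w, hw⟩ := hdvd
  have hwP := cofactor_ne hw hP hPy
  have hκu : aeval (bsub x0 (fun i => X i) δ v) u = 0 := by
    have h1 : aeval (bsub x0 (fun i => X i) δ v) (f - C a) = 0 := by
      have hfa : eval P f = a := by
        have := congrArg (eval P) hw
        rw [map_mul, hP, zero_mul, map_sub, eval_C, sub_eq_zero] at this
        exact this
      rw [map_sub, hv, hx0, hfa, ← MvPolynomial.algebraMap_eq, ← MvPolynomial.algebraMap_eq,
        AlgHom.commutes, PowerSeries.algebraMap_apply, sub_self]
    rw [hw, map_mul] at h1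
    rcases mul_eq_zero.1 h1 with h | h
    · exact h
    · exfalso
      have := constantCoeff_bsub x0 (fun i => X i) δ v hv0 w
      rw [h, map_zero, hx0] at this
      exact hwP (C_injective _ _ (by rw [← this, map_zero]))
  let ψ : Polynomial (MvPolynomial σ F) →+* MvPolynomial σ F :=
    Polynomial.eval₂RingHom (aeval (R := F) fun i => X i - C (P (some i))).toRingHom 1
  set u' := Lm x0 (fun i => X i) u with hu'
  have hu'm : u'.Monic := by rw [hu', Lm_eq]; exact hu.monic.map _
  have hu'd : u'.natDegree = e := by rw [hu', Lm_eq, hu.monic.natDegree_map, hu.nd]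
  have hu'i : Irreducible u' := by
    apply hu'm.irreducible_of_irreducible_map ψ
    have : u'.map ψ = oe F σ u := by
      rw [hu', Lm_eq, Polynomial.map_map]
      have hc : ψ.comp (Lth x0 (fun i => X i)).toRingHom = RingHom.id (MvPolynomial σ F) := by
        apply MvPolynomial.ringHom_ext
        · intro r
          have : (Lth x0 (fun i => X i)) (C r) = algebraMap F _ r :=
            (Lth (F := F) x0 (fun i => X i)).commutes r
          simp [this, ψ, Polynomial.algebraMap_apply, MvPolynomial.algebraMap_eq]
        · intro i
          simp [Lth, ψ, x0, MvPolynomial.algebraMap_eq]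
      rw [hc, Polynomial.map_id]
    rw [this]
    exact (MulEquiv.irreducible_iff (oe F σ)).2 hi
  have hPu' : PD e u' := Lm_PD _ _ hu.td
  have hfr := frame hu'm hu'i (by rw [hu'd]; exact hPu') (c := δ ^ 2) (y0 := x0 none) (v := v) (pow_ne_zero _ hδ0) hv0
    (by rw [hu', pl_Lm, hκu])
  rw [hu'd] at hfr
  obtain ⟨ρ, hρ, hdet⟩ := hfr
  refine ⟨_, hdet, ?_, ?_⟩
  · refine (tm_totalDegree (B := 1) (γ := 0) hρ ?_ ?_ ?_).trans (le_of_eq (by ring))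
    · rw [hδ', ← C_pow, totalDegree_C]; exact Nat.zero_le _
    · simp [x0]
    · intro k; refine (hvd k).trans (le_of_eq (by ring))
  · intro l hl
    let φ : MvPolynomial σ F →ₐ[F] F := aeval l
    have hφ : ∀ p, φ p = eval l p := fun p => by simp [φ, aeval_eq_eval]
    have hmap := Lm_map φ x0 (fun i => X i) u
    have hφx : (fun o => φ (x0 o)) = P := by ext o; simp [φ, x0]
    have hφl : (fun i => φ (X i)) = l := by ext o; simp [φ]
    rw [hφx, hφl, ← hu'] at hmap
    have htm := tm_map φ.toRingHom e (δ ^ 2) (PowerSeries.C (x0 none) + v) ρ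
    have hdet' : (tm e (φ.toRingHom (δ ^ 2)) (PowerSeries.map φ.toRingHom (PowerSeries.C (x0 none) + v)) ρ).det ≠ 0 := by
      rw [htm, ← RingHom.mapMatrix_apply, ← RingHom.map_det]
      intro h; apply hl; rw [← hφ]; exact h
    have hpl := pl_map φ.toRingHom 0 (δ ^ 2) (PowerSeries.C (x0 none) + v) u'
    rw [hmap, hu', pl_Lm, hκu, map_zero, map_zero] at hpl
    have hHm : (Lm P l u).Monic := by rw [Lm_eq]; exact hu.monic.map _
    have hHd : (Lm P l u).natDegree = e := by rw [Lm_eq, hu.monic.natDegree_map, hu.nd]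
    obtain ⟨Q, S, hQ, hS, hQi, hQ0, hQS⟩ := exists_monic_irreducible_ker _ hHm hpl
    have hHP : PD (Lm P l u).natDegree (Lm P l u) := by rw [hHd]; exact Lm_PD _ _ hu.td
    rw [hQS] at hHP
    have hQP := PD_factor hQ hS hHP
    have hsum : Q.natDegree + S.natDegree = e := by rw [← hHd, hQS, hQ.natDegree_mul hS]
    by_cases hcase : S.natDegree = 0
    · rw [hS.natDegree_eq_zero.1 hcase, mul_one] at hQS
      rw [hQS]; exact hQi
    · exfalso
      have := tm_det_dvd (d := e) (e := Q.natDegree) ρ hQ rfl (by omega) hQP (π := (0 : F)) (by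
        intro k; rw [hQ0]; simp)
      rw [zero_pow (by apply pow_ne_zero; omega), zero_dvd_iff] at this
      exact hdet' this

end IE

open MvPolynomial
namespace IE

noncomputable def mn (k : Type*) [CommRing k] (i j : ℕ) : Polynomial (Polynomial k) :=
  Polynomial.monomial j (Polynomial.monomial i (1 : k))

lemma mn_eq (k : Type*) [CommRing k] (i j : ℕ) :
    mn k i j = (Polynomial.C Polynomial.X) ^ i * Polynomial.X ^ j := by
  rw [mn, ← Polynomial.C_mul_X_pow_eq_monomial, ← Polynomial.C_mul_X_pow_eq_monomial]
  simp

lemma mn_PD (k : Type*) [CommRing k] (i j : ℕ) : PD (i + j) (mn k i j) := by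
  rw [mn_eq]
  have h1 := (filt_PD k).pow (k := i) (PD_CX (k := k))
  have h2 := (filt_PD k).pow (k := j) (PD_X (k := k))
  have := (filt_PD k).mul h1 h2
  simpa using this

section rect
variable {k : Type*} [CommRing k] {A e : ℕ}

noncomputable def rc (a : Fin A × Fin e → k) : Polynomial (Polynomial k) :=
  ∑ z, Polynomial.C (Polynomial.C (a z)) * mn k z.1 z.2

lemma rc_coeff (a : Fin A × Fin e → k) (x : Fin A × Fin e) :
    ((rc a).coeff x.2).coeff x.1 = a x := by
  classical
  rw [rc, Polynomial.finsetSum_coeff, Polynomial.finsetSum_coeff, Finset.sum_eq_single x]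
  · simp [mn]
  · rintro ⟨b1, b2⟩ - hb
    simp only [mn, Polynomial.coeff_C_mul, Polynomial.coeff_monomial]
    split_ifs with h
    · rw [Polynomial.coeff_monomial, if_neg, mul_zero]
      intro h2
      apply hb
      ext <;> simp [h, h2]
    · simp
  · simp

lemma rc_degree (a : Fin A × Fin e → k) : (rc a).degree < e := by
  rw [rc, ← Polynomial.mem_degreeLT]
  refine Submodule.sum_mem _ fun x _ => ?_
  rw [Polynomial.mem_degreeLT]
  rw [mn, Polynomial.C_mul_monomial]
  refine (Polynomial.degree_monomial_le _ _).trans_lt ?_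
  exact_mod_cast x.2.2

lemma rc_PD (a : Fin A × Fin e → k) : PD (A + e) (rc a) := by
  apply (filt_PD k).sum
  intro x _
  have : PD (0 + (A + e)) (Polynomial.C (Polynomial.C (a x)) * mn k x.1 x.2) := by
    apply (filt_PD k).mul (PD_CC _)
    exact (filt_PD k).mono (by have := x.1.2; have := x.2.2; omega) (mn_PD k _ _)
  simpa using this

lemma rc_not_dvd [Nontrivial k] {u : Polynomial (Polynomial k)} (hu : u.Monic) (he : u.natDegree = e)
    (a : Fin A × Fin e → k) (h : a ≠ 0) : ¬ u ∣ rc a := by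
  have hg0 : rc a ≠ 0 := by
    intro h0
    apply h
    ext x
    rw [← rc_coeff a x, h0]
    simp
  intro hd
  apply hu.not_dvd_of_degree_lt hg0 _ hd
  rw [Polynomial.degree_eq_natDegree hu.ne_zero, he]
  exact rc_degree a

end rect

lemma pl_C_inj {k : Type*} [Field k] (a c : k) (hc : c ≠ 0) (b : PowerSeries k) (r : Polynomial k)
    (h : pl a c b (Polynomial.C r) = 0) : r = 0 := by
  have h1 : pl a c b (Polynomial.C r) =
      ((r.comp (Polynomial.C a + Polynomial.C c * Polynomial.X) : Polynomial k) : PowerSeries k) := by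
    have : (pl a c b).comp Polynomial.C = (Polynomial.coeToPowerSeries.ringHom (R := k)).comp
        (Polynomial.compRingHom (Polynomial.C a + Polynomial.C c * Polynomial.X)) := by
      apply Polynomial.ringHom_ext
      · intro r; simp
      · simp
    exact DFunLike.congr_fun this r
  rw [h1, Polynomial.coe_eq_zero_iff, Polynomial.comp_eq_zero_iff] at h
  rcases h with h | h
  · exact h
  · have := congrArg (fun p => Polynomial.coeff p 1) h.2
    simp at this
    exact absurd this hc

lemma ps_pow_card {F : Type*} [Field F] [Fintype F] (h : PowerSeries F) :
    PowerSeries.X ^ (Fintype.card F) ∣ h ^ (Fintype.card F) - PowerSeries.C (PowerSeries.constantCoeff h) := by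
  have h1 : PowerSeries.X ∣ h - PowerSeries.C (PowerSeries.constantCoeff h) := by
    rw [PowerSeries.X_dvd_iff]; simp
  have h2 := pow_dvd_pow_of_dvd h1 (Fintype.card F)
  have h3 := map_sub (FiniteField.frobeniusAlgHom F (PowerSeries F)) h (PowerSeries.C (PowerSeries.constantCoeff h))
  simp only [FiniteField.coe_frobeniusAlgHom, Pi.pow_apply, id] at h3
  rw [h3, ← map_pow, FiniteField.pow_card] at h2
  exact h2

lemma exists_common_order {k ι : Type*} [Field k] [Finite ι] (h : ι → PowerSeries k) (hne : ∃ x, h x ≠ 0) :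
    ∃ (r : ℕ) (h' : ι → PowerSeries k), (∀ x, h x = PowerSeries.X ^ r * h' x) ∧
      ∃ x, PowerSeries.constantCoeff (h' x) ≠ 0 := by
  classical
  have := Fintype.ofFinite ι
  have hex : ∃ n, ∃ x, PowerSeries.coeff n (h x) ≠ 0 := by
    obtain ⟨x, hx⟩ := hne
    by_contra hcon
    push Not at hcon
    exact hx (PowerSeries.ext fun n => by simpa using hcon n x)
  have hmin : ∀ m < Nat.find hex, ∀ x, PowerSeries.coeff m (h x) = 0 := by
    intro m hm x
    have := Nat.find_min hex hm
    push Not at this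
    exact this x
  have hd : ∀ x, PowerSeries.X ^ (Nat.find hex) ∣ h x := fun x =>
    PowerSeries.X_pow_dvd_iff.2 fun m hm => hmin m hm x
  choose h' hh' using hd
  refine ⟨_, h', hh', ?_⟩
  obtain ⟨x, hx⟩ := Nat.find_spec hex
  refine ⟨x, ?_⟩
  rw [hh' x, PowerSeries.coeff_X_pow_mul' ] at hx
  simpa using hx

/-- nonvanishing of the auxiliary polynomial -/
lemma aux_not_dvd {F : Type*} [Field F] [Fintype F] {u : Polynomial (Polynomial F)} {e A B : ℕ}
    (hu : u.Monic) (hi : Irreducible u) (he : u.natDegree = e) (hPu : PD e u)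
    (hA : e * (A + e) < Fintype.card F)
    {s y c : F} {v : PowerSeries F} (hc : c ≠ 0) (hv : PowerSeries.constantCoeff v = 0)
    (h0 : pl s c (PowerSeries.C y + v) u = 0)
    (a : Fin A × Fin e → Fin B × Fin e → F) (ha : a ≠ 0) :
    ¬ u ∣ ∑ x : Fin A × Fin e, mn F x.1 x.2 * rc (a x) ^ (Fintype.card F) := by
  intro hdvd
  set q := Fintype.card F with hq
  set φ := pl s c (PowerSeries.C y + v) with hφ
  obtain ⟨x0, hx0⟩ : ∃ x, a x ≠ 0 := by
    by_contra h; push Not at h; exact ha (funext h)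
  have hx1 : φ (rc (a x0)) ≠ 0 := by
    intro h
    exact rc_not_dvd hu he (a x0) hx0 (dvd_of_map_eq_zero hu hi φ (pl_C_inj s c hc _) h0 h)
  obtain ⟨r, h', hh', x1, hx1⟩ := exists_common_order (fun x => φ (rc (a x))) ⟨x0, hx1⟩
  have hz : φ (∑ x : Fin A × Fin e, mn F x.1 x.2 * rc (a x) ^ q) = 0 := by
    obtain ⟨w, hw⟩ := hdvd
    rw [hw, map_mul, h0, zero_mul]
  rw [map_sum] at hz
  have hz2 : PowerSeries.X ^ (r * q) * ∑ x : Fin A × Fin e, φ (mn F x.1 x.2) * h' x ^ q = 0 := by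
    rw [← hz, Finset.mul_sum]
    refine Finset.sum_congr rfl fun x _ => ?_
    rw [map_mul, map_pow, hh' x, mul_pow, ← pow_mul]
    ring
  have hz3 : ∑ x : Fin A × Fin e, φ (mn F x.1 x.2) * h' x ^ q = 0 := by
    rcases mul_eq_zero.1 hz2 with h | h
    · exact absurd h (pow_ne_zero _ PowerSeries.X_ne_zero)
    · exact h
  set b : Fin A × Fin e → F := fun x => PowerSeries.constantCoeff (h' x) with hb
  have hb0 : b ≠ 0 := fun h => hx1 (congrFun h x1)
  have hg : PowerSeries.X ^ q ∣ φ (rc b) := by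
    have : φ (rc b) = -∑ x : Fin A × Fin e, φ (mn F x.1 x.2) * (h' x ^ q - PowerSeries.C (b x)) := by
      simp only [mul_sub, Finset.sum_sub_distrib]
      rw [hz3, zero_sub, neg_neg, rc, map_sum]
      refine Finset.sum_congr rfl fun x _ => ?_
      rw [map_mul, hφ, pl_CC, mul_comm]
    rw [this, dvd_neg]
    exact Finset.dvd_sum fun x _ => (ps_pow_card (h' x)).mul_left _
  obtain ⟨A', B', r0, hr0, hAB⟩ := elim hu hi (rc_not_dvd hu he b hb0)
  have key := bezout (ι := Unit) (R := rc b) (M := q) hu (by rw [he]; exact hPu) (rc_PD b) hr0 hAB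
    (fun _ => s) (fun _ => y) (fun _ => c) (fun _ => v) (fun _ _ _ => rfl) (fun _ => hc) (fun _ => hv)
    (fun _ => h0) (fun _ => hg)
  rw [he] at key
  simp at key
  omega

end IE

open MvPolynomial
namespace IE

noncomputable def evp {F : Type*} [Field F] (P : F × F) : MvPolynomial (Fin 2) F →+* F :=
  (aeval ![P.1, P.2] : MvPolynomial (Fin 2) F →ₐ[F] F).toRingHom

@[simp] lemma evp_C {F : Type*} [Field F] (P : F × F) (c : F) : evp P (C c) = c := by simp [evp]
@[simp] lemma evp_X0 {F : Type*} [Field F] (P : F × F) : evp P (X 0) = P.1 := by simp [evp]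
@[simp] lemma evp_X1 {F : Type*} [Field F] (P : F × F) : evp P (X 1) = P.2 := by simp [evp]

noncomputable def tau (F : Type*) [Field F] : MvPolynomial (Fin 2) F →ₐ[F] Polynomial (Polynomial F) :=
  aeval ![Polynomial.C Polynomial.X, Polynomial.X]

lemma tau_PD {F : Type*} [Field F] {n : ℕ} (p : MvPolynomial (Fin 2) F) (h : p.totalDegree ≤ n) :
    PD n (tau F p) := by
  refine (filt_PD F).mono h ((filt_PD F).aeval _ (fun i => ?_) p)
  fin_cases i
  · exact PD_CX
  · exact PD_X

theorem stepanov {F : Type*} [Field F] [Fintype F] {u : Polynomial (Polynomial F)} {e A B M d : ℕ}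
    (hu : u.Monic) (hi : Irreducible u) (he : u.natDegree = e) (he1 : 1 ≤ e) (hPu : PD e u)
    (δ : MvPolynomial (Fin 2) F) (hδ : δ.totalDegree ≤ d)
    (v : PowerSeries (MvPolynomial (Fin 2) F)) (hv0 : PowerSeries.constantCoeff v = 0)
    (hv : ∀ k, (PowerSeries.coeff k v).totalDegree ≤ 2 * d * k)
    (Pts : Finset (F × F)) (hP1 : ∀ P ∈ Pts, evp P δ ≠ 0)
    (hP2 : ∀ P ∈ Pts, pl P.1 (evp P δ ^ 2) (PowerSeries.C P.2 + PowerSeries.map (evp P) v) u = 0)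
    (hM : M ≤ Fintype.card F) (hA : e * (A + e) < Fintype.card F)
    (hnum : M * (A + B + 2 * e + 2 * d * M + 1) < e * A * B) :
    Pts.card * M ≤ e * (A + e + Fintype.card F * (B + e)) := by
  classical
  set q := Fintype.card F with hq
  rcases Pts.eq_empty_or_nonempty with hE | ⟨P0, hP0⟩
  · simp [hE]
  set D := A + B + 2 * e + 2 * d * M with hD
  let φ := pl (X 0 : MvPolynomial (Fin 2) F) (δ^2) (PowerSeries.C (X 1) + v)
  let G : ℕ → (Fin A × Fin e) → MvPolynomial (Fin 2) F := fun k x =>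
    PowerSeries.coeff k (φ (mn _ x.1 x.2))
  let W : ℕ → (((Fin A × Fin e) × (Fin B × Fin e)) → F) →ₗ[F] MvPolynomial (Fin 2) F := fun k =>
    Fintype.linearCombination F (fun p : (Fin A × Fin e) × (Fin B × Fin e) =>
      G k p.1 * (X 0 ^ (p.2.1 : ℕ) * X 1 ^ (p.2.2 : ℕ)))
  have hGd : ∀ k < M, ∀ x, (G k x).totalDegree ≤ A + e + 2 * d * M := by
    intro k hk x
    have FF := filt_FD (F := F) (ι := Fin 2) (2 * d) 1
    have h1 : FD (2 * d) (1 * 1) (PowerSeries.C (X 0 : MvPolynomial (Fin 2) F) +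
        PowerSeries.C (δ ^ 2) * PowerSeries.X) := by
      intro k
      rw [map_add, PowerSeries.coeff_C, PowerSeries.coeff_C_mul, PowerSeries.coeff_X]
      refine (totalDegree_add _ _).trans (max_le ?_ ?_)
      · split_ifs <;> simp
      · split_ifs with h
        · subst h
          rw [mul_one]
          refine (totalDegree_pow _ _).trans ?_
          omega
        · simp
    have h2 : FD (2 * d) (1 * 1) (PowerSeries.C (X 1 : MvPolynomial (Fin 2) F) + v) := by
      intro k
      rw [map_add, PowerSeries.coeff_C]
      refine (totalDegree_add _ _).trans (max_le ?_ ?_)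
      · split_ifs <;> simp
      · exact (hv k).trans (by omega)
    have h3 := FF.mul (FF.pow (k := x.1) h1) (FF.pow (k := x.2) h2)
    have h4 : φ (mn _ x.1 x.2) = (PowerSeries.C (X 0 : MvPolynomial (Fin 2) F) +
        PowerSeries.C (δ ^ 2) * PowerSeries.X) ^ (x.1 : ℕ) * (PowerSeries.C (X 1 : MvPolynomial (Fin 2) F) + v) ^ (x.2 : ℕ) := by
      simp [mn_eq, φ]
    have h5 := h3 k
    rw [← h4] at h5
    refine h5.trans ?_
    have := x.1.2
    have := x.2.2
    have := Nat.mul_le_mul_left (2 * d) hk.le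
    omega
  have hWd : ∀ k < M, ∀ c, (W k c).totalDegree ≤ D := by
    intro k hk c
    rw [show W k c = _ from Fintype.linearCombination_apply F _ c]
    refine totalDegree_finsetSum_le fun p _ => ?_
    refine (totalDegree_smul_le _ _).trans ?_
    refine (totalDegree_mul _ _).trans ?_
    have h1 := hGd k hk p.1
    have h2 : (X 0 ^ (p.2.1 : ℕ) * X 1 ^ (p.2.2 : ℕ) : MvPolynomial (Fin 2) F).totalDegree ≤ B + e := by
      refine (totalDegree_mul _ _).trans ?_
      rw [totalDegree_X_pow, totalDegree_X_pow]
      have := p.2.1.2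
      have := p.2.2.2
      omega
    omega
  let L : (((Fin A × Fin e) × (Fin B × Fin e)) → F) →ₗ[F] (Fin M × idx e D → F) :=
    LinearMap.pi fun kx => (Polynomial.lcoeff F (kx.2.2 : ℕ)) ∘ₗ
      ((Polynomial.lcoeff (Polynomial F) (kx.2.1 : ℕ)).restrictScalars F) ∘ₗ
      ((Polynomial.modByMonicHom u).restrictScalars F) ∘ₗ (tau F).toLinearMap ∘ₗ (W kx.1)
  have hcard : Fintype.card (idx e D) ≤ e * (D + 1) := by
    simp only [idx, Fintype.card_sigma, Fintype.card_fin]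
    refine (Finset.sum_le_sum (g := fun _ => D + 1) fun i _ => by omega).trans ?_
    simp
  have hker : LinearMap.ker L ≠ ⊥ := by
    apply LinearMap.ker_ne_bot_of_finrank_lt
    simp only [Module.finrank_fintype_fun_eq_card, Fintype.card_prod, Fintype.card_fin]
    calc M * Fintype.card (idx e D) ≤ M * (e * (D + 1)) := Nat.mul_le_mul_left _ hcard
      _ = e * (M * (D + 1)) := by ring
      _ < e * (e * A * B) := Nat.mul_lt_mul_of_pos_left hnum he1
      _ = A * e * (B * e) := by ring
  obtain ⟨c, hcL, hc0⟩ := (Submodule.ne_bot_iff _).1 hker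
  let a : Fin A × Fin e → Fin B × Fin e → F := fun x z => c (x, z)
  have ha : a ≠ 0 := by
    intro h
    apply hc0
    ext p
    exact congrFun (congrFun h p.1) p.2
  have hdvd : ∀ k < M, u ∣ tau F (W k c) := by
    intro k hk
    rw [← Polynomial.modByMonic_eq_zero_iff_dvd hu]
    have hmem : tau F (W k c) %ₘ u ∈ VN F e D := by
      refine ⟨?_, PD_modByMonic hu (by rw [he]; exact hPu) (tau_PD _ (hWd k hk c))⟩
      have h7 : (e : WithBot ℕ) = u.degree := by
        rw [Polynomial.degree_eq_natDegree hu.ne_zero, he]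
      rw [h7]
      exact Polynomial.degree_modByMonic_lt _ hu
    have : (⟨_, hmem⟩ : VN F e D) = 0 := by
      apply coefs_inj F e D
      rw [map_zero]
      ext x
      exact congrFun (LinearMap.mem_ker.1 hcL) (⟨k, hk⟩, x)
    exact congrArg Subtype.val this
  let ψ : F × F → Polynomial (Polynomial F) →+* PowerSeries F := fun P =>
    pl P.1 (evp P δ ^ 2) (PowerSeries.C P.2 + PowerSeries.map (evp P) v)
  have hcv : ∀ P : F × F, PowerSeries.constantCoeff (PowerSeries.map (evp P) v) = 0 := by
    intro P
    rw [← PowerSeries.coeff_zero_eq_constantCoeff_apply, PowerSeries.coeff_map,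
      PowerSeries.coeff_zero_eq_constantCoeff_apply, hv0, map_zero]
  have hev : ∀ P ∈ Pts, ∀ k < M, evp P (W k c) = 0 := by
    intro P hP k hk
    obtain ⟨w, hw⟩ := hdvd k hk
    have h1 : ((PowerSeries.constantCoeff.comp (ψ P)).comp (tau F).toRingHom) = evp P := by
      apply MvPolynomial.ringHom_ext
      · intro r
        simp [ψ, tau, Polynomial.algebraMap_apply]
      · intro i
        fin_cases i <;> simp [ψ, tau, hcv]
    rw [← h1]
    change PowerSeries.constantCoeff (ψ P (tau F (W k c))) = 0
    rw [hw, map_mul, hP2 P hP, zero_mul, map_zero]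
  have hR : ∀ P ∈ Pts, PowerSeries.X ^ M ∣ ψ P (∑ x : Fin A × Fin e, mn F x.1 x.2 * rc (a x) ^ q) := by
    intro P hP
    have hm : ∀ x : Fin A × Fin e, ψ P (mn F x.1 x.2) = PowerSeries.map (evp P) (φ (mn _ x.1 x.2)) := by
      intro x
      simp [mn_eq, ψ, φ]
    have hr : ∀ x, PowerSeries.constantCoeff (ψ P (rc (a x))) = ∑ z : Fin B × Fin e, c (x, z) * (P.1 ^ (z.1 : ℕ) * P.2 ^ (z.2 : ℕ)) := by
      intro x
      simp [rc, mn_eq, ψ, hcv, a]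
    have h1 : PowerSeries.X ^ M ∣ ∑ x : Fin A × Fin e, ψ P (mn F x.1 x.2) * PowerSeries.C (PowerSeries.constantCoeff (ψ P (rc (a x)))) := by
      rw [PowerSeries.X_pow_dvd_iff]
      intro k hk
      rw [← hev P hP k hk, map_sum, show W k c = _ from Fintype.linearCombination_apply F _ c, map_sum,
        Fintype.sum_prod_type (fun p : (Fin A × Fin e) × (Fin B × Fin e) => _)]
      refine Finset.sum_congr rfl fun x _ => ?_
      rw [PowerSeries.coeff_mul_C, hm, PowerSeries.coeff_map, hr, Finset.mul_sum]
      refine Finset.sum_congr rfl fun z _ => ?_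
      rw [MvPolynomial.smul_eq_C_mul]
      simp [G]
      ring
    have h2 : PowerSeries.X ^ M ∣ ∑ x : Fin A × Fin e, ψ P (mn F x.1 x.2) * (ψ P (rc (a x)) ^ q - PowerSeries.C (PowerSeries.constantCoeff (ψ P (rc (a x))))) := by
      refine Finset.dvd_sum fun x _ => Dvd.dvd.mul_left ?_ _
      exact (pow_dvd_pow _ hM).trans (ps_pow_card _)
    have h3 := dvd_add h1 h2
    rw [← Finset.sum_add_distrib] at h3
    convert h3 using 1
    rw [map_sum]
    refine Finset.sum_congr rfl fun x _ => ?_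
    rw [map_mul, map_pow]
    ring
  have hnd := aux_not_dvd hu hi he hPu hA (pow_ne_zero 2 (hP1 P0 hP0)) (hcv P0) (hP2 P0 hP0) a ha
  obtain ⟨A', B', r0, hr0, hAB⟩ := elim hu hi hnd
  have hPR : PD (A + e + q * (B + e)) (∑ x : Fin A × Fin e, mn F x.1 x.2 * rc (a x) ^ q) := by
    apply (filt_PD F).sum
    intro x _
    apply (filt_PD F).mul
    · exact (filt_PD F).mono (by have := x.1.2; have := x.2.2; omega) (mn_PD F _ _)
    · exact (filt_PD F).pow (rc_PD _) q
  have key := bezout (ι := Pts) (M := M) hu (by rw [he]; exact hPu) hPR hr0 hAB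
    (fun P => P.1.1) (fun P => P.1.2) (fun P => evp P.1 δ ^ 2) (fun P => PowerSeries.map (evp P.1) v)
    (fun P Q h => Subtype.ext h) (fun P => pow_ne_zero 2 (hP1 _ P.2)) (fun P => hcv _)
    (fun P => hP2 _ P.2) (fun P => hR _ P.2)
  rw [he] at key
  simpa using key

end IE

open MvPolynomial
namespace IE

def pt {F σ : Type*} [Field F] (x0 : Option σ → F) (l : σ → F) (P : F × F) : Option σ → F
  | none => P.2
  | some i => x0 (some i) + l i * P.1

theorem curve {F σ : Type*} [Field F] [Fintype F] {f u : MvPolynomial (Option σ) F} {d e A B M : ℕ} {a : F}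
    (hf : f.totalDegree ≤ d) (hu : Nrm u e) (hdvd : u ∣ f - C a) (x0 : Option σ → F) (l : σ → F)
    (hi : Irreducible (Lm x0 l u)) (Pts : Finset (F × F))
    (hP : ∀ P ∈ Pts, eval (pt x0 l P) u = 0 ∧ eval (pt x0 l P) (pderiv none f) ≠ 0)
    (hM : M ≤ Fintype.card F) (hA : e * (A + e) < Fintype.card F)
    (hnum : M * (A + B + 2 * e + 2 * d * M + 1) < e * A * B) :
    Pts.card * M ≤ e * (A + e + Fintype.card F * (B + e)) := by
  let X0 : Option σ → MvPolynomial (Fin 2) F := fun o => match o with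
    | none => X 1
    | some i => C (x0 (some i)) + C (l i) * X 0
  have hX0 : ∀ o, (X0 o).totalDegree ≤ 1 := by
    rintro (_ | i)
    · simp [X0]
    · refine (totalDegree_add _ _).trans (max_le (by simp) ?_)
      refine (totalDegree_mul _ _).trans (by simp)
  obtain ⟨v, hv0, hvd, hv⟩ := branch f X0 (fun i => C (l i)) 0 1 d hX0 (by simp) hf
  set δ := aeval X0 (pderiv none f) with hδ
  have hevp : ∀ (P : F × F) (p : MvPolynomial (Option σ) F), evp P (aeval X0 p) = eval (pt x0 l P) p := by
    intro P p
    have : (evp P).comp (aeval (R := F) X0).toRingHom = eval (pt x0 l P) := by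
      apply MvPolynomial.ringHom_ext
      · intro r; simp [MvPolynomial.algebraMap_eq]
      · rintro (_ | i) <;> simp [X0, pt]
    exact DFunLike.congr_fun this p
  have hpl : ∀ (P : F × F) (p : MvPolynomial (Option σ) F),
      pl P.1 (evp P δ ^ 2) (PowerSeries.C P.2 + PowerSeries.map (evp P) v) (Lm x0 l p) =
        PowerSeries.map (evp P) (aeval (bsub X0 (fun i => C (l i)) δ v) p) := by
    intro P p
    have : (pl P.1 (evp P δ ^ 2) (PowerSeries.C P.2 + PowerSeries.map (evp P) v)).comp
        (Lm (F := F) x0 l).toRingHom = (PowerSeries.map (evp P)).comp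
          (aeval (R := F) (bsub X0 (fun i => C (l i)) δ v)).toRingHom := by
      apply MvPolynomial.ringHom_ext
      · intro r
        have : Lm x0 l (C r) = algebraMap F _ r := (Lm (F := F) x0 l).commutes r
        simp [this, Polynomial.algebraMap_apply, PowerSeries.algebraMap_apply, MvPolynomial.algebraMap_eq]
      · rintro (_ | i)
        · simp [Lm, bsub, X0]
        · simp [Lm, bsub, X0]; ring
    exact DFunLike.congr_fun this p
  obtain ⟨w, hw⟩ := hdvd
  have hdd : δ.totalDegree ≤ d := by
    refine (totalDegree_aeval_le X0 hX0 _).trans ?_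
    refine (totalDegree_pderiv_le _ _).trans (by omega)
  refine stepanov (u := Lm x0 l u) (δ := δ) (v := v) (d := d) ?_ hi ?_ hu.pos (Lm_PD _ _ hu.td) hdd hv0 ?_ Pts ?_ ?_ hM hA hnum
  · rw [Lm_eq]; exact hu.monic.map _
  · rw [Lm_eq, hu.monic.natDegree_map, hu.nd]
  · intro k; refine (hvd k).trans (le_of_eq (by ring))
  · intro P h; rw [hδ, hevp]; exact (hP P h).2
  · intro P h
    obtain ⟨hPu, hPy⟩ := hP P h
    have hwP := cofactor_ne hw hPu hPy
    rw [hpl]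
    have h1 : PowerSeries.map (evp P) (aeval (bsub X0 (fun i => C (l i)) δ v) (f - C a)) = 0 := by
      have hfa : eval (pt x0 l P) f = a := by
        have := congrArg (eval (pt x0 l P)) hw
        rw [map_mul, hPu, zero_mul, map_sub, eval_C, sub_eq_zero] at this
        exact this
      rw [map_sub, hv, map_sub, PowerSeries.map_C, hevp, hfa, aeval_C, PowerSeries.algebraMap_apply]
      simp [MvPolynomial.algebraMap_eq]
    rw [hw, map_mul, map_mul] at h1
    rcases mul_eq_zero.1 h1 with h | h
    · exact h
    · exfalso
      have h2 := constantCoeff_bsub X0 (fun i => C (l i)) δ v hv0 w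
      apply hwP
      rw [← hevp, ← h2, ← PowerSeries.coeff_zero_eq_constantCoeff_apply, ← PowerSeries.coeff_map, h, map_zero]

lemma numerics {q d e M : ℕ} (hq : 256 * d ^ 4 ≤ q) (he : 1 ≤ e) (hed : e ≤ d) (hM : M = Nat.sqrt q) :
    ∃ A B : ℕ, e * (A + e) < q ∧ M * (A + B + 2 * e + 2 * d * M + 1) < e * A * B ∧
      e * (A + e + q * (B + e)) ≤ q * M + 43 * d ^ 2 * q := by
  have hd : 1 ≤ d := he.trans hed
  have hM2 : M * M ≤ q := by rw [hM]; exact Nat.sqrt_le q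
  have hM16 : 16 ≤ M := by
    rw [hM, Nat.le_sqrt]
    have : 1 ≤ d ^ 4 := Nat.one_le_pow _ _ hd
    omega
  have h16 : 16 * M ≤ q := (Nat.mul_le_mul_right M hM16).trans hM2
  set D := d ^ 2 with hD
  have hdD : d ≤ D := by rw [hD]; nlinarith
  have hD1 : 1 ≤ D := hd.trans hdD
  have hee : e * e ≤ D := by rw [hD]; nlinarith
  have hde : d * e ≤ D := by rw [hD]; nlinarith
  have hDq : 256 * D ≤ q := by
    have : D ≤ d ^ 4 := by rw [hD]; exact Nat.pow_le_pow_right hd (by norm_num)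
    omega
  have hA1 : e * (q / (2 * e)) * 2 ≤ q := by
    have := Nat.mul_div_le q (2 * e); linarith
  have hA2 : q < 2 * (e * (q / (2 * e))) + 2 * e := by
    have := Nat.lt_mul_div_succ q (show 0 < 2 * e by omega)
    linarith
  have hB1 : e * ((M + 40 * D) / e) ≤ M + 40 * D := Nat.mul_div_le _ e
  have hB2 : M + 40 * D < e * ((M + 40 * D) / e + 1) := Nat.lt_mul_div_succ _ he
  refine ⟨q / (2 * e), (M + 40 * D) / e + 1, ?_, ?_, ?_⟩
  · rw [mul_add]; omega
  · generalize q / (2 * e) = A at *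
    generalize (M + 40 * D) / e = B at *
    obtain ⟨E, hE⟩ : ∃ E, E = e * A := ⟨_, rfl⟩
    obtain ⟨H, hH⟩ : ∃ H, H = e * (B + 1) := ⟨_, rfl⟩
    have hH2 : H ≤ M + 40 * D + e := by rw [hH, mul_add]; omega
    rw [← hE] at hA1 hA2
    rw [← hH] at hB2
    have h1 : M * E + 40 * (D * E) ≤ E * H := by
      calc M * E + 40 * (D * E) = E * (M + 40 * D) := by ring
        _ ≤ E * H := Nat.mul_le_mul_left _ hB2.le
    have h2 : D * q ≤ 4 * (D * E) := by
      have : q ≤ 4 * E := by omega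
      calc D * q ≤ D * (4 * E) := Nat.mul_le_mul_left _ this
        _ = _ := by ring
    have h3 : M * H ≤ q + 41 * (D * M) := by
      calc M * H ≤ M * (M + 40 * D + D) := Nat.mul_le_mul_left _ (by omega)
        _ = M * M + 41 * (D * M) := by ring
        _ ≤ _ := by omega
    have h4 : 16 * (D * M) ≤ D * q := by
      calc 16 * (D * M) = D * (16 * M) := by ring
        _ ≤ _ := Nat.mul_le_mul_left _ h16
    have h5 : e * e * M ≤ D * M := Nat.mul_le_mul_right _ hee
    have h6 : d * e * (M * M) ≤ D * q := Nat.mul_le_mul hde hM2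
    have h7 : e * M ≤ D * M := Nat.mul_le_mul_right _ (hed.trans hdD)
    have h8 : q ≤ D * q := Nat.le_mul_of_pos_left _ hD1
    have h9 : 0 < D * q := Nat.mul_pos hD1 (by omega)
    have : e * (M * (A + (B + 1) + 2 * e + 2 * d * M + 1)) < e * (e * A * (B + 1)) := by
      calc e * (M * (A + (B + 1) + 2 * e + 2 * d * M + 1)) =
          M * E + M * H + 2 * (e * e * M) + 2 * (d * e * (M * M)) + e * M := by rw [hE, hH]; ring
        _ < E * H := by omega
        _ = _ := by rw [hE, hH]; ring
    exact lt_of_mul_lt_mul_left this (Nat.zero_le _)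
  · generalize q / (2 * e) = A at *
    generalize (M + 40 * D) / e = B at *
    have h8 : q ≤ D * q := Nat.le_mul_of_pos_left _ hD1
    calc e * (A + e + q * (B + 1 + e)) = e * A + e * e + q * (e * B) + q * e + q * (e * e) := by ring
      _ ≤ e * A + D + q * (M + 40 * D) + q * D + q * D := by gcongr; omega
      _ = (e * A + D) + q * M + 42 * D * q := by ring
      _ ≤ q * M + 43 * D * q := by nlinarith

theorem curve' {F σ : Type*} [Field F] [Fintype F] {f u : MvPolynomial (Option σ) F} {d e : ℕ} {a : F}
    (hf : f.totalDegree ≤ d) (hu : Nrm u e) (hed : e ≤ d) (hdvd : u ∣ f - C a) (x0 : Option σ → F) (l : σ → F)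
    (hi : Irreducible (Lm x0 l u)) (hq : 256 * d ^ 4 ≤ Fintype.card F) (Pts : Finset (F × F))
    (hP : ∀ P ∈ Pts, eval (pt x0 l P) u = 0 ∧ eval (pt x0 l P) (pderiv none f) ≠ 0) :
    Pts.card * Nat.sqrt (Fintype.card F) ≤
      Fintype.card F * Nat.sqrt (Fintype.card F) + 43 * d ^ 2 * Fintype.card F := by
  obtain ⟨A, B, h1, h2, h3⟩ := numerics hq hu.pos hed rfl
  exact (curve hf hu hdvd x0 l hi Pts hP (Nat.sqrt_le_self _) h1 h2).trans h3

end IE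

open MvPolynomial
namespace IE

lemma variance {F V : Type*} [Field F] [Fintype F] [AddCommGroup V] [Module F V] [Fintype V]
    (g : V → ℝ) (hg : ∑ z, g z = 0) :
    ∑ z : V, ∑ l : V, (∑ s : F, g (z + s • l)) ^ 2 =
      Fintype.card F * Fintype.card V * ∑ z, g z ^ 2 := by
  classical
  have h1 : ∀ s s' : F, ∑ z : V, ∑ l : V, g (z + s • l) * g (z + s' • l) =
      if s = s' then Fintype.card V * ∑ z, g z ^ 2 else 0 := by
    intro s s'
    have h2 : ∑ z : V, ∑ l : V, g (z + s • l) * g (z + s' • l) =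
        ∑ l : V, ∑ z : V, g z * g (z + (s' - s) • l) := by
      rw [Finset.sum_comm]
      refine Finset.sum_congr rfl fun l _ => ?_
      refine Fintype.sum_equiv (Equiv.addRight (s • l)) _ _ fun z => ?_
      simp only [Equiv.coe_addRight, sub_smul]
      congr 2
      abel
    rw [h2]
    split_ifs with h
    · subst h
      simp [pow_two]
    · rw [Finset.sum_comm]
      have hne : s' - s ≠ 0 := sub_ne_zero.2 (Ne.symm h)
      apply Finset.sum_eq_zero
      intro z _
      rw [← Finset.mul_sum]
      have : ∑ l : V, g (z + (s' - s) • l) = ∑ w, g w :=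
        Fintype.sum_equiv ((MulAction.toPerm (Units.mk0 _ hne)).trans (Equiv.addLeft z)) _ _ fun l => by
          simp [Units.smul_def]
      rw [this, hg, mul_zero]
  have h3 : ∑ z : V, ∑ l : V, (∑ s : F, g (z + s • l)) ^ 2 =
      ∑ s : F, ∑ s' : F, ∑ z : V, ∑ l : V, g (z + s • l) * g (z + s' • l) := by
    simp_rw [pow_two, Finset.sum_mul_sum]
    have : ∀ z : V, ∑ l : V, ∑ s : F, ∑ s' : F, g (z + s • l) * g (z + s' • l) =
        ∑ s : F, ∑ s' : F, ∑ l : V, g (z + s • l) * g (z + s' • l) := by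
      intro z
      rw [Finset.sum_comm]
      refine Finset.sum_congr rfl fun s _ => ?_
      rw [Finset.sum_comm]
    simp_rw [this]
    rw [Finset.sum_comm]
    refine Finset.sum_congr rfl fun s _ => ?_
    rw [Finset.sum_comm]
  rw [h3]
  simp_rw [h1]
  simp
  ring

/-- the abstract second moment bound -/
lemma second_moment {F V : Type*} [Field F] [Fintype F] [AddCommGroup V] [Module F V] [Fintype V] [DecidableEq V]
    (c : V → ℕ) (d : ℕ) (hd : 1 ≤ d) (hc : ∀ z, c z ≤ d) (T : ℝ) (hT0 : 0 ≤ T)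
    (G : V → Finset V) (hG : ∀ z, c z ≠ 0 → Fintype.card V ≤ 2 * (G z).card)
    (hT : ∀ z, c z ≠ 0 → ∀ l ∈ G z, ((∑ s : F, c (z + s • l) : ℕ) : ℝ) ≤ T) :
    Fintype.card F * (∑ z, c z : ℕ) ≤ (Fintype.card V : ℝ) * (T + 2 * d * Real.sqrt (Fintype.card F)) := by
  classical
  set q : ℝ := ((Fintype.card F : ℕ) : ℝ) with hq
  set Q : ℝ := ((Fintype.card V : ℕ) : ℝ) with hQ
  have hQ0 : 0 < Q := by rw [hQ]; exact_mod_cast Fintype.card_pos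
  have hq0 : 0 < q := by rw [hq]; exact_mod_cast Fintype.card_pos
  set N : ℝ := ((∑ z, c z : ℕ) : ℝ) with hN
  have hN' : N = ∑ z, (c z : ℝ) := by rw [hN]; push_cast; rfl
  set μ := N / Q with hμ
  have hμQ : μ * Q = N := div_mul_cancel₀ _ hQ0.ne'
  by_contra hcon
  push Not at hcon
  have hs : 0 ≤ Real.sqrt q := Real.sqrt_nonneg _
  have hd1 : (1 : ℝ) ≤ d := by exact_mod_cast hd
  have hgap : 2 * d * Real.sqrt q < q * μ - T := by
    have : Q * (T + 2 * d * Real.sqrt q) < Q * (q * μ) := by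
      calc _ < q * N := hcon
        _ = _ := by rw [← hμQ]; ring
    have := lt_of_mul_lt_mul_left this hQ0.le
    linarith
  have hgsum : ∑ z : V, ((c z : ℝ) - μ) = 0 := by
    rw [Finset.sum_sub_distrib, ← hN']
    simp [← hQ]
    linarith
  have hvar := variance (F := F) (V := V) (fun z => (c z : ℝ) - μ) hgsum
  have hsq : ∑ z : V, ((c z : ℝ) - μ) ^ 2 ≤ d * N := by
    calc ∑ z : V, ((c z : ℝ) - μ) ^ 2 = ∑ z : V, ((c z : ℝ) ^ 2 - μ ^ 2 - 2 * μ * ((c z : ℝ) - μ)) :=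
          Finset.sum_congr rfl fun z _ => by ring
      _ = ∑ z : V, (c z : ℝ) ^ 2 - Q * μ ^ 2 := by
          rw [Finset.sum_sub_distrib, ← Finset.mul_sum, hgsum, Finset.sum_sub_distrib]
          simp [hQ]
      _ ≤ ∑ z : V, (c z : ℝ) ^ 2 := by have := mul_nonneg hQ0.le (sq_nonneg μ); linarith
      _ ≤ ∑ z : V, (d : ℝ) * c z := by
          refine Finset.sum_le_sum fun z _ => ?_
          have : (c z : ℝ) ≤ d := by exact_mod_cast hc z
          have h0 : (0 : ℝ) ≤ c z := Nat.cast_nonneg _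
          nlinarith
      _ = d * N := by rw [← Finset.mul_sum, hN']
  have hsum : ∀ z l : V, ∑ s : F, ((c (z + s • l) : ℝ) - μ) = ((∑ s : F, c (z + s • l) : ℕ) : ℝ) - q * μ := by
    intro z l
    rw [Finset.sum_sub_distrib]
    simp [hq]
  have hlow : ∀ z : V, (c z : ℝ) * (Q / (2 * d) * (q * μ - T) ^ 2) ≤
      ∑ l : V, (∑ s : F, ((c (z + s • l) : ℝ) - μ)) ^ 2 := by
    intro z
    by_cases h0 : c z = 0
    · rw [h0]; simp only [Nat.cast_zero, zero_mul]; positivity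
    · have hcd : (c z : ℝ) ≤ d := by exact_mod_cast hc z
      have hGz : Q ≤ 2 * (G z).card := by rw [hQ]; exact_mod_cast hG z h0
      have hX := sq_nonneg (q * μ - T)
      calc (c z : ℝ) * (Q / (2 * d) * (q * μ - T) ^ 2) ≤ d * (Q / (2 * d) * (q * μ - T) ^ 2) := by
            gcongr
        _ = Q / 2 * (q * μ - T) ^ 2 := by field_simp
        _ ≤ (G z).card * (q * μ - T) ^ 2 := by
            apply mul_le_mul_of_nonneg_right _ hX; linarith
        _ = ∑ l ∈ G z, (q * μ - T) ^ 2 := by simp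
        _ ≤ ∑ l ∈ G z, (∑ s : F, ((c (z + s • l) : ℝ) - μ)) ^ 2 := by
            refine Finset.sum_le_sum fun l hl => ?_
            rw [hsum]
            have h1 := hT z h0 l hl
            have h2 : 0 ≤ q * μ - T := le_trans (by positivity) hgap.le
            nlinarith
        _ ≤ _ := Finset.sum_le_sum_of_subset_of_nonneg (Finset.subset_univ _) fun _ _ _ => sq_nonneg _
  have hfin : N * (Q / (2 * d) * (q * μ - T) ^ 2) ≤ q * Q * (d * N) := by
    calc N * (Q / (2 * d) * (q * μ - T) ^ 2) = ∑ z : V, (c z : ℝ) * (Q / (2 * d) * (q * μ - T) ^ 2) := by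
          rw [← Finset.sum_mul, hN']
      _ ≤ _ := Finset.sum_le_sum fun z _ => hlow z
      _ = _ := hvar
      _ ≤ _ := by gcongr
  have hNnn : 0 ≤ N := by rw [hN]; exact Nat.cast_nonneg _
  have hbig : 4 * d ^ 2 * q < (q * μ - T) ^ 2 := by
    have h1 : (2 * d * Real.sqrt q) ^ 2 = 4 * d ^ 2 * q := by
      rw [mul_pow, Real.sq_sqrt hq0.le]; ring
    rw [← h1]
    have : 0 ≤ 2 * d * Real.sqrt q := by positivity
    nlinarith
  rcases hNnn.eq_or_lt with h0 | h0
  · rw [← h0, mul_zero] at hcon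
    exact absurd hcon (not_lt.2 (by positivity))
  · have : N * (Q / (2 * d) * (4 * d ^ 2 * q)) < q * Q * (d * N) := by
      refine lt_of_lt_of_le ?_ hfin
      apply mul_lt_mul_of_pos_left _ h0
      apply mul_lt_mul_of_pos_left hbig
      positivity
    have h2 : N * (Q / (2 * d) * (4 * d ^ 2 * q)) = 2 * (q * Q * (d * N)) := by field_simp; ring
    have h3 : 0 < q * Q * (d * N) := by positivity
    linarith

end IE

open MvPolynomial
namespace IE

def jn {F σ : Type*} (z : σ → F) (y : F) : Option σ → F
  | none => y
  | some i => z i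

lemma pt_jn {F σ : Type*} [Field F] (z : σ → F) (y0 : F) (l : σ → F) (s y : F) :
    pt (jn z y0) l (s, y) = jn (z + s • l) y := by
  ext o
  rcases o with _ | i
  · rfl
  · simp [pt, jn, mul_comm]

lemma card_roots_le {F σ : Type*} [Field F] [Fintype F] [DecidableEq F] {u : MvPolynomial (Option σ) F} {e : ℕ}
    (hm : (oe F σ u).Monic) (hd : (oe F σ u).natDegree = e) (z : σ → F) (p : F → Prop) [DecidablePred p]
    (hp : ∀ y, p y → eval (jn z y) u = 0) :
    (Finset.univ.filter p).card ≤ e := by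
  classical
  set r := (oe F σ u).map (eval z) with hr
  have hrm : r.Monic := hm.map _
  have : Finset.univ.filter p ⊆ r.roots.toFinset := by
    intro y hy
    rw [Finset.mem_filter] at hy
    rw [Multiset.mem_toFinset, Polynomial.mem_roots hrm.ne_zero, Polynomial.IsRoot.def]
    rw [← hp y hy.2, ← eval_oe (jn z y) u]
    rfl
  refine (Finset.card_le_card this).trans ((Multiset.toFinset_card_le _).trans ?_)
  refine (Polynomial.card_roots' _).trans ?_
  rw [hr, hm.natDegree_map, hd]

lemma half_good {F : Type*} [Field F] [Fintype F] [DecidableEq F] {m D : ℕ} (Δ : MvPolynomial (Fin m) F)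
    (h0 : Δ ≠ 0) (hD : Δ.totalDegree ≤ D) (hq : 2 * D ≤ Fintype.card F) :
    Fintype.card (Fin m → F) ≤ 2 * (Finset.univ.filter fun l : Fin m → F => eval l Δ ≠ 0).card := by
  have h := schwartz_zippel_totalDegree h0 (Finset.univ : Finset F)
  have hq0 : 0 < Fintype.card F := Fintype.card_pos
  have hsplit := Finset.card_filter_add_card_filter_not (s := (Finset.univ : Finset (Fin m → F))) (fun l => eval l Δ = 0)
  have h2 : 2 * (Finset.univ.filter fun l : Fin m → F => eval l Δ = 0).card ≤ Fintype.card (Fin m → F) := by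
    have h3 : Fintype.piFinset (fun _ : Fin m => (Finset.univ : Finset F)) = Finset.univ := by
      ext; simp
    rw [h3, Finset.card_univ] at h
    have hc : Fintype.card (Fin m → F) = Fintype.card F ^ m := by simp
    have h4 : ((Δ.totalDegree : ℚ≥0) / Fintype.card F) ≤ 1 / 2 := by
      rw [div_le_div_iff₀ (by exact_mod_cast hq0) (by norm_num)]
      have : 2 * Δ.totalDegree ≤ Fintype.card F := by omega
      rw [one_mul, mul_comm]; exact_mod_cast this
    have h5 := h.trans h4
    rw [div_le_div_iff₀ (by positivity) (by norm_num)] at h5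
    rw [hc]
    rw [one_mul, mul_comm] at h5
    exact_mod_cast h5
  rw [Finset.card_univ] at hsplit
  change _ + (Finset.univ.filter fun l : Fin m → F => eval l Δ ≠ 0).card = _ at hsplit
  omega

noncomputable def cnt {F σ : Type*} [Field F] [Fintype F] [DecidableEq F] (f u : MvPolynomial (Option σ) F) (z : σ → F) : ℕ :=
  (Finset.univ.filter fun y => eval (jn z y) u = 0 ∧ eval (jn z y) (pderiv none f) ≠ 0).card

theorem big_factor {F : Type*} [Field F] [Fintype F] [DecidableEq F] {m : ℕ} {f u : MvPolynomial (Option (Fin m)) F}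
    {d e : ℕ} {a : F}
    (hf : f.totalDegree ≤ d) (hu : Nrm u e) (hed : e ≤ d) (hi : Irreducible u) (hdvd : u ∣ f - C a)
    (hq : 256 * d ^ 4 ≤ Fintype.card F) :
    ((∑ z, cnt f u z : ℕ) : ℝ) ≤ (Fintype.card F : ℝ) ^ m * (1 + 88 * d ^ 2 / Real.sqrt (Fintype.card F)) := by
  classical
  set M := Nat.sqrt (Fintype.card F) with hM
  have hd1 : 1 ≤ d := hu.pos.trans hed
  have hd4 : 1 ≤ d ^ 4 := Nat.one_le_pow _ _ hd1
  have hM1 : 1 ≤ M := by rw [hM, Nat.le_sqrt]; omega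
  have hex : ∀ z, cnt f u z ≠ 0 → ∃ G : Finset (Fin m → F), Fintype.card (Fin m → F) ≤ 2 * G.card ∧
      ∀ l ∈ G, ∃ y, Irreducible (Lm (jn z y) l u) := by
    intro z hz
    obtain ⟨y, hy⟩ := Finset.card_ne_zero.1 hz
    rw [Finset.mem_filter] at hy
    obtain ⟨Δ, h1, h2, h3⟩ := bertini hf hu hi hdvd hy.2.1 hy.2.2
    refine ⟨_, half_good Δ h1 h2 ?_, ?_⟩
    · have : e ^ 4 ≤ d ^ 4 := Nat.pow_le_pow_left hed 4
      omega
    · intro l hl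
      exact ⟨y, h3 l (Finset.mem_filter.1 hl).2⟩
  choose! G hG1 hG2 using hex
  have key := second_moment (F := F) (cnt f u) d hd1
    (fun z => (card_roots_le hu.monic hu.nd z _ fun y hy => hy.1).trans hed)
    (Fintype.card F + 43 * d ^ 2 * Fintype.card F / M) (by positivity) G hG1 ?_
  · have hcV : Fintype.card (Fin m → F) = Fintype.card F ^ m := by simp
    rw [hcV] at key
    push_cast at key ⊢
    set q : ℝ := ((Fintype.card F : ℕ) : ℝ) with hqq
    have hq0 : 0 < q := by rw [hqq]; exact_mod_cast Fintype.card_pos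
    have hs0 : 0 < Real.sqrt q := Real.sqrt_pos.2 hq0
    have hss : Real.sqrt q * Real.sqrt q = q := Real.mul_self_sqrt hq0.le
    have hMs : Real.sqrt q ≤ 2 * M := by
      have h1 : Real.sqrt q ≤ M + 1 := by
        rw [Real.sqrt_le_left (by positivity)]
        have := Nat.lt_succ_sqrt' (Fintype.card F)
        rw [hqq]
        exact_mod_cast this.le
      have : (1 : ℝ) ≤ M := by exact_mod_cast hM1
      linarith
    have hd1' : (1 : ℝ) ≤ d := by exact_mod_cast hd1
    have hT : q + 43 * d ^ 2 * q / M + 2 * d * Real.sqrt q ≤ q * (1 + 88 * d ^ 2 / Real.sqrt q) := by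
      have h1 : 43 * d ^ 2 * q / M ≤ 86 * d ^ 2 * Real.sqrt q := by
        rw [div_le_iff₀ (by exact_mod_cast hM1)]
        calc 43 * (d : ℝ) ^ 2 * q = 43 * d ^ 2 * Real.sqrt q * Real.sqrt q := by rw [mul_assoc _ (Real.sqrt q), hss]
          _ ≤ 43 * d ^ 2 * Real.sqrt q * (2 * M) := by gcongr
          _ = _ := by ring
      have h2 : q * (1 + 88 * d ^ 2 / Real.sqrt q) = q + 88 * d ^ 2 * Real.sqrt q := by
        have h9 : q / Real.sqrt q = Real.sqrt q := by
          rw [div_eq_iff hs0.ne', hss]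
        calc q * (1 + 88 * d ^ 2 / Real.sqrt q) = q + 88 * d ^ 2 * (q / Real.sqrt q) := by ring
          _ = _ := by rw [h9]
      have h3 : 2 * d * Real.sqrt q ≤ 2 * d ^ 2 * Real.sqrt q := by
        gcongr; nlinarith
      rw [h2]; linarith
    have h5 : q * (∑ z, (cnt f u z : ℝ)) ≤ q * (q ^ m * (1 + 88 * d ^ 2 / Real.sqrt q)) := by
      refine key.trans ?_
      calc _ ≤ q ^ m * (q * (1 + 88 * d ^ 2 / Real.sqrt q)) := by gcongr
        _ = _ := by ring
    exact le_of_mul_le_mul_left h5 hq0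
  · intro z hz l hl
    obtain ⟨y0, hirr⟩ := hG2 z hz l hl
    have hc := curve' hf hu hed hdvd (jn z y0) l hirr hq
      (Finset.univ.filter fun P : F × F => eval (pt (jn z y0) l P) u = 0 ∧ eval (pt (jn z y0) l P) (pderiv none f) ≠ 0)
      (fun P hP => (Finset.mem_filter.1 hP).2)
    have hcard : (Finset.univ.filter fun P : F × F => eval (pt (jn z y0) l P) u = 0 ∧ eval (pt (jn z y0) l P) (pderiv none f) ≠ 0).card = ∑ s : F, cnt f u (z + s • l) := by
      rw [Finset.card_filter, Fintype.sum_prod_type]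
      refine Finset.sum_congr rfl fun s _ => ?_
      rw [cnt, Finset.card_filter]
      refine Finset.sum_congr rfl fun y _ => ?_
      rw [pt_jn]
    rw [hcard, ← hM] at hc
    have hMp : (0 : ℝ) < M := by exact_mod_cast hM1
    have hc' : ((∑ s : F, cnt f u (z + s • l) : ℕ) : ℝ) * M ≤ Fintype.card F * M + 43 * d ^ 2 * Fintype.card F := by
      exact_mod_cast hc
    rw [← mul_le_mul_iff_left₀ hMp]
    refine hc'.trans (le_of_eq ?_)
    field_simp

end IE

open MvPolynomial
namespace IE

lemma exists_monic_assoc {F σ : Type*} [Field F] {v g : MvPolynomial (Option σ) F}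
    (hg : (oe F σ g).Monic) (h : v ∣ g) : ∃ u, (oe F σ u).Monic ∧ Associated u v := by
  have h1 : oe F σ v ∣ oe F σ g := map_dvd (oe F σ) h
  have h2 : IsUnit (oe F σ v).leadingCoeff := by
    obtain ⟨w, hw⟩ := h1
    have := congrArg Polynomial.leadingCoeff hw
    rw [hg.leadingCoeff, Polynomial.leadingCoeff_mul] at this
    exact IsUnit.of_mul_eq_one _ this.symm
  obtain ⟨c, hc⟩ := h2.exists_left_inv
  refine ⟨(oe F σ).symm (Polynomial.C c * oe F σ v), ?_, ?_⟩
  · rw [AlgEquiv.apply_symm_apply]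
    exact Polynomial.monic_C_mul_of_mul_leadingCoeff_eq_one hc
  · have hcu : IsUnit ((oe F σ).symm (Polynomial.C c)) :=
      ((Polynomial.isUnit_C.2 (IsUnit.of_mul_eq_one _ hc))).map (oe F σ).symm
    rw [map_mul, AlgEquiv.symm_apply_apply]
    exact (associated_unit_mul_left _ _ hcu)

lemma exists_factor_set {F σ : Type*} [Field F] {g : MvPolynomial (Option σ) F}
    (hg : (oe F σ g).Monic) : ∃ U : Finset (MvPolynomial (Option σ) F),
      (∀ u ∈ U, (oe F σ u).Monic ∧ Irreducible u ∧ u ∣ g) ∧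
      (∀ P : Option σ → F, eval P g = 0 → ∃ u ∈ U, eval P u = 0) := by
  classical
  have hg0 : g ≠ 0 := by rintro rfl; simp at hg
  have hf : ∀ v ∈ UniqueFactorizationMonoid.factors g, ∃ u, (oe F σ u).Monic ∧ Associated u v :=
    fun v hv => exists_monic_assoc hg (UniqueFactorizationMonoid.dvd_of_mem_factors hv)
  choose! ν h1 h2 using hf
  refine ⟨(UniqueFactorizationMonoid.factors g).toFinset.image ν, ?_, ?_⟩
  · intro u hu
    obtain ⟨v, hv, rfl⟩ := Finset.mem_image.1 hu
    rw [Multiset.mem_toFinset] at hv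
    exact ⟨h1 v hv, (h2 v hv).symm.irreducible (UniqueFactorizationMonoid.irreducible_of_factor _ hv),
      (h2 v hv).dvd.trans (UniqueFactorizationMonoid.dvd_of_mem_factors hv)⟩
  · intro P hP
    obtain ⟨w, hw⟩ := (UniqueFactorizationMonoid.factors_prod hg0).symm.dvd
    obtain ⟨w', hw'⟩ := (UniqueFactorizationMonoid.factors_prod hg0).symm
    have h3 : eval P (UniqueFactorizationMonoid.factors g).prod = 0 := by
      rw [← hw', map_mul, hP, zero_mul]
    rw [map_multiset_prod, Multiset.prod_eq_zero_iff, Multiset.mem_map] at h3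
    obtain ⟨v, hv, hv0⟩ := h3
    refine ⟨ν v, Finset.mem_image_of_mem _ (Multiset.mem_toFinset.2 hv), ?_⟩
    obtain ⟨c, hc⟩ := (h2 v hv).symm
    rw [← hc, map_mul, hv0, zero_mul]

lemma one_big {F σ : Type*} [Field F] {g : MvPolynomial (Option σ) F} {d : ℕ}
    (hg : Nrm g d) {u1 u2 : MvPolynomial (Option σ) F} (hm1 : (oe F σ u1).Monic) (hm2 : (oe F σ u2).Monic)
    (hi1 : Irreducible u1) (hi2 : Irreducible u2) (hd1 : u1 ∣ g) (hd2 : u2 ∣ g)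
    (hb1 : ¬ 2 * (oe F σ u1).natDegree ≤ d) (hb2 : ¬ 2 * (oe F σ u2).natDegree ≤ d) : u1 = u2 := by
  by_contra hne
  obtain ⟨w, hw⟩ := hd1
  have h2 : u2 ∣ w := by
    have hp : Prime u2 := hi2.prime
    rw [hw] at hd2
    rcases hp.dvd_or_dvd hd2 with h | h
    · exact absurd (not_assoc_of_monic hm1 hm2 ((hi2.dvd_irreducible_iff_associated hi1).1 h).symm) hne
    · exact h
  obtain ⟨w', hw'⟩ := h2
  have h3 : oe F σ g = (oe F σ u1 * oe F σ u2) * oe F σ w' := by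
    rw [hw, hw', map_mul, map_mul, mul_assoc]
  have h4 : (oe F σ w').Monic := by
    have := hg.monic
    rw [h3] at this
    exact (hm1.mul hm2).of_mul_monic_left this
  have h5 := hg.nd
  rw [h3, (hm1.mul hm2).natDegree_mul h4, hm1.natDegree_mul hm2] at h5
  omega

lemma sz_general {F σ : Type*} [Field F] [Fintype F] [DecidableEq F] [Fintype σ] [DecidableEq σ]
    (p : MvPolynomial σ F) (h0 : p ≠ 0) :
    (Finset.univ.filter fun x : σ → F => eval x p = 0).card * Fintype.card F ≤
      p.totalDegree * Fintype.card F ^ Fintype.card σ := by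
  let ε := Fintype.equivFin σ
  have h0' : rename ε p ≠ 0 := by
    intro h; exact h0 (rename_injective _ ε.injective (by rw [h, map_zero]))
  have h := schwartz_zippel_totalDegree h0' (Finset.univ : Finset F)
  have h3 : Fintype.piFinset (fun _ : Fin (Fintype.card σ) => (Finset.univ : Finset F)) = Finset.univ := by
    ext; simp
  have hq0 : 0 < Fintype.card F := Fintype.card_pos
  rw [h3, Finset.card_univ, div_le_div_iff₀ (by positivity) (by positivity)] at h
  have h4 : (Finset.univ.filter fun x : σ → F => eval x p = 0).card =
      (Finset.univ.filter fun x : Fin (Fintype.card σ) → F => eval x (rename ε p) = 0).card := by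
    refine Finset.card_bij (fun x _ => x ∘ ε.symm) ?_ ?_ ?_
    · intro x hx
      rw [Finset.mem_filter] at hx ⊢
      refine ⟨Finset.mem_univ _, ?_⟩
      rw [eval_rename]
      have h9 : (x ∘ ε.symm) ∘ ε = x := by ext i; simp
      rw [h9]; exact hx.2
    · intro x _ y _ hxy
      ext i
      have := congrFun hxy (ε i)
      simpa using this
    · intro x hx
      refine ⟨x ∘ ε, ?_, by ext i; simp⟩
      rw [Finset.mem_filter] at hx ⊢
      rw [eval_rename] at hx
      exact ⟨Finset.mem_univ _, hx.2⟩
  rw [h4]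
  have h5 : (rename ε p).totalDegree = p.totalDegree := totalDegree_renameEquiv ε p
  rw [h5] at h
  exact_mod_cast h

end IE

open MvPolynomial
namespace IE

def jnEquiv (F σ : Type*) : (σ → F) × F ≃ (Option σ → F) where
  toFun p := jn p.1 p.2
  invFun x := (fun i => x (some i), x none)
  left_inv p := rfl
  right_inv x := by ext o; cases o <;> rfl

lemma sum_jn {F σ : Type*} [Fintype F] [Fintype σ] [DecidableEq σ] (g : (Option σ → F) → ℕ) :
    ∑ x, g x = ∑ z : σ → F, ∑ y : F, g (jn z y) := by
  rw [← Fintype.sum_prod_type' (f := fun z y => g (jn z y))]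
  exact (Fintype.sum_equiv (jnEquiv F σ) _ _ fun p => rfl).symm

lemma card_jn {F σ : Type*} [Fintype F] [Fintype σ] [DecidableEq σ] (p : (Option σ → F) → Prop)
    [DecidablePred p] : (Finset.univ.filter p).card = ∑ z : σ → F, (Finset.univ.filter fun y => p (jn z y)).card := by
  simp_rw [Finset.card_filter]
  exact sum_jn _

theorem norm_case {F : Type*} [Field F] [Fintype F] [DecidableEq F] {m : ℕ} {f : MvPolynomial (Option (Fin m)) F}
    {d : ℕ} (hf : Nrm f d) (P0 : Option (Fin m) → F) (hP0 : eval P0 (pderiv none f) ≠ 0)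
    (hind : ∀ (g : Polynomial F) (h : MvPolynomial (Option (Fin m)) F), f = Polynomial.aeval h g →
      g.natDegree ≤ 1) (hq : 256 * d ^ 4 ≤ Fintype.card F) :
    ∑ a : F, max 0 (((Finset.univ.filter fun x : Option (Fin m) → F => eval x f = a).card : ℝ) - (Fintype.card F : ℝ) ^ m)
      ≤ 109 * d ^ 2 * Real.sqrt (Fintype.card F) * (Fintype.card F : ℝ) ^ m := by
  classical
  set q := Fintype.card F with hqdef
  have hd1 := hf.pos
  have hd4 : 1 ≤ d ^ 4 := Nat.one_le_pow _ _ hd1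
  choose U hU1 hU2 using fun a : F => exists_factor_set (hf.sub_C a).monic
  let small : MvPolynomial (Option (Fin m)) F → Prop := fun u => 2 * (oe F (Fin m) u).natDegree ≤ d
  let deg : MvPolynomial (Option (Fin m)) F → ℕ := fun u => (oe F (Fin m) u).natDegree
  let Us : F → Finset (MvPolynomial (Option (Fin m)) F) := fun a => (U a).filter small
  let bad : F → ℕ := fun a => (Finset.univ.filter fun x : Option (Fin m) → F => eval x f = a ∧ eval x (pderiv none f) = 0).card
  -- small factors globally
  have hsmall : ∑ a : F, ∑ u ∈ Us a, deg u ≤ 20 * d ^ 3 := by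
    rw [← Finset.sum_biUnion]
    · apply small_sum hf P0 hP0 hind
      intro u hu
      obtain ⟨a, -, ha⟩ := Finset.mem_biUnion.1 hu
      obtain ⟨h1, h2⟩ := Finset.mem_filter.1 ha
      obtain ⟨h3, h4, h5⟩ := hU1 a u h1
      exact ⟨h3, h4, h2, a, h5⟩
    · intro a _ b _ hab
      rw [Function.onFun, Finset.disjoint_left]
      intro u hua hub
      obtain ⟨h3, h4, h5⟩ := hU1 a u (Finset.mem_filter.1 hua).1
      obtain ⟨_, _, h6⟩ := hU1 b u (Finset.mem_filter.1 hub).1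
      have h7 : u ∣ C (b - a) := by
        have := dvd_sub h5 h6
        rwa [show f - C a - (f - C b) = C (b - a) by rw [map_sub]; ring] at this
      apply h4.not_isUnit
      apply isUnit_of_dvd_unit h7
      exact (IsUnit.mk0 _ (sub_ne_zero.2 (Ne.symm hab))).map C
  -- bad points
  have hbad : ∑ a : F, bad a ≤ d * q ^ m := by
    have h1 : ∑ a : F, bad a = (Finset.univ.filter fun x : Option (Fin m) → F => eval x (pderiv none f) = 0).card := by
      rw [Finset.card_eq_sum_card_fiberwise (f := fun x => eval x f) (t := Finset.univ) (fun _ _ => Finset.mem_univ _)]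
      refine Finset.sum_congr rfl fun a _ => ?_
      rw [Finset.filter_filter]
      refine congrArg Finset.card (Finset.filter_congr fun x _ => ?_)
      exact and_comm
    rw [h1]
    have h2 := sz_general (pderiv none f) (by intro h; rw [h] at hP0; simp at hP0)
    have h3 : (pderiv none f).totalDegree ≤ d := (totalDegree_pderiv_le _ _).trans ((Nat.sub_le _ _).trans hf.td)
    have h4 : Fintype.card (Option (Fin m)) = m + 1 := by simp
    rw [h4] at h2
    have h5 := h2.trans (Nat.mul_le_mul_right _ h3)
    rw [pow_succ, ← mul_assoc] at h5
    exact Nat.le_of_mul_le_mul_right h5 Fintype.card_pos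
  have hqm : (0 : ℝ) < (q : ℝ) ^ m := pow_pos (by exact_mod_cast Fintype.card_pos) _
  have hs0 : 0 < Real.sqrt q := Real.sqrt_pos.2 (by exact_mod_cast Fintype.card_pos)
  have hss : Real.sqrt q * Real.sqrt q = q := Real.mul_self_sqrt (Nat.cast_nonneg _)
  have hone : ∀ a : F, ((Finset.univ.filter fun x : Option (Fin m) → F => eval x f = a).card : ℝ) - (q : ℝ) ^ m ≤
      bad a + 88 * d ^ 2 / Real.sqrt q * (q : ℝ) ^ m + (∑ u ∈ Us a, deg u : ℕ) * (q : ℝ) ^ m := by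
    intro a
    have h1 : (Finset.univ.filter fun x : Option (Fin m) → F => eval x f = a).card ≤
        bad a + ∑ u ∈ U a, ∑ z, cnt f u z := by
      have hA : (Finset.univ.filter fun x : Option (Fin m) → F => eval x f = a) ⊆
          (Finset.univ.filter fun x : Option (Fin m) → F => eval x f = a ∧ eval x (pderiv none f) = 0) ∪
          (U a).biUnion fun u => Finset.univ.filter fun x : Option (Fin m) → F => eval x u = 0 ∧ eval x (pderiv none f) ≠ 0 := by
        intro x hx
        rw [Finset.mem_filter] at hx
        rw [Finset.mem_union]
        by_cases hy : eval x (pderiv none f) = 0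
        · left; simp [hx.2, hy]
        · right
          obtain ⟨u, hu, hu0⟩ := hU2 a x (by rw [map_sub, hx.2, eval_C, sub_self])
          rw [Finset.mem_biUnion]
          exact ⟨u, hu, by simp [hu0, hy]⟩
      refine (Finset.card_le_card hA).trans ((Finset.card_union_le _ _).trans ?_)
      refine Nat.add_le_add_left (Finset.card_biUnion_le.trans ?_) _
      refine Finset.sum_le_sum fun u _ => ?_
      rw [card_jn]
      rfl
    have h2 : ∑ u ∈ Us a, ∑ z, cnt f u z ≤ (∑ u ∈ Us a, deg u) * q ^ m := by
      rw [Finset.sum_mul]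
      refine Finset.sum_le_sum fun u hu => ?_
      have hum := (hU1 a u (Finset.mem_filter.1 hu).1).1
      calc ∑ z, cnt f u z ≤ ∑ z : Fin m → F, deg u := Finset.sum_le_sum fun z _ =>
            card_roots_le hum rfl z _ fun y hy => hy.1
        _ = _ := by simp [hqdef, mul_comm]
    have h3 : ((∑ u ∈ (U a).filter (fun u => ¬ small u), ∑ z, cnt f u z : ℕ) : ℝ) ≤
        (q : ℝ) ^ m * (1 + 88 * d ^ 2 / Real.sqrt q) := by
      rcases ((U a).filter (fun u => ¬ small u)).eq_empty_or_nonempty with hE | ⟨u, hu⟩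
      · rw [hE]; simp only [Finset.sum_empty, Nat.cast_zero]; positivity
      · obtain ⟨hu1, hu2⟩ := Finset.mem_filter.1 hu
        obtain ⟨g1, g2, g3⟩ := hU1 a u hu1
        have hsing : (U a).filter (fun u => ¬ small u) = {u} := by
          rw [Finset.eq_singleton_iff_unique_mem]
          refine ⟨hu, fun w hw => ?_⟩
          obtain ⟨hw1, hw2⟩ := Finset.mem_filter.1 hw
          obtain ⟨k1, k2, k3⟩ := hU1 a w hw1
          exact one_big (hf.sub_C a) k1 g1 k2 g2 k3 g3 hw2 hu2
        rw [hsing, Finset.sum_singleton]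
        obtain ⟨n1, n2⟩ := (hf.sub_C a).factor g1 g2 g3
        exact big_factor hf.td n1 n2 g2 g3 hq
    have h4 : ∑ u ∈ U a, ∑ z, cnt f u z = ∑ u ∈ Us a, ∑ z, cnt f u z +
        ∑ u ∈ (U a).filter (fun u => ¬ small u), ∑ z, cnt f u z :=
      (Finset.sum_filter_add_sum_filter_not _ _ _).symm
    rw [h4] at h1
    have h1' : ((Finset.univ.filter fun x : Option (Fin m) → F => eval x f = a).card : ℝ) ≤
        bad a + ((∑ u ∈ Us a, ∑ z, cnt f u z : ℕ) + (∑ u ∈ (U a).filter (fun u => ¬ small u), ∑ z, cnt f u z : ℕ)) := by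
      exact_mod_cast h1
    have h2' : ((∑ u ∈ Us a, ∑ z, cnt f u z : ℕ) : ℝ) ≤ (∑ u ∈ Us a, deg u : ℕ) * (q : ℝ) ^ m := by
      exact_mod_cast h2
    have h5 : (q : ℝ) ^ m * (1 + 88 * d ^ 2 / Real.sqrt q) = (q : ℝ) ^ m + 88 * d ^ 2 / Real.sqrt q * (q : ℝ) ^ m := by ring
    linarith
  have hmax : ∀ a : F, max 0 (((Finset.univ.filter fun x : Option (Fin m) → F => eval x f = a).card : ℝ) - (q : ℝ) ^ m) ≤
      bad a + 88 * d ^ 2 / Real.sqrt q * (q : ℝ) ^ m + (∑ u ∈ Us a, deg u : ℕ) * (q : ℝ) ^ m :=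
    fun a => max_le (by positivity) (hone a)
  refine (Finset.sum_le_sum fun a _ => hmax a).trans ?_
  rw [Finset.sum_add_distrib, Finset.sum_add_distrib]
  have e1 : ∑ a : F, (bad a : ℝ) ≤ d * (q : ℝ) ^ m := by exact_mod_cast hbad
  have e2 : ∑ a : F, ((∑ u ∈ Us a, deg u : ℕ) : ℝ) ≤ 20 * (d : ℝ) ^ 3 := by exact_mod_cast hsmall
  have e3 : ∑ a : F, 88 * (d : ℝ) ^ 2 / Real.sqrt q * (q : ℝ) ^ m = 88 * d ^ 2 * Real.sqrt q * (q : ℝ) ^ m := by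
    have h9 : (q : ℝ) / Real.sqrt q = Real.sqrt q := by rw [div_eq_iff hs0.ne', hss]
    rw [Finset.sum_const, Finset.card_univ, nsmul_eq_mul, ← hqdef]
    calc _ = 88 * (d : ℝ) ^ 2 * ((q : ℝ) / Real.sqrt q) * (q : ℝ) ^ m := by ring
      _ = _ := by rw [h9]
  have hd1' : (1 : ℝ) ≤ d := by exact_mod_cast hd1
  have hsd : (d : ℝ) ^ 2 ≤ Real.sqrt q := by
    apply Real.le_sqrt_of_sq_le
    have : d ^ 4 ≤ q := by omega
    rw [← pow_mul]
    exact_mod_cast this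
  have hsd1 : (d : ℝ) ≤ Real.sqrt q := le_trans (by nlinarith) hsd
  have e4 : ((d : ℝ) + 20 * d ^ 3) ≤ 21 * d ^ 2 * Real.sqrt q := by
    have : (d : ℝ) ^ 2 * d ≤ d ^ 2 * Real.sqrt q := by gcongr
    have : (d : ℝ) * 1 ≤ d ^ 2 * Real.sqrt q := by
      apply mul_le_mul _ _ zero_le_one (by positivity)
      · nlinarith
      · linarith
    nlinarith
  rw [e3, ← Finset.sum_mul]
  have e5 := mul_le_mul_of_nonneg_right e2 hqm.le
  have e6 := mul_le_mul_of_nonneg_right e4 hqm.le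
  linarith

end IE

open MvPolynomial
namespace IE

lemma exists_eval_ne {F σ : Type*} [Field F] [Fintype F] [Fintype σ]
    (p : MvPolynomial σ F) (h0 : p ≠ 0) (hd : p.totalDegree < Fintype.card F) : ∃ x, eval x p ≠ 0 := by
  classical
  by_contra hcon
  push Not at hcon
  have h := sz_general p h0
  rw [Finset.filter_true_of_mem (fun x _ => hcon x), Finset.card_univ] at h
  have hc : Fintype.card (σ → F) = Fintype.card F ^ Fintype.card σ := by simp
  rw [hc, mul_comm] at h
  have := Nat.le_of_mul_le_mul_right h (pow_pos Fintype.card_pos _)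
  omega

/-- vanishing gradient implies `p`-th power -/
lemma pth_power {F σ : Type*} [Field F] [Fintype F] (f : MvPolynomial σ F)
    (h : ∀ i, pderiv i f = 0) : ∃ p : ℕ, 2 ≤ p ∧ ∃ g, f = g ^ p := by
  classical
  obtain ⟨p, hp⟩ := CharP.exists F
  have hpp : p.Prime := (CharP.char_is_prime_or_zero F p).resolve_right
    (CharP.char_ne_zero_of_finite F p)
  haveI := Fact.mk hpp
  refine ⟨p, hpp.two_le, ?_⟩
  have hdiv : ∀ s ∈ f.support, ∀ i, p ∣ s i := by
    intro s hs i
    by_contra hn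
    have hsi : s i ≠ 0 := by intro h0; rw [h0] at hn; exact hn (dvd_zero _)
    have h1 := congrArg (coeff (s - Finsupp.single i 1)) (h i)
    rw [coeff_zero, coeff_pderiv] at h1
    have h2 : s - Finsupp.single i 1 + Finsupp.single i 1 = s :=
      tsub_add_cancel_of_le (by
        rw [Finsupp.single_le_iff]; omega)
    rw [h2] at h1
    rcases mul_eq_zero.1 h1 with h3 | h3
    · exact mem_support_iff.1 hs h3
    · have h4 : ((s i : ℕ) : F) = 0 := by
        have : ((s - Finsupp.single i 1 : σ →₀ ℕ) i) + 1 = s i := by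
          rw [Finsupp.tsub_apply, Finsupp.single_eq_same]; omega
        rw [← this]; push_cast; exact h3
      exact hn ((CharP.cast_eq_zero_iff F p _).1 h4)
  have hroot : ∀ c : F, ∃ b, b ^ p = c := by
    intro c
    exact (frobeniusEquiv F p).surjective c
  choose r hr using hroot
  refine ⟨∑ s ∈ f.support, monomial (s.mapRange (fun k => k / p) (by simp)) (r (coeff s f)), ?_⟩
  rw [sum_pow_char]
  conv_lhs => rw [f.as_sum]
  refine Finset.sum_congr rfl fun s hs => ?_
  rw [monomial_pow, hr]
  have h5 : p • (s.mapRange (fun k => k / p) (by simp)) = s := by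
    ext i
    simp [Nat.mul_div_cancel' (hdiv s hs i)]
  rw [h5]

lemma coeff_line {F σ : Type*} [Field F] (w : σ → F) (f : MvPolynomial σ F) (d : ℕ) :
    (aeval (fun i => Polynomial.C (w i) * Polynomial.X : σ → Polynomial F) f).coeff d =
      eval w (homogeneousComponent d f) := by
  classical
  induction f using MvPolynomial.induction_on' with
  | monomial s a =>
    rw [aeval_monomial, Finsupp.prod]
    simp_rw [mul_pow]
    rw [Finset.prod_mul_distrib, Finset.prod_pow_eq_pow_sum, Polynomial.algebraMap_eq]
    simp_rw [← map_pow]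
    rw [← map_prod, ← mul_assoc, ← map_mul, Polynomial.coeff_C_mul, Polynomial.coeff_X_pow]
    by_cases h : d = ∑ i ∈ s.support, s i
    · rw [if_pos h, homogeneousComponent_of_mem (m := d) (n := d) ((mem_homogeneousSubmodule _ _).2 ?_), if_pos rfl, eval_monomial,
        mul_one, Finsupp.prod]
      apply isHomogeneous_monomial
      rw [h]; rfl
    · rw [if_neg h, mul_zero, homogeneousComponent_of_mem (m := d) (n := ∑ i ∈ s.support, s i) ((mem_homogeneousSubmodule _ _).2 ?_), if_neg h,
        map_zero]
      apply isHomogeneous_monomial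
      rfl
  | add p q hp hq => rw [map_add, Polynomial.coeff_add, hp, hq, map_add, map_add]

section change
variable {F : Type*} [Field F] {m : ℕ} (i0 : Fin (m+1)) (w : Fin (m+1) → F)

noncomputable def chv (i : Fin (m+1)) : MvPolynomial (Option (Fin m)) F :=
  Fin.insertNth (α := fun _ => MvPolynomial (Option (Fin m)) F) i0 (C (w i0) * X none)
    (fun j => X (some j) + C (w (i0.succAbove j)) * X none) i

noncomputable def Ph : MvPolynomial (Fin (m+1)) F →ₐ[F] MvPolynomial (Option (Fin m)) F := aeval (chv i0 w)

noncomputable def Ps : MvPolynomial (Option (Fin m)) F →ₐ[F] MvPolynomial (Fin (m+1)) F :=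
  aeval fun o => match o with
    | none => C (w i0)⁻¹ * X i0
    | some j => X (i0.succAbove j) - C (w (i0.succAbove j)) * (C (w i0)⁻¹ * X i0)

lemma Ps_Ph (hw : w i0 ≠ 0) (f : MvPolynomial (Fin (m+1)) F) : Ps i0 w (Ph i0 w f) = f := by
  have : (Ps i0 w).comp (Ph i0 w) = AlgHom.id F _ := by
    apply MvPolynomial.algHom_ext
    intro i
    rcases Fin.eq_self_or_eq_succAbove i0 i with rfl | ⟨j, rfl⟩
    · simp [Ph, Ps, chv, algHom_C, MvPolynomial.algebraMap_eq]
      rw [← mul_assoc, ← C_mul, mul_inv_cancel₀ hw, C_1, one_mul]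
    · simp [Ph, Ps, chv, algHom_C, MvPolynomial.algebraMap_eq]
  exact DFunLike.congr_fun this f

def pip (x : Option (Fin m) → F) : Fin (m+1) → F :=
  Fin.insertNth (α := fun _ => F) i0 (w i0 * x none)
    (fun j => x (some j) + w (i0.succAbove j) * x none)

lemma eval_Ph (x : Option (Fin m) → F) (f : MvPolynomial (Fin (m+1)) F) :
    eval x (Ph i0 w f) = eval (pip i0 w x) f := by
  have : (eval x).comp (Ph i0 w).toRingHom = eval (pip i0 w x) := by
    apply MvPolynomial.ringHom_ext
    · intro r; simp [algHom_C]
    · intro i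
      rcases Fin.eq_self_or_eq_succAbove i0 i with rfl | ⟨j, rfl⟩ <;> simp [Ph, chv, pip]
  exact DFunLike.congr_fun this f

lemma pip_bij (hw : w i0 ≠ 0) : Function.Bijective (pip (F := F) i0 w) := by
  constructor
  · intro x y h
    have h0 := congrFun h i0
    simp [pip, hw] at h0
    ext o
    rcases o with _ | j
    · exact h0
    · have h1 := congrFun h (i0.succAbove j)
      simpa [pip, h0] using h1
  · intro x
    refine ⟨fun o => match o with
      | none => (w i0)⁻¹ * x i0
      | some j => x (i0.succAbove j) - w (i0.succAbove j) * ((w i0)⁻¹ * x i0), ?_⟩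
    ext i
    rcases Fin.eq_self_or_eq_succAbove i0 i with rfl | ⟨j, rfl⟩
    · simp [pip, hw]
    · simp [pip]

lemma chv_td (i : Fin (m+1)) : (chv i0 w i).totalDegree ≤ 1 := by
  rcases Fin.eq_self_or_eq_succAbove i0 i with rfl | ⟨j, rfl⟩
  · simp only [chv, Fin.insertNth_apply_same]
    exact (totalDegree_mul _ _).trans (by simp)
  · simp only [chv, Fin.insertNth_apply_succAbove]
    refine (totalDegree_add _ _).trans (max_le (by simp) ?_)
    exact (totalDegree_mul _ _).trans (by simp)

lemma pderiv_chv (i : Fin (m+1)) : pderiv none (chv i0 w i) = C (w i) := by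
  rcases Fin.eq_self_or_eq_succAbove i0 i with rfl | ⟨j, rfl⟩
  · simp [chv, pderiv_X, Derivation.leibniz]
  · simp [chv, pderiv_X, Derivation.leibniz]

lemma pderiv_Ph (f : MvPolynomial (Fin (m+1)) F) :
    pderiv none (Ph i0 w f) = Ph i0 w (∑ i, C (w i) * pderiv i f) := by
  induction f using MvPolynomial.induction_on with
  | C a => simp [algHom_C, MvPolynomial.algebraMap_eq]
  | add p q hp hq => simp only [map_add, hp, hq, mul_add, Finset.sum_add_distrib]
  | mul_X p i hp =>
    have h1 : Ph i0 w (X i) = chv i0 w i := by simp [Ph]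
    have h2 : ∀ j, pderiv j (p * X i) = (if j = i then p else 0) + X i * pderiv j p := by
      intro j
      rw [(pderiv j).leibniz, pderiv_X, smul_eq_mul, smul_eq_mul]
      by_cases h : j = i
      · subst h; simp
      · simp [h]
    simp_rw [h2, mul_add, Finset.sum_add_distrib]
    rw [map_mul, (pderiv none).leibniz, h1, pderiv_chv, hp, smul_eq_mul, smul_eq_mul, map_add]
    congr 1
    · simp [algHom_C, MvPolynomial.algebraMap_eq, mul_comm]
    · rw [← h1, ← map_mul, Finset.mul_sum]
      congr 1
      refine Finset.sum_congr rfl fun j _ => by ring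

lemma oe_Ph_coeff (f : MvPolynomial (Fin (m+1)) F) (d : ℕ) (hf : f.totalDegree ≤ d) :
    (oe F (Fin m) (Ph i0 w f)).coeff d = C (eval w (homogeneousComponent d f)) := by
  have htd : (Ph i0 w f).totalDegree ≤ d := (totalDegree_aeval_le _ (chv_td i0 w) f).trans hf
  have h0 : ((oe F (Fin m) (Ph i0 w f)).coeff d).totalDegree = 0 := by
    by_cases h : (oe F (Fin m) (Ph i0 w f)).coeff d = 0
    · rw [h]; simp
    · have := totalDegree_coeff_oe _ _ h; omega
  rw [totalDegree_eq_zero_iff_eq_C] at h0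
  have h1 : ∀ c, (oe F (Fin m) (Ph i0 w f)).coeff d = C c → c = eval w (homogeneousComponent d f) := by
    intro c hc
    rw [← coeff_line]
    have h2 : (oe F (Fin m) (Ph i0 w f)).map (eval (0 : Fin m → F)) =
        aeval (fun i => Polynomial.C (w i) * Polynomial.X : _ → Polynomial F) f := by
      have : ((Polynomial.mapRingHom (eval (0 : Fin m → F))).comp (oe F (Fin m) : _ →+* _)).comp
          (Ph i0 w).toRingHom = (aeval (R := F) (fun i => Polynomial.C (w i) * Polynomial.X : _ → Polynomial F)).toRingHom := by
        apply MvPolynomial.ringHom_ext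
        · intro r
          have e1 : oe F (Fin m) (C r) = Polynomial.C (C r) := by rw [← oe_rename_some, rename_C]
          simp [algHom_C, e1, Polynomial.algebraMap_eq, MvPolynomial.algebraMap_eq]
        · intro i
          have e1 : ∀ r : F, oe F (Fin m) (C r) = Polynomial.C (C r) := by intro r; rw [← oe_rename_some, rename_C]
          rcases Fin.eq_self_or_eq_succAbove i0 i with rfl | ⟨j, rfl⟩ <;> simp [Ph, chv, e1]
      exact DFunLike.congr_fun this f
    rw [← h2, Polynomial.coeff_map, hc, eval_C]
  rw [h0]
  congr 1
  exact h1 _ h0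

end change

end IE

open MvPolynomial
namespace IE

lemma exists_dir {F : Type*} [Field F] [Fintype F] {n : ℕ} (f : MvPolynomial (Fin n) F)
    (h0 : f ≠ 0) (hq : f.totalDegree + 1 < Fintype.card F) (hd : ∃ i, pderiv i f ≠ 0) :
    ∃ w : Fin n → F, eval w (homogeneousComponent f.totalDegree f) ≠ 0 ∧
      (∑ i, C (w i) * pderiv i f) ≠ 0 := by
  classical
  obtain ⟨i1, hi1⟩ := hd
  obtain ⟨s, hs⟩ := MvPolynomial.ne_zero_iff.1 hi1
  set L : MvPolynomial (Fin n) F := ∑ i, C (coeff s (pderiv i f)) * X i with hL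
  have hL0 : L ≠ 0 := by
    intro h
    have h1 := congrArg (eval (Pi.single i1 (1 : F))) h
    rw [hL, map_sum] at h1
    simp [Pi.single_apply] at h1
    exact hs h1
  have hT0 : homogeneousComponent f.totalDegree f ≠ 0 := by
    obtain ⟨b, hb, hbd⟩ := Finset.exists_mem_eq_sup f.support (support_nonempty.2 h0)
      (fun s => s.sum fun _ e => e)
    intro h
    have h1 := congrArg (coeff b) h
    rw [coeff_homogeneousComponent, coeff_zero, if_pos] at h1
    · exact mem_support_iff.1 hb h1
    · have h3 : f.totalDegree = b.sum fun _ e => e := hbd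
      rw [h3, Finsupp.degree_eq_sum]
      simp [Finsupp.sum_fintype]
  obtain ⟨w, hw⟩ := exists_eval_ne (homogeneousComponent f.totalDegree f * L) (mul_ne_zero hT0 hL0) (by
    refine lt_of_le_of_lt ((totalDegree_mul _ _).trans (add_le_add
      (homogeneousComponent_isHomogeneous _ f).totalDegree_le ?_)) hq
    refine (totalDegree_finset_sum _ _).trans (Finset.sup_le fun i _ => ?_)
    exact (totalDegree_mul _ _).trans (by simp))
  rw [map_mul] at hw
  refine ⟨w, left_ne_zero_of_mul hw, fun h => right_ne_zero_of_mul hw ?_⟩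
  have h1 := congrArg (coeff s) h
  rw [coeff_sum, coeff_zero] at h1
  rw [hL, map_sum, ← h1]
  refine Finset.sum_congr rfl fun i _ => ?_
  simp [mul_comm]

lemma abs_half {ι : Type*} [Fintype ι] (t : ι → ℝ) (h : ∑ a, t a = 0) :
    (1/2 : ℝ) * ∑ a, |t a| = ∑ a, max 0 (t a) := by
  have : ∀ a, |t a| = 2 * max 0 (t a) - t a := by
    intro a
    rcases le_total 0 (t a) with h | h
    · rw [abs_of_nonneg h, max_eq_right h]; ring
    · rw [abs_of_nonpos h, max_eq_left h]; ring
  simp_rw [this]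
  rw [Finset.sum_sub_distrib, h, ← Finset.mul_sum]; ring

lemma main_large {F : Type*} [Field F] [Fintype F] [DecidableEq F] {m : ℕ}
    (f : MvPolynomial (Fin (m+1)) F) (hpos : 0 < f.totalDegree)
    (hind : ¬ f.Decomposable) (hq : 256 * f.totalDegree ^ 4 ≤ Fintype.card F) :
    ∑ a : F, max 0 (((Finset.univ.filter fun x : Fin (m+1) → F => eval x f = a).card : ℝ)
      - (Fintype.card F : ℝ)^m) ≤
      109 * (f.totalDegree : ℝ)^2 * Real.sqrt (Fintype.card F) * (Fintype.card F : ℝ)^m := by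
  set d := f.totalDegree with hd
  have hdq : d + 1 < Fintype.card F := by
    have : d ≤ d ^ 4 := Nat.le_self_pow (by norm_num) d
    omega
  have h0 : f ≠ 0 := by rintro rfl; simp [hd] at hpos
  have hder : ∃ i, pderiv i f ≠ 0 := by
    by_contra hcon
    push Not at hcon
    obtain ⟨p, hp, g, hg⟩ := pth_power f hcon
    exact hind ⟨Polynomial.X ^ p, g, by simpa using hp, by simpa using hg⟩
  obtain ⟨w, hw1, hw2⟩ := exists_dir f h0 hdq hder
  have hi0 : ∃ i, w i ≠ 0 := by
    by_contra hcon
    push Not at hcon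
    exact hw2 (by simp [hcon])
  obtain ⟨i0, hi0⟩ := hi0
  set c := eval w (homogeneousComponent f.totalDegree f) with hc
  set f' := C c⁻¹ * Ph i0 w f with hf'
  have hinj : ∀ g, Ph i0 w g = 0 → g = 0 := by
    intro g hg
    rw [← Ps_Ph i0 w hi0 g, hg, map_zero]
  have htd : f'.totalDegree ≤ d := by
    refine (totalDegree_mul _ _).trans ?_
    rw [totalDegree_C, zero_add]
    exact totalDegree_aeval_le _ (chv_td i0 w) f
  have hCo : ∀ r : F, oe F (Fin m) (C r) = Polynomial.C (C r) := by
    intro r; rw [← oe_rename_some, rename_C]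
  have hco : (oe F (Fin m) f').coeff d = 1 := by
    rw [hf', map_mul, hCo, Polynomial.coeff_C_mul, oe_Ph_coeff i0 w f d le_rfl, ← C_mul, show eval w (homogeneousComponent d f) = c from rfl,
      inv_mul_cancel₀ hw1, C_1]
  have hnd : (oe F (Fin m) f').natDegree ≤ d := (natDegree_oe_le _).trans htd
  have hnrm : Nrm f' d :=
    { monic := Polynomial.monic_of_natDegree_le_of_coeff_eq_one d hnd hco
      nd := le_antisymm hnd (Polynomial.le_natDegree_of_ne_zero (by rw [hco]; exact one_ne_zero))
      td := htd
      pos := hpos }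
  have hpd : pderiv none f' = C c⁻¹ * Ph i0 w (∑ i, C (w i) * pderiv i f) := by
    rw [hf', pderiv_C_mul, pderiv_Ph]
  have hpd0 : pderiv none f' ≠ 0 := by
    rw [hpd]
    refine mul_ne_zero ?_ fun h => hw2 (hinj _ h)
    rw [Ne, C_eq_zero]; exact inv_ne_zero hw1
  obtain ⟨P0, hP0⟩ := exists_eval_ne _ hpd0 (by
    have := totalDegree_pderiv_le none f'
    omega)
  have key := norm_case hnrm P0 hP0 (by
    intro g h hgh
    by_contra hcon
    refine hind ⟨Polynomial.C c * g, Ps i0 w h, ?_, ?_⟩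
    · rw [Polynomial.natDegree_C_mul hw1]; omega
    · have h1 : Ph i0 w f = C c * f' := by
        rw [hf', ← mul_assoc, ← C_mul, mul_inv_cancel₀ hw1, C_1, one_mul]
      have h2 := congrArg (Ps i0 w) h1
      rw [Ps_Ph i0 w hi0, hgh, map_mul, algHom_C, ← Polynomial.aeval_algHom_apply] at h2
      rw [map_mul, Polynomial.aeval_C]
      exact h2) hq
  refine le_trans (le_of_eq ?_) key
  rw [← Equiv.sum_comp (Equiv.mulLeft₀ c hw1)]
  refine Finset.sum_congr rfl fun a _ => ?_
  congr 3
  symm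
  refine Finset.card_bij (fun x _ => pip i0 w x) ?_ ?_ ?_
  · intro x hx
    rw [Finset.mem_filter] at hx ⊢
    refine ⟨Finset.mem_univ _, ?_⟩
    rw [← eval_Ph]
    change _ = c * a
    rw [← hx.2, hf', map_mul, eval_C, mul_inv_cancel_left₀ hw1]
  · intro x _ y _ h
    exact (pip_bij i0 w hi0).1 h
  · intro y hy
    obtain ⟨x, rfl⟩ := (pip_bij i0 w hi0).2 y
    refine ⟨x, ?_, rfl⟩
    rw [Finset.mem_filter] at hy ⊢
    refine ⟨Finset.mem_univ _, ?_⟩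
    have hy2 : eval (pip i0 w x) f = c * a := hy.2
    rw [hf', map_mul, eval_C, eval_Ph, hy2, inv_mul_cancel_left₀ hw1]

end IE

/-- **Outputs of indecomposable polynomials are equidistributed.**
There is an absolute constant `C > 0` such that for every finite field `F`
(of prime-power size `q = Fintype.card F`) and every non-constant polynomial
`f ∈ F[x₁,…,xₙ]` of total degree `d` that is indecomposable over `F`, the output
distribution of `f` on a uniformly random input is `C·d²/√q`-close to uniform on `F`. -/
theorem indecomposable_equidistributed :
    ∃ C : ℝ, 0 < C ∧
      ∀ (F : Type) [Field F] [Fintype F], ∀ (n d : ℕ), 1 ≤ n →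
      ∀ f : MvPolynomial (Fin n) F,
        f.totalDegree = d → 0 < f.totalDegree → ¬ f.Decomposable →
        (1 / 2 : ℝ) * ∑ a : F,
          |(Nat.card {x : Fin n → F // eval x f = a} : ℝ) / (Fintype.card F : ℝ) ^ n
            - 1 / (Fintype.card F : ℝ)|
          ≤ C * (d : ℝ) ^ 2 / Real.sqrt (Fintype.card F) := by
  classical
  refine ⟨109, by norm_num, ?_⟩
  intro F _ _ n d hn f hfd hpos hind
  obtain ⟨m, rfl⟩ : ∃ m, n = m + 1 := ⟨n - 1, by omega⟩
  subst hfd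
  set q : ℝ := (Fintype.card F : ℝ) with hq
  have hq0 : 0 < q := by rw [hq]; exact_mod_cast Fintype.card_pos
  have hN : ∀ a, (Nat.card {x : Fin (m+1) → F // eval x f = a}) =
      (Finset.univ.filter fun x : Fin (m+1) → F => eval x f = a).card := by
    intro a
    rw [Nat.card_eq_fintype_card, Fintype.card_subtype]
  simp_rw [hN]
  have hsum : ∑ a : F, ((Finset.univ.filter fun x : Fin (m+1) → F => eval x f = a).card : ℝ) = q ^ (m+1) := by
    rw [← Nat.cast_sum, ← Finset.card_eq_sum_card_fiberwise (f := fun x : Fin (m+1) → F => eval x f) (s := Finset.univ) (t := Finset.univ) (fun x _ => Finset.mem_coe.2 (Finset.mem_univ _)), Finset.card_univ]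
    simp [hq]
  rw [IE.abs_half]
  swap
  · rw [Finset.sum_sub_distrib, ← Finset.sum_div, hsum, div_self (by positivity), Finset.sum_const, Finset.card_univ,
      nsmul_eq_mul, ← hq]
    field_simp
    simp
  have hd1 : (1:ℝ) ≤ f.totalDegree := by exact_mod_cast hpos
  have hs : 0 < Real.sqrt q := Real.sqrt_pos.2 hq0
  by_cases hbig : 256 * f.totalDegree ^ 4 ≤ Fintype.card F
  · have h := IE.main_large f hpos hind hbig
    rw [← hq] at h
    have h1 : ∀ a : F, max 0 (((Finset.univ.filter fun x : Fin (m+1) → F => eval x f = a).card : ℝ) / q ^ (m+1) - 1 / q)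
        = max 0 (((Finset.univ.filter fun x : Fin (m+1) → F => eval x f = a).card : ℝ) - q ^ m) / q ^ (m+1) := by
      intro a
      rw [← max_div_div_right (by positivity), zero_div, sub_div]
      congr 2
      field_simp
      ring
    simp_rw [h1]
    rw [← Finset.sum_div, div_le_div_iff₀ (by positivity) hs]
    calc _ ≤ (109 * (f.totalDegree : ℝ)^2 * Real.sqrt q * q ^ m) * Real.sqrt q := by gcongr
      _ = 109 * (f.totalDegree : ℝ)^2 * q ^ m * (Real.sqrt q * Real.sqrt q) := by ring
      _ = _ := by rw [Real.mul_self_sqrt hq0.le]; ring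
  · have h1 : ∑ a : F, max 0 (((Finset.univ.filter fun x : Fin (m+1) → F => eval x f = a).card : ℝ) / q ^ (m+1) - 1 / q)
        ≤ 1 := by
      calc _ ≤ ∑ a : F, ((Finset.univ.filter fun x : Fin (m+1) → F => eval x f = a).card : ℝ) / q ^ (m+1) := by
            refine Finset.sum_le_sum fun a _ => max_le (by positivity) ?_
            have : 0 < 1 / q := by positivity
            linarith
        _ = 1 := by rw [← Finset.sum_div, hsum, div_self (by positivity)]
    refine h1.trans ?_
    rw [le_div_iff₀ hs, one_mul]
    have h2 : Real.sqrt q ≤ 16 * (f.totalDegree : ℝ)^2 := by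
      rw [Real.sqrt_le_left (by positivity)]
      have h3 : q ≤ 256 * (f.totalDegree : ℝ)^4 := by
        rw [hq]; exact_mod_cast (not_le.1 hbig).le
      refine h3.trans (le_of_eq (by ring))
    nlinarith [sq_nonneg (f.totalDegree : ℝ)]
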